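/- Let K be a field and k ∈ ℕ. For n ∈ ℕ let R_n := K[x_{i,j} : i, j ∈ [n]], with Sym([n]) acting by K-algebra automorphisms via π·x_{i,j} = x_{π(i),π(j)}, and with the inclusion R_n → R_{n+1} induced by [n] ⊆ [n+1]. Let (J_n)_{n∈ℕ} be a family of ideals J_n ⊆ R_n such that: each J_n contains all (k+1)×(k+1) minors of the n×n matrix of variables (x_{i,j}); each J_n is stable under the Sym([n])-action; and the inclusion R_n → R_{n+1} maps J_n into J_{n+1}. Then the number of Sym([n])-orbits on the set of minimal prime ideals of R_n over J_n is a quasipolynomial in n for all n ≫ 0. -/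

import Mathlib

/-- A function `f : ℤ → ℚ` is a quasipolynomial if there are an integer `N ≥ 1` and
polynomials `p i ∈ ℚ[t]` such that `f n = p (n mod N) (n)` for all `n`. -/
def IsQuasiPolynomial (f : ℤ → ℚ) : Prop :=
  ∃ N : ℕ, 0 < N ∧ ∃ p : ZMod N → Polynomial ℚ,
    ∀ n : ℤ, f n = (p (n : ZMod N)).eval (n : ℚ)

/-- A quantity `a : ℕ → ℕ` is a quasipolynomial in `n` for all `n ≫ 0`. -/
def QuasiPolynomialCount (a : ℕ → ℕ) : Prop :=
  ∃ f : ℤ → ℚ, IsQuasiPolynomial f ∧ ∃ n₀ : ℕ, ∀ n : ℕ, n₀ ≤ n → (a n : ℚ) = f n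

open MvPolynomial

section Basics
variable {K : Type} [Field K] {α β δ : Type}

abbrev RR (K : Type) [Field K] (α : Type) := MvPolynomial (α × α) K

noncomputable def ren (e : α → β) : RR K α →ₐ[K] RR K β := rename (Prod.map e e)

noncomputable def pull (e : α → β) (P : Ideal (RR K β)) : Ideal (RR K α) := P.comap (ren e)

lemma mem_pull {e : α → β} {P : Ideal (RR K β)} {f : RR K α} : f ∈ pull e P ↔ ren e f ∈ P :=
  Iff.rfl

@[simp] lemma ren_X (e : α → β) (p : α × α) : ren (K := K) e (X p) = X (e p.1, e p.2) := by
  simp [ren, Prod.map]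

lemma ren_ren (e : α → β) (g : β → δ) (f : RR K α) : ren g (ren e f) = ren (g ∘ e) f := by
  simp [ren, rename_rename, Prod.map_comp_map]

@[simp] lemma ren_id (f : RR K α) : ren id f = f := by
  simp [ren]

lemma pull_pull (e : α → β) (g : β → δ) (P : Ideal (RR K δ)) :
    pull e (pull g P) = pull (g ∘ e) P := by
  ext f; simp [mem_pull, ren_ren]

@[simp] lemma pull_id (P : Ideal (RR K α)) : pull id P = P := by
  ext f; simp [mem_pull]

lemma pull_mono (e : α → β) {P Q : Ideal (RR K β)} (h : P ≤ Q) : pull e P ≤ pull e Q :=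
  Ideal.comap_mono h

lemma pull_prime (e : α → β) {P : Ideal (RR K β)} (h : P.IsPrime) : (pull e P).IsPrime :=
  Ideal.comap_isPrime _ _

lemma ren_injective {e : α → β} (h : Function.Injective e) :
    Function.Injective (ren (K := K) e) := rename_injective _ (h.prodMap h)

noncomputable def minor {r : ℕ} (ρ γ : Fin r → α) : RR K α :=
  Matrix.det (Matrix.of fun a b => X (ρ a, γ b))

lemma ren_minor {r : ℕ} (e : α → β) (ρ γ : Fin r → α) :
    ren (K := K) e (minor ρ γ) = minor (e ∘ ρ) (e ∘ γ) := by
  unfold minor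
  rw [AlgHom.map_det]
  congr 1
  ext a b
  simp

/-- matrices -/
def mat {r : ℕ} {B : Type} [CommRing B] (v : α → Fin (r + r) → B) (i j : α) : B :=
  ∑ a : Fin r, v i (Fin.castAdd r a) * v j (Fin.natAdd r a)

noncomputable def ev {r : ℕ} {B : Type} [CommRing B] [Algebra K B] (v : α → Fin (r + r) → B) :
    RR K α →ₐ[K] B := aeval (fun p => mat v p.1 p.2)

lemma ev_ren {r : ℕ} {B : Type} [CommRing B] [Algebra K B] (e : α → β) (v : β → Fin (r + r) → B)
    (f : RR K α) : ev v (ren e f) = ev (v ∘ e) f := by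
  simp only [ev, ren, aeval_rename]
  rfl

lemma map_mat {r : ℕ} {B B' : Type} [CommRing B] [CommRing B'] (φ : B →+* B')
    (v : α → Fin (r + r) → B) (i j : α) : φ (mat v i j) = mat (fun i a => φ (v i a)) i j := by
  simp [mat]

lemma map_ev {r : ℕ} {B B' : Type} [CommRing B] [CommRing B'] [Algebra K B] [Algebra K B']
    (φ : B →ₐ[K] B') (v : α → Fin (r + r) → B) (f : RR K α) :
    φ (ev v f) = ev (fun i a => φ (v i a)) f := by
  have : (φ.comp (ev v)) = ev (K := K) (fun i a => φ (v i a)) := by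
    ext p
    simp [ev, mat]
  exact DFunLike.congr_fun this f

lemma ev_X {r : ℕ} {B : Type} [CommRing B] [Algebra K B] (v : α → Fin (r + r) → B)
    (p : α × α) : ev (K := K) v (X p) = mat v p.1 p.2 := by simp [ev]

/-- family of radical ideals -/
structure FI (K : Type) [Field K] (k : ℕ) where
  I : ∀ α : Type, Ideal (RR K α)
  rad : ∀ α, (I α).IsRadical
  minors : ∀ (α : Type) (ρ γ : Fin (k + 1) → α), minor ρ γ ∈ I α
  func : ∀ {α β : Type} (e : α → β), Function.Injective e → I α ≤ pull e (I β)

abbrev FI.minP {k : ℕ} (F : FI K k) (α : Type) : Set (Ideal (RR K α)) := (F.I α).minimalPrimes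

/-- a matrix over a field with vanishing bordered minors factors -/
def Gz {r : ℕ} {B : Type} [CommRing B] (ρ γ : Fin r → α) (A : α → α → B)
    (y : α → Fin (r + r) → B) : Prop :=
  ∀ t, (∀ a, y t (Fin.castAdd r a) = A t (γ a)) ∧
    ∀ a, ∑ b, A (ρ a) (γ b) * y t (Fin.natAdd r b) = A (ρ a) t

lemma Gz_exists {r : ℕ} {B : Type} [CommRing B] (ρ γ : Fin r → α) (A : α → α → B)
    (h : IsUnit (Matrix.det (Matrix.of fun a b => A (ρ a) (γ b)))) : ∃ y, Gz ρ γ A y := by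
  set D : Matrix (Fin r) (Fin r) B := Matrix.of fun a b => A (ρ a) (γ b)
  refine ⟨fun t => Fin.append (fun a => A t (γ a)) (D⁻¹.mulVec (fun a => A (ρ a) t)), fun t =>
    ⟨fun a => by simp, fun a => ?_⟩⟩
  have : D.mulVec (D⁻¹.mulVec (fun a => A (ρ a) t)) = (fun a => A (ρ a) t) := by
    rw [Matrix.mulVec_mulVec, Matrix.mul_nonsing_inv _ h, Matrix.one_mulVec]
  have := congrFun this a
  simp only [Fin.append_right]
  exact this

lemma Gz_unique {r : ℕ} {B : Type} [CommRing B] [IsDomain B] (ρ γ : Fin r → α) (A : α → α → B)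
    (h : Matrix.det (Matrix.of fun a b => A (ρ a) (γ b)) ≠ 0) {y y' : α → Fin (r + r) → B}
    (hy : Gz ρ γ A y) (hy' : Gz ρ γ A y') : y = y' := by
  funext t
  have h2 : (fun b => y t (Fin.natAdd r b)) - (fun b => y' t (Fin.natAdd r b)) = 0 := by
    apply Matrix.eq_zero_of_mulVec_eq_zero h
    rw [Matrix.mulVec_sub, sub_eq_zero]
    funext a
    exact ((hy t).2 a).trans ((hy' t).2 a).symm
  rw [sub_eq_zero] at h2
  funext c
  refine Fin.addCases (fun a => ?_) (fun b => ?_) c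
  · rw [(hy t).1, (hy' t).1]
  · exact congrFun h2 b

lemma Gz_map {r : ℕ} {B B' : Type} [CommRing B] [CommRing B'] (φ : B →+* B') {ρ γ : Fin r → α}
    {A : α → α → B} {y : α → Fin (r + r) → B} (hy : Gz ρ γ A y) :
    Gz ρ γ (fun i j => φ (A i j)) (fun i a => φ (y i a)) := fun t =>
  ⟨fun a => by simp [(hy t).1], fun a => by
    have := congrArg φ ((hy t).2 a); simpa using this⟩

lemma Gz_comp {r : ℕ} {B : Type} [CommRing B] {ρ γ : Fin r → α} (e : α → β)
    {A : β → β → B} {y : β → Fin (r + r) → B} (hy : Gz (e ∘ ρ) (e ∘ γ) A y) :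
    Gz ρ γ (fun i j => A (e i) (e j)) (y ∘ e) := fun t =>
  ⟨fun a => by simp [(hy (e t)).1], fun a => (hy (e t)).2 a⟩

lemma Gz_mat {r : ℕ} {B : Type} [CommRing B] (ρ γ : Fin r → α) (y : α → Fin (r + r) → B)
    (hn : ∀ a b, y (γ a) (Fin.natAdd r b) = if a = b then 1 else 0) : Gz ρ γ (mat y) y := by
  intro t
  have : ∀ s a, mat y s (γ a) = y s (Fin.castAdd r a) := by
    intro s a; simp only [mat, hn]; simp
  refine ⟨fun a => (this t a).symm, fun a => ?_⟩
  simp only [this]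
  rfl

lemma Gz_norm {r : ℕ} {B : Type} [CommRing B] [IsDomain B] (ρ γ : Fin r → α) (A : α → α → B)
    (h : Matrix.det (Matrix.of fun a b => A (ρ a) (γ b)) ≠ 0) {y : α → Fin (r + r) → B}
    (hy : Gz ρ γ A y) : ∀ a b, y (γ a) (Fin.natAdd r b) = if a = b then 1 else 0 := by
  intro a
  have h2 : (fun b => y (γ a) (Fin.natAdd r b)) - (fun b => if a = b then 1 else 0) = 0 := by
    apply Matrix.eq_zero_of_mulVec_eq_zero h
    rw [Matrix.mulVec_sub, sub_eq_zero]
    funext c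
    refine ((hy (γ a)).2 c).trans ?_
    simp [Matrix.mulVec, dotProduct]
  rw [sub_eq_zero] at h2
  exact fun b => congrFun h2 b

lemma Gz_eq {r : ℕ} {L : Type} [Field L] (ρ γ : Fin r → α) (A : α → α → L)
    (h : Matrix.det (Matrix.of fun a b => A (ρ a) (γ b)) ≠ 0) {y : α → Fin (r + r) → L}
    (hy : Gz ρ γ A y)
    (hm : ∀ ρ' γ' : Fin (r + 1) → α, Matrix.det (Matrix.of fun a b => A (ρ' a) (γ' b)) = 0) :
    mat y = A := by
  funext s t
  set D : Matrix (Fin r) (Fin r) L := Matrix.of fun a b => A (ρ a) (γ b) with hD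
  have hu : IsUnit D.det := isUnit_iff_ne_zero.2 h
  let _ : Invertible D := D.invertibleOfIsUnitDet hu
  let e : Fin r ⊕ Fin 1 ≃ Fin (r + 1) := finSumFinEquiv
  have h1 := hm (Fin.append ρ (fun _ => s)) (Fin.append γ (fun _ => t))
  rw [← Matrix.det_submatrix_equiv_self e] at h1
  have h2 : (Matrix.of fun a b => A (Fin.append ρ (fun _ : Fin 1 => s) a)
      (Fin.append γ (fun _ : Fin 1 => t) b)).submatrix e e
      = Matrix.fromBlocks D (Matrix.of fun a _ => A (ρ a) t) (Matrix.of fun _ b => A s (γ b))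
        (Matrix.of fun _ _ => A s t) := by
    ext i j
    rcases i with i | i <;> rcases j with j | j <;>
      simp [e, D, Matrix.fromBlocks]
  rw [h2, Matrix.det_fromBlocks₁₁, mul_eq_zero, or_iff_right h] at h1
  simp only [Matrix.det_unique, Matrix.sub_apply, sub_eq_zero, Matrix.of_apply] at h1
  rw [h1]
  have h3 : (fun b => y t (Fin.natAdd r b)) = (⅟D).mulVec (fun a => A (ρ a) t) := by
    have : D.mulVec (fun b => y t (Fin.natAdd r b)) = (fun a => A (ρ a) t) :=
      funext (hy t).2
    rw [← this, Matrix.mulVec_mulVec, invOf_mul_self, Matrix.one_mulVec]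
  have h4 : mat y s t = dotProduct (fun a => A s (γ a)) (fun b => y t (Fin.natAdd r b)) := by
    simp [mat, dotProduct, (hy s).1]
  rw [h4, h3, Matrix.mul_assoc, Matrix.mul_apply]
  rfl

lemma exists_mat {k : ℕ} {L : Type} [Field L] (A : α → α → L)
    (hm : ∀ ρ' γ' : Fin (k + 1) → α, Matrix.det (Matrix.of fun a b => A (ρ' a) (γ' b)) = 0) :
    ∃ r ≤ k, ∃ y : α → Fin (r + r) → L, mat y = A := by
  induction k with
  | zero =>
    refine ⟨0, le_rfl, fun _ => Fin.elim0, ?_⟩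
    funext s t
    have := hm (fun _ => s) (fun _ => t)
    simp at this
    simp [mat, this]
  | succ k ih =>
    by_cases h : ∀ ρ' γ' : Fin (k + 1) → α, Matrix.det (Matrix.of fun a b => A (ρ' a) (γ' b)) = 0
    · obtain ⟨r, hr, y, hy⟩ := ih h
      exact ⟨r, by omega, y, hy⟩
    · push Not at h
      obtain ⟨ρ, γ, h⟩ := h
      obtain ⟨y, hy⟩ := Gz_exists ρ γ A (isUnit_iff_ne_zero.2 h)
      exact ⟨k + 1, le_rfl, y, Gz_eq ρ γ A h hy hm⟩

end Basics

section Higman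

lemma sublist_ofFn {A : Type} (R : A → A → Prop) {n' n : ℕ} (u : Fin n' → A) (v : Fin n → A)
    (h : List.SublistForall₂ R (List.ofFn u) (List.ofFn v)) :
    ∃ e : Fin n' → Fin n, StrictMono e ∧ ∀ i, R (u i) (v (e i)) := by
  obtain ⟨l, h1, h2⟩ := List.sublistForall₂_iff.1 h
  obtain ⟨f, hf⟩ := List.sublist_iff_exists_fin_orderEmbedding_get_eq.1 h2
  have hl := h1.length_eq
  rw [List.length_ofFn] at hl
  refine ⟨fun i => Fin.cast (List.length_ofFn) (f (Fin.cast hl i)), fun i j hij => ?_, fun i => ?_⟩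
  · have := f.strictMono (show Fin.cast hl i < Fin.cast hl j from hij)
    exact this
  · have h3 := (List.forall₂_iff_get.1 h1).2 i (by simp) (by omega)
    have h4 := hf (Fin.cast hl i)
    simp only [List.get_ofFn] at h3 h4
    have h5 : R (u i) (l.get (Fin.cast hl i)) := h3
    rwa [h4] at h5

lemma lex_mapDomain {σ σ' : Type} [LinearOrder σ] [LinearOrder σ'] (e : σ → σ') (he : StrictMono e)
    {a b : σ →₀ ℕ} (h : toLex a < toLex b) :
    toLex (Finsupp.mapDomain e a) < toLex (Finsupp.mapDomain e b) := by
  rw [Finsupp.Lex.lt_iff] at h ⊢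
  obtain ⟨j, h1, h2⟩ := h
  refine ⟨e j, fun d hd => ?_, ?_⟩
  · simp only [ofLex_toLex] at h1 ⊢
    by_cases hr : d ∈ Set.range e
    · obtain ⟨i, rfl⟩ := hr
      rw [Finsupp.mapDomain_apply he.injective, Finsupp.mapDomain_apply he.injective]
      exact h1 i (he.lt_iff_lt.1 hd)
    · rw [Finsupp.mapDomain_of_notMem_range _ _ hr, Finsupp.mapDomain_of_notMem_range _ _ hr]
  · simp only [ofLex_toLex] at h2 ⊢
    rwa [Finsupp.mapDomain_apply he.injective, Finsupp.mapDomain_apply he.injective]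

open MonomialOrder in
lemma degree_rename {σ σ' R : Type} [CommRing R] [LinearOrder σ] [LinearOrder σ'] [WellFoundedGT σ]
    [WellFoundedGT σ'] (e : σ → σ') (he : StrictMono e) (f : MvPolynomial σ R) :
    (lex (σ := σ')).degree (rename e f) = Finsupp.mapDomain e ((lex (σ := σ)).degree f) := by
  by_cases hf : f = 0
  · simp [hf]
  apply (lex (σ := σ')).toSyn.injective
  apply le_antisymm
  · rw [degree_le_iff]
    intro d hd
    obtain ⟨u, rfl, hu⟩ := coeff_rename_ne_zero _ _ _ (mem_support_iff.1 hd)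
    have h := (lex (σ := σ)).le_degree (mem_support_iff.2 hu)
    rw [lex_le_iff] at h ⊢
    rcases h.eq_or_lt with h | h
    · rw [toLex_inj.1 h]
    · exact (lex_mapDomain e he h).le
  · apply le_degree
    rw [mem_support_iff, coeff_rename_mapDomain _ he.injective]
    exact coeff_degree_ne_zero_iff.2 hf

lemma ideal_le_of_LM {σ L : Type} [Field L] (m : MonomialOrder σ) {I Q : Ideal (MvPolynomial σ L)}
    (h : ∀ f ∈ I, f ≠ 0 → ∃ g ∈ I, g ∈ Q ∧ g ≠ 0 ∧ m.degree g ≤ m.degree f) : I ≤ Q := by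
  suffices H : ∀ d : m.syn, ∀ f ∈ I, m.toSyn (m.degree f) = d → f ∈ Q from
    fun f hf => H _ f hf rfl
  intro d
  induction d using WellFoundedLT.induction with
  | ind d ih =>
    rintro f hf rfl
    by_cases hf0 : f = 0
    · simp [hf0]
    obtain ⟨g, hgI, hgQ, hg0, hg⟩ := h f hf hf0
    have hb : IsUnit (m.leadingCoeff g) := isUnit_iff_ne_zero.2 (m.leadingCoeff_ne_zero_iff.2 hg0)
    by_cases hd : m.degree f = 0
    · rw [hd, le_zero_iff] at hg
      have : Q = ⊤ := by
        rw [m.eq_C_of_degree_eq_zero hg] at hgQ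
        exact Ideal.eq_top_of_isUnit_mem _ hgQ (hb.map C)
      rw [this]; trivial
    · have h1 := ih _ (m.degree_reduce_lt hb hg hd) (m.reduce hb f)
        (I.sub_mem hf (I.mul_mem_left _ hgI)) rfl
      have := Q.add_mem h1 (Q.mul_mem_left
        (monomial (m.degree f - m.degree g) (hb.unit⁻¹ * m.leadingCoeff f)) hgQ)
      simpa [MonomialOrder.reduce] using this

def lft {n' n : ℕ} {t : ℕ} (e : Fin n' → Fin n) : Fin n' ×ₗ Fin t → Fin n ×ₗ Fin t :=
  fun p => toLex (e (ofLex p).1, (ofLex p).2)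

lemma lft_strictMono {n' n : ℕ} {t : ℕ} {e : Fin n' → Fin n} (he : StrictMono e) :
    StrictMono (lft (t := t) e) := by
  intro p q h
  rw [Prod.Lex.lt_iff] at h
  rw [lft, Prod.Lex.lt_iff]
  rcases h with h | h
  · exact Or.inl (he h)
  · exact Or.inr ⟨congrArg e h.1, h.2⟩

theorem higman {K : Type} [Field K] (t : ℕ) {Col : Type} [Finite Col]
    (𝓘 : ∀ n, (Fin n → Col) → Ideal (MvPolynomial (Fin n ×ₗ Fin t) K))
    (hmono : ∀ (n' n : ℕ) (w : Fin n → Col) (e : Fin n' → Fin n), StrictMono e →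
      ∀ f ∈ 𝓘 n' (w ∘ e), rename (lft e) f ∈ 𝓘 n w) :
    ∃ n1, ∀ n (w : Fin n → Col) (Q : Ideal (MvPolynomial (Fin n ×ₗ Fin t) K)),
      (∀ n' ≤ n1, ∀ e : Fin n' → Fin n, StrictMono e → ∀ f ∈ 𝓘 n' (w ∘ e), rename (lft e) f ∈ Q) →
      𝓘 n w ≤ Q := by
  classical
  let T := Σ n : ℕ, {p : (Fin n → Col) × MvPolynomial (Fin n ×ₗ Fin t) K // p.2 ∈ 𝓘 n p.1 ∧ p.2 ≠ 0}
  let rel : Col × (Fin t → ℕ) → Col × (Fin t → ℕ) → Prop := fun p q => p.1 = q.1 ∧ p.2 ≤ q.2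
  let word : T → List (Col × (Fin t → ℕ)) := fun x =>
    List.ofFn fun i => (x.2.1.1 i, fun j => MonomialOrder.lex.degree x.2.1.2 (toLex (i, j)))
  have : IsPreorder _ rel :=
    { refl := fun a => ⟨rfl, le_rfl⟩
      trans := fun a b c h1 h2 => ⟨h1.1.trans h2.1, h1.2.trans h2.2⟩ }
  have hw : WellQuasiOrdered rel :=
    (Finite.wellQuasiOrdered (fun a b : Col => a = b)).prod
      (wellQuasiOrdered_le (α := Fin t → ℕ))
  have hp := Set.PartiallyWellOrderedOn.partiallyWellOrderedOn_sublistForall₂ rel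
    (Set.partiallyWellOrderedOn_univ_iff.2 hw)
  have claim : ∃ n1, ∀ x : T, ∃ y : T, y.1 ≤ n1 ∧ List.SublistForall₂ rel (word y) (word x) := by
    by_contra hcon
    push Not at hcon
    choose F hF using hcon
    have hlen : ∀ n1, n1 < (F n1).1 := by
      intro n1
      by_contra h
      exact hF n1 (F n1) (by omega) (refl _)
    let s : ℕ → T := fun j => Nat.rec (F 0) (fun _ x => F x.1) j
    have hs : ∀ j, s (j + 1) = F (s j).1 := fun j => rfl
    have hmon : StrictMono (fun j => (s j).1) := strictMono_nat_of_lt_succ fun j => by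
      simpa only [hs] using hlen _
    obtain ⟨i, j, hij, h⟩ := hp (fun j => ⟨word (s j), by simp⟩)
    obtain ⟨j, rfl⟩ := Nat.exists_eq_succ_of_ne_zero (by omega : j ≠ 0)
    exact hF _ _ (hmon.monotone (by omega : i ≤ j)) h
  obtain ⟨n1, hn1⟩ := claim
  refine ⟨n1, fun n w Q hQ => ideal_le_of_LM MonomialOrder.lex fun f hf hf0 => ?_⟩
  obtain ⟨⟨n', ⟨w', f'⟩, hf', hf0'⟩, hle, hsub⟩ := hn1 ⟨n, ⟨w, f⟩, hf, hf0⟩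
  obtain ⟨e, he, hR⟩ := sublist_ofFn _ _ _ hsub
  have hw' : w' = w ∘ e := funext fun i => (hR i).1
  replace hf' : f' ∈ 𝓘 n' (w ∘ e) := by rw [← hw']; exact hf'
  refine ⟨rename (lft e) f', hmono _ _ _ _ he _ hf', hQ n' hle e he _ hf', ?_, ?_⟩
  · simpa using (rename_injective _ (lft_strictMono he).injective).ne hf0'
  · rw [degree_rename _ (lft_strictMono he)]
    intro p
    by_cases hr : p ∈ Set.range (lft (t := t) e)
    · obtain ⟨q, rfl⟩ := hr
      rw [Finsupp.mapDomain_apply (lft_strictMono he).injective]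
      exact (hR _).2 _
    · rw [Finsupp.mapDomain_of_notMem_range _ _ hr]
      exact Nat.zero_le _


theorem noeth {K : Type} [Field K] (k : ℕ) {Col : Type} [Finite Col]
    (𝓘 : ∀ n, (Fin n → Col) → Ideal (RR K (Fin n)))
    (hmono : ∀ (n' n : ℕ) (w : Fin n → Col) (e : Fin n' → Fin n), StrictMono e →
      𝓘 n' (w ∘ e) ≤ pull e (𝓘 n w)) :
    ∃ n1, ∀ n (w : Fin n → Col) (Q : Ideal (RR K (Fin n))), Q.IsPrime →
      (∀ ρ γ : Fin (k + 1) → Fin n, minor ρ γ ∈ Q) →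
      (∀ n' ≤ n1, ∀ e : Fin n' → Fin n, StrictMono e → 𝓘 n' (w ∘ e) ≤ pull e Q) →
      𝓘 n w ≤ Q := by
  let gen : ∀ r n : ℕ, Fin n → Fin (r + r) → MvPolynomial (Fin n ×ₗ Fin (r + r)) K :=
    fun r n i a => X (toLex (i, a))
  have hgen : ∀ (r n' n : ℕ) (e : Fin n' → Fin n) (f : RR K (Fin n')),
      rename (lft e) (ev (gen r n') f) = ev (gen r n) (ren e f) := by
    intro r n' n e f
    rw [map_ev, ev_ren]
    congr 2
    ext1 i; ext1 a
    simp [gen, lft]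
  have h1 := fun r => higman (K := K) (r + r) (fun n w => (𝓘 n w).map (ev (gen r n)))
    (fun n' n w e he => by
      suffices Ideal.map (ev (gen r n')) (𝓘 n' (w ∘ e)) ≤
        Ideal.comap (rename (R := K) (lft e)) (Ideal.map (ev (gen r n)) (𝓘 n w)) from this
      rw [Ideal.map_le_iff_le_comap]
      intro f hf
      rw [Ideal.mem_comap, Ideal.mem_comap, hgen]
      exact Ideal.mem_map_of_mem _ (hmono _ _ _ _ he hf))
  choose n1 hn1 using h1
  refine ⟨(Finset.range (k + 1)).sup n1, fun n w Q hQ hmin hpc f hf => ?_⟩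
  let L := FractionRing (RR K (Fin n) ⧸ Q)
  let φ : RR K (Fin n) →ₐ[K] L := (IsScalarTower.toAlgHom K (RR K (Fin n) ⧸ Q) L).comp
    (Ideal.Quotient.mkₐ K Q)
  have hφ : ∀ f, φ f = 0 ↔ f ∈ Q := by
    intro f
    simp only [φ, AlgHom.comp_apply, IsScalarTower.toAlgHom_apply, Ideal.Quotient.mkₐ_eq_mk]
    rw [FaithfulSMul.algebraMap_eq_zero_iff, Ideal.Quotient.eq_zero_iff_mem]
  obtain ⟨r, hr, y, hy⟩ := exists_mat (k := k) (fun i j => φ (X (i, j))) (fun ρ γ => by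
    have := (hφ _).2 (hmin ρ γ)
    rw [minor, AlgHom.map_det] at this
    exact this)
  let ψ : MvPolynomial (Fin n ×ₗ Fin (r + r)) K →ₐ[K] L :=
    aeval fun p => y (ofLex p).1 (ofLex p).2
  have hψ : ∀ f, ψ (ev (gen r n) f) = φ f := by
    intro f
    rw [map_ev]
    have : (ev (fun i a => ψ (gen r n i a)) : RR K (Fin n) →ₐ[K] L) = φ := by
      ext p
      rw [ev_X]
      simp only [gen, ψ, aeval_X, ofLex_toLex]
      exact congrFun (congrFun hy p.1) p.2
    rw [this]
  have h2 := hn1 r n w (RingHom.ker ψ) (fun n' hn' e he => by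
      suffices _ ≤ Ideal.comap (rename (R := K) (lft e)) (RingHom.ker ψ) from this
      rw [Ideal.map_le_iff_le_comap]
      intro f hf
      rw [Ideal.mem_comap, Ideal.mem_comap, hgen, RingHom.mem_ker, hψ, hφ]
      refine hpc n' (hn'.trans ?_) e he hf
      exact Finset.le_sup (f := n1) (Finset.mem_range.2 (by omega)))
  have h3 := h2 (Ideal.mem_map_of_mem _ hf)
  rwa [RingHom.mem_ker, hψ, hφ] at h3


def FI.lt {K : Type} [Field K] {k : ℕ} (F G : FI K k) : Prop :=
  (∀ n, G.I (Fin n) ≤ F.I (Fin n)) ∧ ∃ n, G.I (Fin n) ≠ F.I (Fin n)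

lemma le_of_primes {R : Type} [CommRing R] {I J : Ideal R} (hJ : J.IsRadical)
    (h : ∀ Q : Ideal R, Q.IsPrime → J ≤ Q → I ≤ Q) : I ≤ J := by
  rw [← hJ.radical, Ideal.radical_eq_sInf]
  exact le_sInf fun Q hQ => h Q hQ.2 hQ.1

theorem FI_wf (K : Type) [Field K] (k : ℕ) : WellFounded (FI.lt (K := K) (k := k)) := by
  rw [wellFounded_iff_isEmpty_descending_chain]
  refine ⟨fun ⟨F, hF⟩ => ?_⟩
  have hmon : ∀ n, Monotone fun j => (F j).I (Fin n) := fun n =>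
    monotone_nat_of_le_succ fun j => (hF j).1 n
  obtain ⟨n1, hn1⟩ := noeth (K := K) k (Col := Unit) (fun n _ => ⨆ j, (F j).I (Fin n))
    (fun n' n w e he => iSup_le fun j => ((F j).func e he.injective).trans
      (pull_mono _ (le_iSup (fun j => (F j).I (Fin n)) j)))
  have hst : ∀ n, ∃ j, ∀ i, j ≤ i → (F j).I (Fin n) = (F i).I (Fin n) := fun n =>
    monotone_stabilizes_iff_noetherian.2 (inferInstance : IsNoetherianRing (RR K (Fin n)))
      ⟨_, hmon n⟩
  choose j hj using hst
  obtain ⟨n, hn⟩ := (hF ((Finset.range (n1 + 1)).sup j)).2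
  apply hn
  set J := (Finset.range (n1 + 1)).sup j with hJ
  refine le_antisymm ((hF J).1 n) ?_
  refine le_of_primes ((F J).rad _) fun Q hQ hle => ?_
  refine (le_iSup (fun j => (F j).I (Fin n)) (J + 1)).trans ?_
  refine hn1 n (fun _ => ()) Q hQ (fun ρ γ => hle ((F J).minors _ ρ γ)) fun n' hn' e he => ?_
  refine iSup_le fun i => le_trans ?_ (((F J).func e he.injective).trans (pull_mono e hle))
  have h1 : j n' ≤ J := Finset.le_sup (f := j) (Finset.mem_range.2 (by omega))
  rw [← hj n' J h1]
  rcases le_total i (j n') with h | h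
  · exact hmon _ h
  · rw [hj n' i h]

end Higman

section Galois
attribute [local instance] MvPolynomial.algebraMvPolynomial

lemma mv_isIntegral {κ F σ : Type} [Field κ] [Field F] [Algebra κ F] [Algebra.IsIntegral κ F] :
    Algebra.IsIntegral (MvPolynomial σ κ) (MvPolynomial σ F) := by
  refine ⟨fun f => ?_⟩
  induction f using MvPolynomial.induction_on with
  | C a =>
    have h : IsIntegral κ a := Algebra.IsIntegral.isIntegral a
    have h2 : IsIntegral κ (C a : MvPolynomial σ F) :=
      h.map (IsScalarTower.toAlgHom κ F (MvPolynomial σ F))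
    exact h2.tower_top
  | add p q hp hq => exact hp.add hq
  | mul_X p i hp =>
    refine hp.mul ?_
    have : (X i : MvPolynomial σ F) = algebraMap (MvPolynomial σ κ) (MvPolynomial σ F) (X i) := by
      exact (map_X _ i).symm
    rw [this]
    exact isIntegral_algebraMap

lemma lift_ex {R S M : Type} [CommRing R] [CommRing S] [IsDomain S] [Field M] [IsAlgClosed M]
    (i : R →+* S) (hi : Function.Injective i) (hint : i.IsIntegral) (b : R →+* M)
    (hb : Function.Injective b) : ∃ φ : S →+* M, ∀ x, φ (i x) = b x := by
  let _ : Algebra R M := b.toAlgebra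
  let _ : Algebra R S := i.toAlgebra
  have : IsDomain R := hi.isDomain i
  have : FaithfulSMul R M := (faithfulSMul_iff_algebraMap_injective R M).2 hb
  have : FaithfulSMul R S := (faithfulSMul_iff_algebraMap_injective R S).2 hi
  have : Algebra.IsIntegral R S := ⟨hint⟩
  exact ⟨(IsAlgClosed.lift : S →ₐ[R] M), fun x => (IsAlgClosed.lift : S →ₐ[R] M).commutes x⟩

lemma galois {κ F σ : Type} [Field κ] [Field F] [Algebra κ F] [IsAlgClosure κ F]
    (Q1 Q2 : Ideal (MvPolynomial σ F)) [Q1.IsPrime] [Q2.IsPrime]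
    (h : ∀ f : MvPolynomial σ κ, map (algebraMap κ F) f ∈ Q1 → map (algebraMap κ F) f ∈ Q2) :
    ∃ s : F ≃ₐ[κ] F, ∀ f ∈ Q1, map (s : F →+* F) f ∈ Q2 := by
  have : IsAlgClosed F := IsAlgClosure.isAlgClosed κ
  have : Algebra.IsAlgebraic κ F := IsAlgClosure.isAlgebraic
  have : Algebra.IsIntegral (MvPolynomial σ κ) (MvPolynomial σ F) := mv_isIntegral
  obtain ⟨Q, hQ1, hQp, hQ⟩ := Ideal.exists_ideal_over_prime_of_isIntegral
    (Q2.comap (algebraMap (MvPolynomial σ κ) (MvPolynomial σ F))) Q1 (fun f hf => h f hf)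
  let M := AlgebraicClosure (FractionRing (MvPolynomial σ F ⧸ Q2))
  let a2 : MvPolynomial σ F →ₐ[F] M := IsScalarTower.toAlgHom F (MvPolynomial σ F ⧸ Q2) M |>.comp
    (Ideal.Quotient.mkₐ F Q2)
  have ha2 : ∀ f, a2 f = 0 ↔ f ∈ Q2 := by
    intro f
    rw [← Ideal.Quotient.eq_zero_iff_mem]
    have hi : Function.Injective (algebraMap (MvPolynomial σ F ⧸ Q2) M) := by
      rw [IsScalarTower.algebraMap_eq _ (FractionRing (MvPolynomial σ F ⧸ Q2)) M]
      exact (algebraMap (FractionRing (MvPolynomial σ F ⧸ Q2)) M).injective.comp (IsFractionRing.injective _ _)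
    exact map_eq_zero_iff (algebraMap (MvPolynomial σ F ⧸ Q2) M) hi
  let q : Ideal (MvPolynomial σ κ) := Q.comap (algebraMap (MvPolynomial σ κ) (MvPolynomial σ F))
  have hq : ∀ f, f ∈ q ↔ map (algebraMap κ F) f ∈ Q2 := by
    intro f
    change f ∈ Q.comap _ ↔ _
    rw [hQ]; rfl
  let R := MvPolynomial σ κ ⧸ q
  let S := MvPolynomial σ F ⧸ Q
  let b : R →+* M := Ideal.Quotient.lift q
    ((a2 : MvPolynomial σ F →+* M).comp (map (algebraMap κ F)))
    (fun f hf => (ha2 _).2 ((hq f).1 hf))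
  have hb : Function.Injective b := by
    rw [injective_iff_map_eq_zero]
    intro x hx
    obtain ⟨f, rfl⟩ := Ideal.Quotient.mk_surjective x
    exact Ideal.Quotient.eq_zero_iff_mem.2 ((hq f).2 ((ha2 _).1 hx))
  have hint : (algebraMap R S).IsIntegral :=
    fun x => (inferInstance : Algebra.IsIntegral R S).isIntegral x
  obtain ⟨φ, hφ0⟩ := lift_ex (algebraMap R S) Ideal.algebraMap_quotient_injective hint b hb
  let φ' : MvPolynomial σ F →+* M := φ.comp (Ideal.Quotient.mk Q)
  have hφ : ∀ f : MvPolynomial σ κ, φ' (map (algebraMap κ F) f) = a2 (map (algebraMap κ F) f) := by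
    intro f
    exact hφ0 (Ideal.Quotient.mk q f)
  let ψ : F →ₐ[κ] M :=
    { (φ'.comp C) with
      commutes' := fun r => by
        have := hφ (C r)
        simp only [map_C] at this
        change φ' (C (algebraMap κ F r)) = _
        rw [this]
        have h3 : (C (algebraMap κ F r) : MvPolynomial σ F) = algebraMap F _ (algebraMap κ F r) := rfl
        rw [h3, a2.commutes, ← IsScalarTower.algebraMap_apply κ F M] }
  refine ⟨ψ.restrictNormal' F, fun f hf => ?_⟩
  rw [← ha2]
  have key : (a2 : MvPolynomial σ F →+* M).comp (map ((ψ.restrictNormal' F : F ≃ₐ[κ] F) : F →+* F))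
      = φ' := by
    apply MvPolynomial.ringHom_ext
    · intro x
      have := ψ.restrictNormal_commutes F x
      simp only [RingHom.comp_apply, map_C]
      have h4 := a2.commutes (ψ.restrictNormal F x)
      exact h4.trans this
    · intro i
      have := hφ (X i)
      simp only [map_X] at this
      simp [this]
  have h5 := DFunLike.congr_fun key f
  refine h5.trans ?_
  change φ (Ideal.Quotient.mk Q f) = 0
  rw [Ideal.Quotient.eq_zero_iff_mem.2 (hQ1 hf), map_zero]

end Galois

section Points
variable {F : Type} [Field F] {M M' : Type} {t : ℕ}

def Zp (c : M → Ideal (MvPolynomial (Fin t) F)) : Set (M × Fin t → F) :=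
  {x | ∀ i, (fun a => x (i, a)) ∈ zeroLocus F (c i)}

noncomputable def qq (c : M → Ideal (MvPolynomial (Fin t) F)) : Ideal (MvPolynomial (M × Fin t) F) :=
  vanishingIdeal F (Zp c)

lemma zl_nonempty [IsAlgClosed F] {c : Ideal (MvPolynomial (Fin t) F)} (hc : c.IsPrime) :
    (zeroLocus F c).Nonempty := by
  by_contra h
  rw [Set.not_nonempty_iff_eq_empty] at h
  have := IsPrime.vanishingIdeal_zeroLocus (K := F) c
  rw [h, vanishingIdeal_empty] at this
  exact hc.ne_top this.symm

lemma qq_prime [IsAlgClosed F] [Finite M] (c : M → Ideal (MvPolynomial (Fin t) F))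
    (hc : ∀ i, (c i).IsPrime) : (qq c).IsPrime := by
  classical
  have hne : (Zp c).Nonempty := by
    choose z hz using fun i => zl_nonempty (hc i)
    exact ⟨fun p => z p.1 p.2, hz⟩
  refine ⟨?_, ?_⟩
  · rw [Ideal.ne_top_iff_one]
    obtain ⟨z, hz⟩ := hne
    intro h
    simpa using h z hz
  · intro f g hfg
    by_contra! h
    obtain ⟨h1, h2⟩ := h
    simp only [qq, mem_vanishingIdeal_iff, not_forall] at h1 h2
    obtain ⟨u, hu, hfu⟩ := h1
    obtain ⟨v, hv, hgv⟩ := h2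
    have key : ∀ s : Finset M, ∃ u ∈ Zp c, ∃ v ∈ Zp c, aeval u f ≠ 0 ∧ aeval v g ≠ 0 ∧
        ∀ i ∈ s, ∀ a, u (i, a) = v (i, a) := by
      intro s
      induction s using Finset.induction_on with
      | empty => exact ⟨u, hu, v, hv, hfu, hgv, by simp⟩
      | insert i s his ih =>
        obtain ⟨u, hu, v, hv, hfu, hgv, huv⟩ := ih
        let sub (u : M × Fin t → F) (z : Fin t → F) : M × Fin t → F :=
          fun p => if p.1 = i then z p.2 else u p
        let pol (u : M × Fin t → F) : MvPolynomial (M × Fin t) F →ₐ[F] MvPolynomial (Fin t) F :=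
          aeval (fun p => if p.1 = i then X p.2 else C (u p))
        have hpol : ∀ u z f, aeval z (pol u f) = aeval (sub u z) f := by
          intro u z f
          have : (aeval z).comp (pol u) = (aeval (sub u z) : MvPolynomial (M × Fin t) F →ₐ[F] F) := by
            ext p
            simp only [pol, sub, AlgHom.comp_apply, aeval_X]
            split_ifs <;> simp
          exact DFunLike.congr_fun this f
        have hself : ∀ u : M × Fin t → F, sub u (fun a => u (i, a)) = u := by
          intro u; funext ⟨j, a⟩
          simp only [sub]
          split_ifs with h
          · rw [← h]
          · rfl
        have hmem : ∀ u ∈ Zp c, ∀ f, aeval u f ≠ 0 → pol u f ∉ c i := by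
          intro u hu f hf hm
          have := hu i _ hm
          rw [hpol, hself] at this
          exact hf this
        have hsub : ∀ u ∈ Zp c, ∀ z ∈ zeroLocus F (c i), sub u z ∈ Zp c := by
          intro u hu z hz j
          by_cases h : j = i
          · subst h; simpa [sub] using hz
          · simpa [sub, h] using hu j
        have hp : pol u f * pol v g ∉ c i := fun h =>
          ((hc i).mem_or_mem h).elim (hmem u hu f hfu) (hmem v hv g hgv)
        have := hc i
        rw [← IsPrime.vanishingIdeal_zeroLocus (K := F) (c i), mem_vanishingIdeal_iff] at hp
        push Not at hp
        obtain ⟨z, hz, hne⟩ := hp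
        rw [map_mul, hpol, hpol] at hne
        refine ⟨sub u z, hsub u hu z hz, sub v z, hsub v hv z hz, left_ne_zero_of_mul hne,
          right_ne_zero_of_mul hne, fun j hj a => ?_⟩
        simp only [sub]
        split_ifs with h
        · rfl
        · exact huv j (Finset.mem_of_mem_insert_of_ne hj h) a
    have := Fintype.ofFinite M
    obtain ⟨u, hu, v, hv, hfu, hgv, huv⟩ := key Finset.univ
    have : u = v := funext fun ⟨i, a⟩ => huv i (Finset.mem_univ _) a
    subst this
    have := hfg u hu
    rw [map_mul] at this
    exact (mul_ne_zero hfu hgv) this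

lemma qq_comap [IsAlgClosed F] (c : M' → Ideal (MvPolynomial (Fin t) F))
    (hc : ∀ i, (c i).IsPrime) (e : M → M') (he : Function.Injective e)
    (f : MvPolynomial (M × Fin t) F) :
    rename (Prod.map e id) f ∈ qq c ↔ f ∈ qq (c ∘ e) := by
  classical
  simp only [qq, mem_vanishingIdeal_iff, aeval_rename]
  constructor
  · intro h x hx
    choose z hz using fun i => zl_nonempty (hc i)
    let x' : M' × Fin t → F := fun p => if h : ∃ i, e i = p.1 then x (h.choose, p.2) else z p.1 p.2
    have hx' : ∀ i a, x' (e i, a) = x (i, a) := by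
      intro i a
      have h1 : ∃ j, e j = e i := ⟨i, rfl⟩
      simp only [x']
      rw [dif_pos h1, he h1.choose_spec]
    have := h x' (fun j => by
      by_cases hj : ∃ i, e i = j
      · obtain ⟨i, rfl⟩ := hj
        simp only [hx']
        exact hx i
      · simp only [x', dif_neg hj]
        exact hz j)
    rwa [show x' ∘ Prod.map e id = x from funext fun ⟨i, a⟩ => hx' i a] at this
  · intro h x hx
    exact h _ (fun i => hx (e i))

lemma qq_single [IsAlgClosed F] (c : M → Ideal (MvPolynomial (Fin t) F))
    (hc : ∀ i, (c i).IsPrime) (i : M) (g : MvPolynomial (Fin t) F) :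
    rename (fun a => (i, a)) g ∈ qq c ↔ g ∈ c i := by
  have h := qq_comap c hc (fun _ : Unit => i) (fun _ _ _ => rfl) (rename (fun a => ((), a)) g)
  rw [rename_rename] at h
  refine h.trans ?_
  conv_rhs => rw [← IsPrime.vanishingIdeal_zeroLocus (K := F) (c i)]
  simp only [qq, mem_vanishingIdeal_iff, aeval_rename]
  constructor
  · intro h x hx
    exact h (fun p => x p.2) (fun _ => hx)
  · intro h x hx
    exact h _ (hx ())

lemma mem_radical_of_qq [IsAlgClosed F] [Finite M] (I : Ideal (MvPolynomial (Fin t) F))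
    (f : MvPolynomial (M × Fin t) F)
    (h : ∀ c : M → Ideal (MvPolynomial (Fin t) F), (∀ i, c i ∈ I.minimalPrimes) → f ∈ qq c) :
    f ∈ (⨆ i : M, I.map (rename (R := F) (fun a => (i, a)))).radical := by
  rw [← vanishingIdeal_zeroLocus_eq_radical (K := F), mem_vanishingIdeal_iff]
  intro x hx
  have : ∀ i, ∃ c ∈ I.minimalPrimes, (fun a => x (i, a)) ∈ zeroLocus F c := by
    intro i
    have hle : I ≤ RingHom.ker (aeval (R := F) (fun a => x (i, a))) := by
      intro g hg
      have := hx _ (Ideal.mem_iSup_of_mem i (Ideal.mem_map_of_mem _ hg))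
      rw [aeval_rename] at this
      exact this
    have hp := RingHom.ker_isPrime (aeval (R := F) (fun a => x (i, a)))
    obtain ⟨c, hc, hc2⟩ := Ideal.exists_minimalPrimes_le hle
    exact ⟨c, hc, fun g hg => hc2 hg⟩
  choose c hc hc2 using this
  exact h c hc x hc2

end Points

section Flat
variable {B : Type} [CommRing B] {M : Type} [Fintype M] {t : ℕ}

noncomputable def NN (rem : (Fin t →₀ ℕ) → MvPolynomial (Fin t) B) :
    MvPolynomial (M × Fin t) B →ₗ[B] MvPolynomial (M × Fin t) B :=
  (basisMonomials (M × Fin t) B).constr B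
    (fun s => ∏ i : M, rename (fun a => (i, a)) (rem (Finsupp.curry s i)))

noncomputable def N1 (rem : (Fin t →₀ ℕ) → MvPolynomial (Fin t) B) :
    MvPolynomial (Fin t) B →ₗ[B] MvPolynomial (Fin t) B :=
  (basisMonomials (Fin t) B).constr B rem

lemma NN_monomial (rem : (Fin t →₀ ℕ) → MvPolynomial (Fin t) B) (s : M × Fin t →₀ ℕ) (b : B) :
    NN rem (monomial s b) = b • ∏ i : M, rename (fun a => (i, a)) (rem (Finsupp.curry s i)) := by
  have h : monomial s b = b • monomial s (1 : B) := by rw [smul_monomial, smul_eq_mul, mul_one]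
  rw [h, map_smul]
  congr 1
  have := (basisMonomials (M × Fin t) B).constr_basis B
    (fun s => ∏ i : M, rename (fun a => (i, a)) (rem (Finsupp.curry s i))) s
  rwa [coe_basisMonomials] at this

lemma N1_monomial (rem : (Fin t →₀ ℕ) → MvPolynomial (Fin t) B) (s : Fin t →₀ ℕ) (b : B) :
    N1 rem (monomial s b) = b • rem s := by
  have h : monomial s b = b • monomial s (1 : B) := by rw [smul_monomial, smul_eq_mul, mul_one]
  rw [h, map_smul]
  congr 1
  have := (basisMonomials (Fin t) B).constr_basis B rem s
  rwa [coe_basisMonomials] at this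

lemma mapDomain_pair (i j : M) [DecidableEq M] (d : Fin t →₀ ℕ) (a : Fin t) :
    Finsupp.mapDomain (fun a => (i, a)) d (j, a) = if j = i then d a else 0 := by
  split_ifs with h
  · subst h
    exact Finsupp.mapDomain_apply (Prod.mk_right_injective j) d a
  · refine Finsupp.mapDomain_of_notMem_range _ _ ?_
    rintro ⟨b, hb⟩
    exact h (Prod.ext_iff.1 hb).1.symm

lemma monomial_blk (s : M × Fin t →₀ ℕ) :
    (monomial s 1 : MvPolynomial (M × Fin t) B)
      = ∏ i : M, rename (fun a => (i, a)) (monomial (Finsupp.curry s i) 1) := by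
  classical
  simp only [rename_monomial]
  rw [← monomial_sum_one]
  congr 2
  ext ⟨j, a⟩
  simp [Finsupp.finsetSum_apply, mapDomain_pair]

lemma NN_congr (rem : (Fin t →₀ ℕ) → MvPolynomial (Fin t) B) (I : Ideal (MvPolynomial (Fin t) B))
    (h : ∀ d, monomial d 1 - rem d ∈ I) (f : MvPolynomial (M × Fin t) B) :
    f - NN rem f ∈ ⨆ i : M, I.map (rename (R := B) (fun a => (i, a))) := by
  classical
  induction f using MvPolynomial.induction_on' with
  | monomial s a =>
    have h1 : (monomial s a : MvPolynomial (M × Fin t) B) = a • monomial s 1 := by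
      rw [smul_monomial, smul_eq_mul, mul_one]
    rw [NN_monomial, h1, ← smul_sub, smul_eq_C_mul]
    refine Ideal.mul_mem_left _ _ ?_
    rw [monomial_blk, ← Ideal.Quotient.eq, map_prod, map_prod]
    refine Finset.prod_congr rfl fun i _ => ?_
    rw [Ideal.Quotient.eq, ← map_sub]
    exact Ideal.mem_iSup_of_mem i (Ideal.mem_map_of_mem _ (h _))
  | add p q hp hq =>
    rw [map_add, add_sub_add_comm]
    exact add_mem hp hq

lemma NN_map {B' : Type} [CommRing B'] (φ : B →+* B') (rem : (Fin t →₀ ℕ) → MvPolynomial (Fin t) B)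
    (f : MvPolynomial (M × Fin t) B) :
    map φ (NN rem f) = NN (fun d => map φ (rem d)) (map φ f) := by
  induction f using MvPolynomial.induction_on' with
  | monomial s a =>
    rw [NN_monomial, map_monomial, NN_monomial, smul_eq_C_mul, map_mul, map_C, smul_eq_C_mul]
    simp only [map_prod, map_rename]
  | add p q hp hq => simp only [map_add, hp, hq]

lemma NN_mul (rem : (Fin t →₀ ℕ) → MvPolynomial (Fin t) B) [DecidableEq M] (i : M)
    (s : M × Fin t →₀ ℕ) (b : B) (g : MvPolynomial (Fin t) B) :
    NN rem (rename (fun a => (i, a)) g * monomial s b) =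
      b • (rename (fun a => (i, a)) (N1 rem (g * monomial (Finsupp.curry s i) 1)) *
        ∏ j ∈ Finset.univ.erase i, rename (fun a => (j, a)) (rem (Finsupp.curry s j))) := by
  induction g using MvPolynomial.induction_on' with
  | monomial d a =>
    rw [rename_monomial, monomial_mul, monomial_mul, NN_monomial, N1_monomial,
      ← Finset.mul_prod_erase _ _ (Finset.mem_univ i), mul_one, map_smul, smul_mul_assoc, smul_smul,
      mul_comm a b]
    congr 2
    · congr 2
      ext c
      simp [Finsupp.curry_apply, mapDomain_pair]
    · refine Finset.prod_congr rfl fun j hj => ?_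
      congr 2
      ext c
      simp [Finsupp.curry_apply, mapDomain_pair, Finset.ne_of_mem_erase hj]
  | add p q hp hq => simp only [map_add, add_mul, hp, hq, smul_add]

lemma N1_congr (rem : (Fin t →₀ ℕ) → MvPolynomial (Fin t) B) (I : Ideal (MvPolynomial (Fin t) B))
    (h : ∀ d, monomial d 1 - rem d ∈ I) (f : MvPolynomial (Fin t) B) : f - N1 rem f ∈ I := by
  induction f using MvPolynomial.induction_on' with
  | monomial s a =>
    have h1 : (monomial s a : MvPolynomial (Fin t) B) = a • monomial s 1 := by
      rw [smul_monomial, smul_eq_mul, mul_one]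
    rw [N1_monomial, h1, ← smul_sub, smul_eq_C_mul]
    exact Ideal.mul_mem_left _ _ (h _)
  | add p q hp hq =>
    rw [map_add, add_sub_add_comm]
    exact add_mem hp hq

lemma N1_coeff (rem : (Fin t →₀ ℕ) → MvPolynomial (Fin t) B) (e : Fin t →₀ ℕ)
    (h : ∀ d, coeff e (rem d) = 0) (f : MvPolynomial (Fin t) B) : coeff e (N1 rem f) = 0 := by
  induction f using MvPolynomial.induction_on' with
  | monomial s a => rw [N1_monomial, coeff_smul, h, smul_zero]
  | add p q hp hq => rw [map_add, coeff_add, hp, hq, add_zero]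

open MonomialOrder in
lemma flat {κ ι : Type} [Field κ] (φ : B →+* κ) (hφ : Function.Injective φ)
    (IA : Ideal (MvPolynomial (Fin t) B)) (Ik : Ideal (MvPolynomial (Fin t) κ))
    (hle : ∀ f ∈ IA, map φ f ∈ Ik) (G : ι → MvPolynomial (Fin t) B)
    (hGu : ∀ i, IsUnit ((lex (σ := Fin t)).leadingCoeff (G i))) (hG : ∀ i, G i ∈ IA)
    (hlm : ∀ f ∈ Ik, f ≠ 0 → ∃ i, lex.degree (G i) ≤ lex.degree f)
    (f : MvPolynomial (M × Fin t) B)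
    (hf : map φ f ∈ ⨆ i : M, Ik.map (rename (R := κ) (fun a => (i, a)))) :
    f ∈ ⨆ i : M, IA.map (rename (R := B) (fun a => (i, a))) := by
  classical
  have hrem : ∀ d : Fin t →₀ ℕ, ∃ r : MvPolynomial (Fin t) B, monomial d 1 - r ∈ IA ∧
      ∀ i, ∀ c, lex.degree (G i) ≤ c → coeff c r = 0 := by
    intro d
    obtain ⟨g, r, h1, -, h2⟩ := lex.div hGu (monomial d 1)
    refine ⟨r, ?_, fun i c hc => ?_⟩
    · rw [h1, add_sub_cancel_right, Finsupp.linearCombination_apply]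
      exact Ideal.sum_mem _ fun i _ => Ideal.mul_mem_left _ _ (hG i)
    · by_contra h
      exact h2 c (mem_support_iff.2 h) i hc
  choose rem hr1 hr2 using hrem
  have hk : ∀ g ∈ Ik, N1 (fun d => map φ (rem d)) g = 0 := by
    intro g hg
    by_contra hne
    have hm : N1 (fun d => map φ (rem d)) g ∈ Ik := by
      have := N1_congr (fun d => map φ (rem d)) Ik (fun d => by
        have := hle _ (hr1 d)
        simpa using this) g
      have h2 := Ik.sub_mem hg this
      rwa [sub_sub_cancel] at h2
    obtain ⟨i, hi⟩ := hlm _ hm hne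
    have h0 := N1_coeff (fun d => map φ (rem d)) _
      (fun d => by rw [coeff_map, hr2 d i _ hi, map_zero]) g
    exact (lex.leadingCoeff_ne_zero_iff.2 hne) h0
  have hz : ∀ x ∈ ⨆ i : M, Ik.map (rename (R := κ) (fun a => (i, a))),
      ∀ y, NN (fun d => map φ (rem d)) (x * y) = 0 := by
    intro x hx
    induction hx using Submodule.iSup_induction' with
    | mem i x hx =>
      induction hx using Submodule.span_induction with
      | mem x hx =>
        obtain ⟨g, hg, rfl⟩ := hx
        intro y
        induction y using MvPolynomial.induction_on' with
        | monomial s b =>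
          have := NN_mul (fun d => map φ (rem d)) i s b g
          rw [hk _ (Ideal.mul_mem_right _ _ hg)] at this
          simpa using this
        | add p q hp hq => rw [mul_add, map_add, hp, hq, add_zero]
      | zero => simp
      | add x y _ _ hx hy => intro z; rw [add_mul, map_add, hx, hy, add_zero]
      | smul a x _ hx => intro z; rw [smul_eq_mul, mul_comm a, mul_assoc]; exact hx _
    | zero => simp
    | add x y _ _ hx hy => intro z; rw [add_mul, map_add, hx, hy, add_zero]
  have h0 : NN rem f = 0 := by
    apply map_injective φ hφ
    rw [NN_map, ← mul_one (map φ f), hz _ hf, map_zero]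
  have := NN_congr rem IA hr1 f
  rwa [h0, sub_zero] at this

end Flat

section LMs
open MonomialOrder
variable {t : ℕ} {L : Type} [Field L]

def LM (I : Ideal (MvPolynomial (Fin t) L)) : Set (Fin t →₀ ℕ) :=
  {d | ∃ f ∈ I, f ≠ 0 ∧ lex.degree f = d}

lemma LM_upper (I : Ideal (MvPolynomial (Fin t) L)) : IsUpperSet (LM I) := by
  rintro d e hde ⟨f, hf, hf0, rfl⟩
  have h1 : (monomial (e - lex.degree f) (1 : L)) ≠ 0 := by simp
  refine ⟨monomial (e - lex.degree f) 1 * f, Ideal.mul_mem_left _ _ hf, mul_ne_zero h1 hf0, ?_⟩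
  rw [degree_mul h1 hf0]
  classical
  rw [degree_monomial, if_neg one_ne_zero]
  exact tsub_add_cancel_of_le hde

lemma exists_max_upper {ι : Type*} [Nonempty ι] (D : ι → Set (Fin t →₀ ℕ))
    (hD : ∀ i, IsUpperSet (D i)) : ∃ i, ∀ j, D i ⊆ D j → D j ⊆ D i := by
  have wf : WellFounded (fun i j : ι => D j ⊂ D i) := by
    rw [wellFounded_iff_isEmpty_descending_chain]
    refine ⟨fun ⟨u, hu⟩ => ?_⟩
    have hmono : Monotone fun n => D (u n) := monotone_nat_of_le_succ fun n => (hu n).1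
    choose d hd hd2 using fun n => Set.exists_of_ssubset (hu n)
    obtain ⟨a, b, hab, hle⟩ := (wellQuasiOrdered_le (α := Fin t →₀ ℕ)) d
    exact hd2 b (hmono (Nat.succ_le_of_lt hab) (hD _ hle (hd a)))
  obtain ⟨i, -, hi⟩ := wf.has_min Set.univ Set.univ_nonempty
  refine ⟨i, fun j hij => ?_⟩
  by_contra h
  exact hi j trivial ⟨hij, h⟩

lemma LM_basis (I : Ideal (MvPolynomial (Fin t) L)) :
    ∃ (n : ℕ) (G : Fin n → MvPolynomial (Fin t) L), (∀ i, G i ∈ I ∧ G i ≠ 0) ∧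
      ∀ f ∈ I, f ≠ 0 → ∃ i, lex.degree (G i) ≤ lex.degree f := by
  have hanti : IsAntichain (· ≤ ·) {d | Minimal (· ∈ LM I) d} := setOfPred_minimal_antichain _
  have hfin := WellQuasiOrderedLE.finite_of_isAntichain hanti
  obtain ⟨n, e⟩ := finite_iff_exists_equiv_fin.1 hfin
  obtain ⟨e⟩ := e
  choose g hg using fun i : Fin n => (e.symm i).2.prop
  refine ⟨n, g, fun i => ⟨(hg i).1, (hg i).2.1⟩, fun f hf hf0 => ?_⟩
  obtain ⟨m, hm, hmin⟩ := exists_minimal_le_of_wellFoundedLT (· ∈ LM I) (lex.degree f)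
    ⟨f, hf, hf0, rfl⟩
  refine ⟨e ⟨m, hmin⟩, ?_⟩
  rw [(hg _).2.2]
  simpa using hm

lemma degree_map {L' : Type} [Field L'] (φ : L →+* L') (f : MvPolynomial (Fin t) L) :
    lex.degree (map φ f) = lex.degree f := by
  unfold MonomialOrder.degree
  rw [support_map_of_injective _ φ.injective]

end LMs

section Gp
variable {K : Type} [Field K] {r : ℕ} {S M M' : Type}

noncomputable def evs {σ L B : Type} [CommRing L] [Algebra K L] [CommRing B] [Algebra K B]
    (φ : L →ₐ[K] B) (x : σ → B) : MvPolynomial σ L →ₐ[K] B :=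
  { eval₂Hom (φ : L →+* B) x with
    commutes' := fun a => by
      simp [MvPolynomial.algebraMap_apply] }

lemma evs_C {σ L B : Type} [CommRing L] [Algebra K L] [CommRing B] [Algebra K B]
    (φ : L →ₐ[K] B) (x : σ → B) (a : L) : evs φ x (C a) = φ a := by
  change eval₂Hom (φ : L →+* B) x (C a) = _
  simp

lemma evs_X {σ L B : Type} [CommRing L] [Algebra K L] [CommRing B] [Algebra K B]
    (φ : L →ₐ[K] B) (x : σ → B) (a : σ) : evs φ x (X a) = x a := by
  change eval₂Hom (φ : L →+* B) x (X a) = _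
  simp

noncomputable def gp {L : Type} [CommRing L] [Algebra K L] (y : S → Fin (r + r) → L) :
    RR K (S ⊕ M) →ₐ[K] MvPolynomial (M × Fin (r + r)) L :=
  ev (Sum.elim (fun s a => C (y s a)) (fun i a => X (i, a)))

noncomputable def gp1 {L : Type} [CommRing L] [Algebra K L] (y : S → Fin (r + r) → L) :
    RR K (S ⊕ Unit) →ₐ[K] MvPolynomial (Fin (r + r)) L :=
  ev (Sum.elim (fun s a => C (y s a)) (fun _ a => X a))

variable {L B : Type} [CommRing L] [Algebra K L] [CommRing B] [Algebra K B]

lemma sum_elim_ev (u : S → Fin (r + r) → L) (v : M → Fin (r + r) → L) (φ : L → B) :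
    (fun i a => φ (Sum.elim u v i a)) =
      Sum.elim (fun s a => φ (u s a)) (fun i a => φ (v i a)) := by
  funext i; rcases i with i | i <;> rfl

lemma evs_gp (φ : L →ₐ[K] B) (x : M × Fin (r + r) → B) (y : S → Fin (r + r) → L)
    (f : RR K (S ⊕ M)) : evs φ x (gp y f) =
      ev (Sum.elim (fun s a => φ (y s a)) (fun i a => x (i, a))) f := by
  rw [gp, map_ev, sum_elim_ev]
  simp only [evs_C, evs_X]

lemma evs_gp1 (φ : L →ₐ[K] B) (x : Fin (r + r) → B) (y : S → Fin (r + r) → L)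
    (f : RR K (S ⊕ Unit)) : evs φ x (gp1 y f) =
      ev (Sum.elim (fun s a => φ (y s a)) (fun _ a => x a)) f := by
  rw [gp1, map_ev, sum_elim_ev]
  simp only [evs_C, evs_X]

lemma map_gp (φ : L →ₐ[K] B) (y : S → Fin (r + r) → L) (f : RR K (S ⊕ M)) :
    map (φ : L →+* B) (gp y f) = gp (fun s a => φ (y s a)) f := by
  change mapAlgHom φ (gp y f) = _
  rw [gp, map_ev, sum_elim_ev, gp]
  have h1 : ∀ c, mapAlgHom φ (C c : MvPolynomial (M × Fin (r + r)) L) = C (φ c) :=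
    fun c => map_C (φ : L →+* B) c
  have h2 : ∀ c, mapAlgHom φ (X c : MvPolynomial (M × Fin (r + r)) L) = X c :=
    fun c => map_X (φ : L →+* B) c
  simp only [h1, h2]

lemma map_gp1 (φ : L →ₐ[K] B) (y : S → Fin (r + r) → L) (f : RR K (S ⊕ Unit)) :
    map (φ : L →+* B) (gp1 y f) = gp1 (fun s a => φ (y s a)) f := by
  change mapAlgHom φ (gp1 y f) = _
  rw [gp1, map_ev, sum_elim_ev, gp1]
  have h1 : ∀ c, mapAlgHom φ (C c : MvPolynomial (Fin (r + r)) L) = C (φ c) :=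
    fun c => map_C (φ : L →+* B) c
  have h2 : ∀ c, mapAlgHom φ (X c : MvPolynomial (Fin (r + r)) L) = X c :=
    fun c => map_X (φ : L →+* B) c
  simp only [h1, h2]

lemma rename_gp (e : M → M') (y : S → Fin (r + r) → L) (f : RR K (S ⊕ M)) :
    gp y (ren (Sum.map id e) f) = rename (Prod.map e id) (gp y f) := by
  change _ = (rename (R := L) (Prod.map e id)).restrictScalars K (gp y f)
  rw [gp, gp, ev_ren, map_ev, sum_elim_ev, Sum.elim_comp_map]
  simp only [AlgHom.restrictScalars_apply, rename_C, rename_X]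
  rfl

lemma rename_gp1 (i : M) (y : S → Fin (r + r) → L) (f : RR K (S ⊕ Unit)) :
    gp y (ren (Sum.map id (fun _ => i)) f) = rename (fun a => (i, a)) (gp1 y f) := by
  change _ = (rename (R := L) (fun a => (i, a))).restrictScalars K (gp1 y f)
  rw [gp, gp1, ev_ren, map_ev, sum_elim_ev, Sum.elim_comp_map]
  simp only [AlgHom.restrictScalars_apply, rename_C, rename_X]
  rfl

lemma gp_inl (y : S → Fin (r + r) → L) (f : RR K S) :
    gp (M := M) y (ren Sum.inl f) = C (ev y f) := by
  change _ = (Algebra.ofId L (MvPolynomial (M × Fin (r + r)) L)).restrictScalars K (ev y f)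
  rw [gp, ev_ren, map_ev]
  rfl

lemma exists_gen {r : ℕ} {α : Type} (ρ γ : Fin r → α) (P : Ideal (RR K α)) (hP : P.IsPrime)
    (hmin : ∀ ρ' γ' : Fin (r + 1) → α, minor ρ' γ' ∈ P) (hm : minor ρ γ ∉ P) :
    ∃ (κ : Type) (_ : Field κ) (_ : Algebra K κ) (y : α → Fin (r + r) → κ),
      (∀ a b, y (γ a) (Fin.natAdd r b) = if a = b then 1 else 0) ∧
      (∀ f, ev (K := K) y f = 0 ↔ f ∈ P) ∧
      (∀ x : κ, ∃ a b, b ∉ P ∧ x * ev (K := K) y b = ev (K := K) y a) ∧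
      (∀ (L : Type) [Field L] [Algebra K L] (g : RR K α →ₐ[K] L), (∀ f, g f = 0 ↔ f ∈ P) →
        ∃ φ : κ →ₐ[K] L, ∀ f, φ (ev y f) = g f) ∧
      (∀ h ∉ P, ∃ (A : Type) (_ : CommRing A) (_ : Algebra K A) (j : A →ₐ[K] κ),
        Function.Injective j ∧ (∀ (x : κ) a (m : ℕ), x * ev (K := K) y h ^ m = ev (K := K) y a →
          x ∈ Set.range j) ∧ 
        (∀ (L : Type) [Field L] [Algebra K L] (g : RR K α →ₐ[K] L), (∀ f ∈ P, g f = 0) → g h ≠ 0 →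
          ∃ ψ : A →ₐ[K] L, ∀ f a, j a = ev y f → ψ a = g f)) := by
  let Q := RR K α ⧸ P
  have : IsDomain Q := Ideal.Quotient.isDomain P
  let κ := FractionRing Q
  let mk : RR K α →ₐ[K] κ := (IsScalarTower.toAlgHom K Q κ).comp (Ideal.Quotient.mkₐ K P)
  have hinj : Function.Injective (algebraMap Q κ) := IsFractionRing.injective Q κ
  have hmk : ∀ f, mk f = 0 ↔ f ∈ P := fun f => by
    rw [← Ideal.Quotient.eq_zero_iff_mem]
    exact map_eq_zero_iff (algebraMap Q κ) hinj
  have hdet : ∀ {n : ℕ} (ρ γ : Fin n → α), Matrix.det (Matrix.of fun a b => mk (X (ρ a, γ b)))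
      = mk (minor ρ γ) := by
    intro n ρ γ
    rw [minor, AlgHom.map_det]
    rfl
  have hne : Matrix.det (Matrix.of fun a b => mk (X (ρ a, γ b))) ≠ 0 := by
    rw [hdet]; exact fun h => hm ((hmk _).1 h)
  obtain ⟨y, hy⟩ := Gz_exists ρ γ (fun i j => mk (X (i, j))) (isUnit_iff_ne_zero.2 hne)
  have hmat := Gz_eq ρ γ _ hne hy (fun ρ' γ' => by rw [hdet]; exact (hmk _).2 (hmin _ _))
  have hev : ∀ f, ev y f = mk f := by
    have : ev y = mk := by
      ext p
      rw [ev_X, hmat]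
    intro f; rw [this]
  refine ⟨κ, inferInstance, inferInstance, y, Gz_norm ρ γ _ hne hy, fun f => by rw [hev, hmk], ?_, ?_, ?_⟩
  · intro x
    obtain ⟨⟨a, b⟩, hx⟩ := IsLocalization.surj (nonZeroDivisors Q) x
    obtain ⟨a, rfl⟩ := Ideal.Quotient.mk_surjective a
    obtain ⟨b', hb'⟩ := Ideal.Quotient.mk_surjective b.1
    refine ⟨a, b', ?_, ?_⟩
    · rw [← Ideal.Quotient.eq_zero_iff_mem, hb']
      exact nonZeroDivisors.ne_zero b.2
    · rw [hev, hev]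
      change x * algebraMap Q κ (Ideal.Quotient.mk P b') = _
      rw [hb']; exact hx
  · intro L _ _ g hg
    let g' : Q →ₐ[K] L := Ideal.Quotient.liftₐ P g (fun f hf => (hg f).2 hf)
    have hg' : Function.Injective g' := by
      rw [injective_iff_map_eq_zero]
      intro x hx
      obtain ⟨f, rfl⟩ := Ideal.Quotient.mk_surjective x
      exact Ideal.Quotient.eq_zero_iff_mem.2 ((hg f).1 hx)
    refine ⟨IsFractionRing.liftAlgHom hg', fun f => ?_⟩
    rw [hev]
    exact IsFractionRing.lift_algebraMap hg' _
  · intro h hh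
    let hq : Q := Ideal.Quotient.mk P h
    have hq0 : hq ≠ 0 := fun h0 => hh (Ideal.Quotient.eq_zero_iff_mem.1 h0)
    let A := Localization.Away hq
    have hle : Submonoid.powers hq ≤ nonZeroDivisors Q :=
      powers_le_nonZeroDivisors_of_noZeroDivisors hq0
    have hu : ∀ (L : Type) [Field L] [Algebra K L] (g : Q →ₐ[K] L), g hq ≠ 0 →
        ∃ j : A →ₐ[K] L, ∀ x, j (algebraMap Q A x) = g x := by
      intro L _ _ g hg
      exact ⟨IsLocalization.liftAlgHom (M := Submonoid.powers hq) (S := A) (f := g) (by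
        rintro ⟨_, m, rfl⟩
        exact isUnit_iff_ne_zero.2 (by simpa using pow_ne_zero m hg)), fun x => by simp⟩
    obtain ⟨j, hj⟩ := hu κ (IsScalarTower.toAlgHom K Q κ) (fun h0 => hq0 (hinj (by simpa using h0)))
    have hsurj : ∀ a : A, ∃ x m, a * algebraMap Q A hq ^ m = algebraMap Q A x := by
      intro a
      obtain ⟨⟨x, ⟨_, m, rfl⟩⟩, hx⟩ := IsLocalization.surj (Submonoid.powers hq) a
      exact ⟨x, m, by simpa using hx⟩
    have hunit : IsUnit (algebraMap Q A hq) := IsLocalization.Away.algebraMap_isUnit hq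
    have hjinj : Function.Injective j := by
      rw [injective_iff_map_eq_zero]
      intro a ha
      obtain ⟨x, m, hx⟩ := hsurj a
      have h1 := congrArg j hx
      rw [map_mul, ha, zero_mul, hj] at h1
      have : x = 0 := hinj (by rw [map_zero]; exact h1.symm)
      rw [this, map_zero] at hx
      exact (hunit.pow m).mul_left_eq_zero.1 hx
    refine ⟨A, inferInstance, inferInstance, j, hjinj, ?_, ?_⟩
    · intro x a m hx
      rw [hev, hev] at hx
      obtain ⟨u, hu⟩ := hunit.pow m
      refine ⟨algebraMap Q A (Ideal.Quotient.mk P a) * ↑u⁻¹, ?_⟩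
      have h1 : mk h ^ m ≠ 0 := pow_ne_zero _ (fun h0 => hh ((hmk h).1 h0))
      apply mul_right_cancel₀ h1
      rw [hx]
      have h2 : mk h ^ m = j u := by
        rw [hu, map_pow, hj]; rfl
      rw [h2, ← map_mul, mul_assoc, Units.inv_mul, mul_one, hj]
      rfl
    · intro L _ _ g hg hgh
      obtain ⟨ψ, hψ⟩ := hu L (Ideal.Quotient.liftₐ P g hg) hgh
      refine ⟨ψ, fun f a ha => ?_⟩
      have h1 : a = algebraMap Q A (Ideal.Quotient.mk P f) := by
        apply hjinj
        rw [ha, hev, hj]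
        rfl
      rw [h1, hψ]
      rfl

end Gp

section LMs
open MonomialOrder
variable {t : ℕ}

lemma degree_map_inj {B L' : Type} [CommRing B] [CommRing L'] (φ : B →+* L')
    (hφ : Function.Injective φ) (f : MvPolynomial (Fin t) B) :
    lex.degree (map φ f) = lex.degree f := by
  unfold MonomialOrder.degree
  rw [support_map_of_injective _ hφ]

lemma lm_ext {κ L : Type} [Field κ] [Field L] [Algebra κ L] (I : Ideal (MvPolynomial (Fin t) κ))
    (f : MvPolynomial (Fin t) L) (hf : f ∈ I.map (map (algebraMap κ L))) (hf0 : f ≠ 0) :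
    ∃ g ∈ I, g ≠ 0 ∧ lex.degree g = lex.degree f := by
  classical
  obtain ⟨l, hl⟩ : ∃ l : L →ₗ[κ] κ, l (lex.leadingCoeff f) ≠ 0 := by
    have h0 : lex.leadingCoeff f ≠ 0 := leadingCoeff_ne_zero_iff.2 hf0
    by_contra! h
    exact h0 ((Module.forall_dual_apply_eq_zero_iff κ _).1 h)
  let Λ : MvPolynomial (Fin t) L → MvPolynomial (Fin t) κ := fun f =>
    ∑ d ∈ f.support, monomial d (l (coeff d f))
  have hc : ∀ f d, coeff d (Λ f) = l (coeff d f) := by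
    intro f d
    simp only [Λ, coeff_sum, coeff_monomial]
    simp only [Finset.sum_ite_eq', mem_support_iff]
    split_ifs with h
    · rfl
    · push Not at h
      rw [h, map_zero]
  have hadd : ∀ f g, Λ (f + g) = Λ f + Λ g := fun f g => by
    ext d; simp [hc]
  have hmul : ∀ f g, Λ (f * map (algebraMap κ L) g) = Λ f * g := fun f g => by
    ext d
    rw [hc, coeff_mul, coeff_mul, map_sum]
    refine Finset.sum_congr rfl fun x _ => ?_
    rw [coeff_map, hc, mul_comm, ← Algebra.smul_def, map_smul, smul_eq_mul, mul_comm]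
  have hmem : ∀ f ∈ I.map (map (algebraMap κ L)), Λ f ∈ I := by
    intro f hf
    have hz : Λ 0 = 0 := by ext d; simp [hc]
    refine Submodule.span_induction (p := fun f _ => ∀ a, Λ (a * f) ∈ I) ?_ ?_ ?_ ?_ hf 1 |> fun h => by simpa using h
    · rintro _ ⟨g, hg, rfl⟩ a
      exact (hmul a g).symm ▸ Ideal.mul_mem_left _ _ hg
    · intro a; simp [hz]
    · intro x y _ _ hx hy a
      rw [mul_add, hadd]; exact add_mem (hx a) (hy a)
    · intro b x _ hx a
      rw [smul_eq_mul, ← mul_assoc]; exact hx _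
  have hlc : coeff (lex.degree f) (Λ f) ≠ 0 := by rw [hc]; exact hl
  refine ⟨Λ f, hmem f hf, fun h => hlc (by rw [h]; simp), ?_⟩
  apply lex.toSyn.injective
  apply le_antisymm
  · rw [degree_le_iff]
    intro b hb
    apply le_degree
    rw [mem_support_iff] at hb ⊢
    rw [hc] at hb
    exact fun h => hb (by rw [h, map_zero])
  · apply le_degree
    rw [mem_support_iff]; exact hlc
end LMs

section Loc
variable {K : Type} [Field K] {k r : ℕ}

structure Fam (F : FI K k) (r : ℕ) where
  S : Type
  fin : Finite S
  ρ : Fin r → S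
  γ : Fin r → S
  p : Ideal (RR K S)
  hp : p ∈ F.minP S
  hm : minor ρ γ ∉ p
  κ : Type
  fld : Field κ
  alg : Algebra K κ
  y : S → Fin (r + r) → κ
  norm : ∀ a b, y (γ a) (Fin.natAdd r b) = if a = b then 1 else 0
  k1 : ∀ f, ev (K := K) y f = 0 ↔ f ∈ p
  k2 : ∀ x : κ, ∃ a b, b ∉ p ∧ x * ev (K := K) y b = ev (K := K) y a
  k3 : ∀ (L : Type) [Field L] [Algebra K L] (g : RR K S →ₐ[K] L), (∀ f, g f = 0 ↔ f ∈ p) →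
        ∃ φ : κ →ₐ[K] L, ∀ f, φ (ev y f) = g f
  k4 : ∀ h ∉ p, ∃ (A : Type) (_ : CommRing A) (_ : Algebra K A) (j : A →ₐ[K] κ),
        Function.Injective j ∧ (∀ (x : κ) a (m : ℕ), x * ev (K := K) y h ^ m = ev (K := K) y a →
          x ∈ Set.range j) ∧
        (∀ (L : Type) [Field L] [Algebra K L] (g : RR K S →ₐ[K] L), (∀ f ∈ p, g f = 0) → g h ≠ 0 →
          ∃ ψ : A →ₐ[K] L, ∀ f a, j a = ev y f → ψ a = g f)

attribute [instance] Fam.fin Fam.fld Fam.alg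

lemma ev_minor {S : Type} {L : Type} [CommRing L] [Algebra K L] (w : S → Fin (r + r) → L)
    {n : ℕ} (ρ γ : Fin n → S) :
    Matrix.det (Matrix.of fun a b => mat w (ρ a) (γ b)) = ev (K := K) w (minor ρ γ) := by
  rw [minor, AlgHom.map_det]
  congr 1
  ext a b
  exact (ev_X w (ρ a, γ b)).symm

namespace Fam
variable {F : FI K k} (d : Fam F r)

lemma hom_y {L : Type} [Field L] [Algebra K L] (w : d.S → Fin (r + r) → L)
    (hn : ∀ a b, w (d.γ a) (Fin.natAdd r b) = if a = b then 1 else 0)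
    (hw : ∀ f, ev (K := K) w f = 0 ↔ f ∈ d.p) : ∃ φ : d.κ →ₐ[K] L, ∀ s a, φ (d.y s a) = w s a := by
  obtain ⟨φ, hφ⟩ := d.k3 L (ev w) hw
  refine ⟨φ, fun s a => ?_⟩
  have h1 := Gz_map (φ : d.κ →+* L) (Gz_mat d.ρ d.γ d.y d.norm)
  have h2 : (fun i j => (φ : d.κ →+* L) (mat d.y i j)) = mat w := by
    funext i j
    have := hφ (X (i, j))
    rwa [ev_X, ev_X] at this
  rw [h2] at h1
  have h3 := Gz_unique d.ρ d.γ (mat w) (by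
    rw [ev_minor (K := K)]; exact fun h => d.hm ((hw _).1 h)) h1 (Gz_mat d.ρ d.γ w hn)
  exact congrFun (congrFun h3 s) a

abbrev Fb := AlgebraicClosure d.κ
noncomputable instance : Algebra K d.Fb := inferInstance

noncomputable def yb : d.S → Fin (r + r) → d.Fb := fun s a => algebraMap d.κ d.Fb (d.y s a)

noncomputable def Iy : Ideal (MvPolynomial (Fin (r + r)) d.κ) :=
  (F.I (d.S ⊕ Unit)).map (gp1 (K := K) d.y)

noncomputable def IF : Ideal (MvPolynomial (Fin (r + r)) d.Fb) :=
  (F.I (d.S ⊕ Unit)).map (gp1 (K := K) d.yb)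

def Cx := {c : Ideal (MvPolynomial (Fin (r + r)) d.Fb) // c ∈ d.IF.minimalPrimes}

instance : Finite d.Cx := (Ideal.finite_minimalPrimes_of_isNoetherianRing _ d.IF).to_subtype

noncomputable def PP (M : Type) (c : M → d.Cx) : Ideal (RR K (d.S ⊕ M)) :=
  (qq (fun i => (c i).1)).comap (gp (K := K) d.yb)

lemma mem_PP {M : Type} {c : M → d.Cx} {f : RR K (d.S ⊕ M)} :
    f ∈ d.PP M c ↔ gp (K := K) d.yb f ∈ qq (fun i => (c i).1) := Iff.rfl

lemma cprime {M : Type} (c : M → d.Cx) (i : M) : ((c i).1).IsPrime := (c i).2.1.1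

lemma PP_prime (M : Type) [Finite M] (c : M → d.Cx) : (d.PP M c).IsPrime := by
  have := qq_prime (fun i => (c i).1) (d.cprime c)
  exact Ideal.comap_isPrime _ _

lemma PP_pull {M M' : Type} [Finite M] [Finite M'] (e : M → M') (he : Function.Injective e)
    (c : M' → d.Cx) : pull (Sum.map id e) (d.PP M' c) = d.PP M (c ∘ e) := by
  ext f
  rw [mem_pull, mem_PP, mem_PP, rename_gp, qq_comap _ (d.cprime c) e he]
  rfl

lemma ev_yb (f : RR K d.S) : ev d.yb f = algebraMap d.κ d.Fb (ev d.y f) :=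
  (map_ev (IsScalarTower.toAlgHom K d.κ d.Fb) d.y f).symm

lemma ev_yb_zero (f : RR K d.S) : ev d.yb f = 0 ↔ f ∈ d.p := by
  rw [ev_yb, map_eq_zero, d.k1]

lemma map_gp_yb {M : Type} (f : RR K (d.S ⊕ M)) :
    map (algebraMap d.κ d.Fb) (gp d.y f) = gp d.yb f :=
  map_gp (IsScalarTower.toAlgHom K d.κ d.Fb) d.y f

lemma map_gp1_yb (f : RR K (d.S ⊕ Unit)) :
    map (algebraMap d.κ d.Fb) (gp1 d.y f) = gp1 d.yb f :=
  map_gp1 (IsScalarTower.toAlgHom K d.κ d.Fb) d.y f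

lemma IF_le : d.IF ≤ d.Iy.map (map (algebraMap d.κ d.Fb)) := by
  refine Ideal.map_le_iff_le_comap.2 fun f hf => ?_
  change gp1 d.yb f ∈ d.Iy.map (map (algebraMap d.κ d.Fb))
  rw [← map_gp1_yb]
  exact Ideal.mem_map_of_mem _ (Ideal.mem_map_of_mem _ hf)

lemma PP_inl (M : Type) [Finite M] (c : M → d.Cx) (f : RR K d.S) :
    ren Sum.inl f ∈ d.PP M c ↔ f ∈ d.p := by
  rw [mem_PP, gp_inl, ← d.ev_yb_zero]
  constructor
  · intro h
    by_contra h0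
    have := (qq_prime (fun i => (c i).1) (d.cprime c)).ne_top
    exact this (Ideal.eq_top_of_isUnit_mem _ h ((isUnit_iff_ne_zero.2 h0).map C))
  · intro h; rw [h, map_zero]; exact zero_mem _

/-- localization -/
def Lc {M : Type} (q : MvPolynomial (M × Fin (r + r)) d.κ) : Prop :=
  ∃ b ∉ d.p, ∃ f : RR K (d.S ⊕ M), gp d.y f = C (ev d.y b) * q

lemma Lc_gp {M : Type} (f : RR K (d.S ⊕ M)) : d.Lc (gp d.y f) :=
  ⟨1, (Ideal.ne_top_iff_one _).1 d.hp.1.1.ne_top, f, by simp⟩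

lemma Lc_C {M : Type} (x : d.κ) : d.Lc (C x : MvPolynomial (M × Fin (r + r)) d.κ) := by
  obtain ⟨a, b, hb, h⟩ := d.k2 x
  refine ⟨b, hb, ren Sum.inl a, ?_⟩
  rw [gp_inl, ← C_mul, ← h, mul_comm]

lemma Lc_add {M : Type} {q q' : MvPolynomial (M × Fin (r + r)) d.κ} (h : d.Lc q) (h' : d.Lc q') :
    d.Lc (q + q') := by
  obtain ⟨b, hb, f, hf⟩ := h
  obtain ⟨b', hb', f', hf'⟩ := h'
  refine ⟨b * b', fun h => (d.hp.1.1.mem_or_mem h).elim hb hb',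
    ren Sum.inl b' * f + ren Sum.inl b * f', ?_⟩
  rw [map_add, map_mul, map_mul, gp_inl, gp_inl, hf, hf', map_mul, C_mul]
  ring

lemma Lc_mul {M : Type} {q q' : MvPolynomial (M × Fin (r + r)) d.κ} (h : d.Lc q) (h' : d.Lc q') :
    d.Lc (q * q') := by
  obtain ⟨b, hb, f, hf⟩ := h
  obtain ⟨b', hb', f', hf'⟩ := h'
  refine ⟨b * b', fun h => (d.hp.1.1.mem_or_mem h).elim hb hb', f * f', ?_⟩
  rw [map_mul, hf, hf', map_mul, C_mul]
  ring

lemma Lc_all {M : Type} (q : MvPolynomial (M × Fin (r + r)) d.κ) : d.Lc q := by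
  induction q using MvPolynomial.induction_on with
  | C x => exact d.Lc_C x
  | add p q hp hq => exact d.Lc_add hp hq
  | mul_X p n hp =>
    refine d.Lc_mul hp ?_
    obtain ⟨i, n⟩ := n
    let v : d.S ⊕ M → Fin (r + r) → MvPolynomial (M × Fin (r + r)) d.κ :=
      Sum.elim (fun s a => C (d.y s a)) (fun i a => X (i, a))
    have hX : ∀ s t, gp d.y (X (s, t) : RR K (d.S ⊕ M)) = mat v s t := fun s t => by
      rw [gp, ev_X]
    have hG := Gz_mat (Sum.inl ∘ d.ρ) (Sum.inl ∘ d.γ) v (by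
      intro a b
      change C (d.y (d.γ a) (Fin.natAdd r b)) = _
      rw [d.norm]; split_ifs <;> simp)
    refine Fin.addCases (fun a => ?_) (fun b => ?_) n
    · have := (hG (Sum.inr i)).1 a
      rw [← hX] at this
      change X (i, Fin.castAdd r a) = _ at this
      rw [this]; exact d.Lc_gp _
    · let D : Matrix (Fin r) (Fin r) d.κ := Matrix.of fun a b => mat d.y (d.ρ a) (d.γ b)
      have hD : IsUnit D.det := isUnit_iff_ne_zero.2 (by
        rw [ev_minor (K := K)]; exact fun h => d.hm ((d.k1 _).1 h))
      have h1 : (X (i, Fin.natAdd r b) : MvPolynomial (M × Fin (r + r)) d.κ) =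
          ∑ a, C (D⁻¹ b a) * gp d.y (X (Sum.inl (d.ρ a), Sum.inr i) : RR K (d.S ⊕ M)) := by
        have h2 : ∀ a, gp d.y (X (Sum.inl (d.ρ a), Sum.inr i) : RR K (d.S ⊕ M)) =
            ∑ c, C (D a c) * X (i, Fin.natAdd r c) := by
          intro a
          rw [hX, show mat v (Sum.inl (d.ρ a)) (Sum.inr i) = _ from ((hG (Sum.inr i)).2 a).symm]
          refine Finset.sum_congr rfl fun c _ => ?_
          congr 1
          exact (map_mat C d.y (d.ρ a) (d.γ c)).symm
        simp only [h2, Finset.mul_sum]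
        rw [Finset.sum_comm]
        have h3 : ∀ c, ∑ a, C (D⁻¹ b a) * (C (D a c) *
            (X (i, Fin.natAdd r c) : MvPolynomial (M × Fin (r + r)) d.κ)) =
            C ((D⁻¹ * D) b c) * (X (i, Fin.natAdd r c) : MvPolynomial (M × Fin (r + r)) d.κ) := by
          intro c
          rw [Matrix.mul_apply, map_sum, Finset.sum_mul]
          refine Finset.sum_congr rfl fun a _ => ?_
          rw [C_mul, mul_assoc]
        simp only [h3, Matrix.nonsing_inv_mul _ hD, Matrix.one_apply]
        simp
      rw [h1]
      refine Finset.sum_induction _ d.Lc (fun _ _ => d.Lc_add) ?_ fun a _ => d.Lc_mul (d.Lc_C _) (d.Lc_gp _)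
      simpa using d.Lc_C (M := M) 0

end Fam
end Loc

section Loc2
variable {K : Type} [Field K] {k r : ℕ}

namespace Fam
variable {F : FI K k} (d : Fam F r)

lemma lift_mem (g : MvPolynomial (Fin (r + r)) d.κ) (hg : g ∈ d.Iy) :
    ∃ T : Finset d.κ, ∀ (A : Type) [CommRing A] [Algebra K A] (j : A →ₐ[K] d.κ)
      (yt : d.S → Fin (r + r) → A), (∀ s a, j (yt s a) = d.y s a) → (∀ x ∈ T, x ∈ Set.range j) →
      ∃ G ∈ (F.I (d.S ⊕ Unit)).map (gp1 (K := K) yt), map (j : A →+* d.κ) G = g := by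
  classical
  refine Submodule.span_induction ?_ ?_ ?_ ?_ hg
  · rintro _ ⟨f, hf, rfl⟩
    refine ⟨∅, fun A _ _ j yt hyt _ => ⟨gp1 yt f, Ideal.mem_map_of_mem _ hf, ?_⟩⟩
    rw [map_gp1]
    simp only [hyt]
  · exact ⟨∅, fun A _ _ j yt hyt _ => ⟨0, zero_mem _, map_zero _⟩⟩
  · rintro x y _ _ ⟨T, hT⟩ ⟨T', hT'⟩
    refine ⟨T ∪ T', fun A _ _ j yt hyt h => ?_⟩
    obtain ⟨G, hG, h1⟩ := hT A j yt hyt fun x hx => h x (Finset.mem_union_left _ hx)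
    obtain ⟨G', hG', h1'⟩ := hT' A j yt hyt fun x hx => h x (Finset.mem_union_right _ hx)
    exact ⟨G + G', add_mem hG hG', by rw [map_add, h1, h1']⟩
  · rintro l x _ ⟨T, hT⟩
    refine ⟨T ∪ l.support.image (fun e => coeff e l), fun A _ _ j yt hyt h => ?_⟩
    obtain ⟨G, hG, h1⟩ := hT A j yt hyt fun x hx => h x (Finset.mem_union_left _ hx)
    have : ∀ e ∈ l.support, ∃ a, j a = coeff e l := fun e he =>
      h _ (Finset.mem_union_right _ (Finset.mem_image_of_mem _ he))
    choose! u hu using this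
    refine ⟨(∑ e ∈ l.support, monomial e (u e)) * G, Ideal.mul_mem_left _ _ hG, ?_⟩
    rw [map_mul, h1, map_sum, smul_eq_mul]
    congr 1
    conv_rhs => rw [l.as_sum]
    refine Finset.sum_congr rfl fun e he => ?_
    rw [map_monomial]
    congr 1
    exact hu e he

lemma common_den (T : Finset d.κ) : ∃ b ∉ d.p, ∀ x ∈ T, ∃ a, x * ev (K := K) d.y b = ev (K := K) d.y a := by
  classical
  have hpp := d.hp.1.1
  induction T using Finset.induction_on with
  | empty => exact ⟨1, (Ideal.ne_top_iff_one _).1 hpp.ne_top, by simp⟩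
  | insert x T _ ih =>
    obtain ⟨b, hb, h⟩ := ih
    obtain ⟨a', b', hb', h'⟩ := d.k2 x
    refine ⟨b * b', fun h => (hpp.mem_or_mem h).elim hb hb', fun z hz => ?_⟩
    rcases Finset.mem_insert.1 hz with rfl | hz
    · exact ⟨a' * b, by rw [map_mul, map_mul, ← h']; ring⟩
    · obtain ⟨a, ha⟩ := h z hz
      exact ⟨a * b', by rw [map_mul, map_mul, ← ha]; ring⟩

set_option maxHeartbeats 800000 in
lemma density (hr : ∀ (α : Type) [Finite α] (ρ γ : Fin (r + 1) → α), minor ρ γ ∈ F.I α) :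
    ∃ h ∉ d.p, ∀ (M : Type) [Finite M] (P : Ideal (RR K (d.S ⊕ M))), P.IsPrime →
      F.I (d.S ⊕ M) ≤ P → ren Sum.inl h ∉ P → ∃ c, d.PP M c ≤ P := by
  classical
  have := Fintype.ofFinite d.S
  have hpp := d.hp.1.1
  obtain ⟨n, G, hG, hlm⟩ := LM_basis d.Iy
  choose T hT using fun i => d.lift_mem (G i) (hG i).1
  obtain ⟨b, hb, hbT⟩ := d.common_den ((Finset.univ.biUnion T) ∪
    (Finset.univ.image fun i => (MonomialOrder.lex.leadingCoeff (G i))⁻¹) ∪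
    (Finset.univ.image fun z : d.S × Fin (r + r) => d.y z.1 z.2))
  obtain ⟨sep, hsep, hsep2⟩ : ∃ s ∉ d.p, ∀ q ∈ F.minP d.S, q ≠ d.p → s ∈ q := by
    have hf : (F.minP d.S).Finite := Ideal.finite_minimalPrimes_of_isNoetherianRing _ _
    have h1 : ∀ q ∈ hf.toFinset.erase d.p, ∃ s ∈ q, s ∉ d.p := by
      intro q hq
      rw [Finset.mem_erase, Set.Finite.mem_toFinset] at hq
      by_contra! h
      exact hq.1 (le_antisymm h (d.hp.2 hq.2.1 h))
    choose! s hs hs' using h1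
    refine ⟨∏ q ∈ hf.toFinset.erase d.p, s q, fun h => ?_, fun q hq hne => ?_⟩
    · obtain ⟨q, hq, h⟩ := hpp.prod_mem_iff.1 h
      exact hs' q hq h
    · have : q ∈ hf.toFinset.erase d.p := by simp [hq, hne]
      exact Ideal.mem_of_dvd _ (Finset.dvd_prod_of_mem _ this) (hs q this)
  have hh : minor d.ρ d.γ * sep * b ∉ d.p := fun h =>
    (hpp.mem_or_mem h).elim (fun h => (hpp.mem_or_mem h).elim d.hm hsep) hb
  obtain ⟨A, _, _, j, hj, hj1, hj2⟩ := d.k4 _ hh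
  have hrange : ∀ x a, x * ev (K := K) d.y b = ev (K := K) d.y a → x ∈ Set.range j := by
    intro x a hx
    refine hj1 x (a * (minor d.ρ d.γ * sep)) 1 ?_
    rw [pow_one, map_mul _ _ b, map_mul _ a, ← hx]; ring
  have hrT := fun x hx => let ⟨a, ha⟩ := hbT x hx; hrange x a ha
  have hyt : ∀ s a, ∃ u, j u = d.y s a := fun s a => hrT _
    (Finset.mem_union_right _ (Finset.mem_image_of_mem (fun z : d.S × Fin (r + r) => d.y z.1 z.2)
      (Finset.mem_univ (s, a))))
  choose yt hyt using hyt
  choose Gt hGt hGt2 using fun i => hT i A j yt hyt fun x hx => hrT x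
    (Finset.mem_union_left _ (Finset.mem_union_left _ (Finset.mem_biUnion.2 ⟨i, Finset.mem_univ _, hx⟩)))
  have hdeg : ∀ i, MonomialOrder.lex.degree (Gt i) = MonomialOrder.lex.degree (G i) := fun i => by
    rw [← hGt2 i]; exact (degree_map_inj (j : A →+* d.κ) hj _).symm
  have hGu : ∀ i, IsUnit (MonomialOrder.lex.leadingCoeff (Gt i)) := by
    intro i
    obtain ⟨u, hu⟩ := hrT (MonomialOrder.lex.leadingCoeff (G i))⁻¹ (Finset.mem_union_left _
      (Finset.mem_union_right _ (Finset.mem_image_of_mem _ (Finset.mem_univ i))))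
    refine IsUnit.of_mul_eq_one u (hj ?_)
    have h1 : j (MonomialOrder.lex.leadingCoeff (Gt i)) = MonomialOrder.lex.leadingCoeff (G i) := by
      unfold MonomialOrder.leadingCoeff
      rw [hdeg, ← hGt2 i, coeff_map]; rfl
    rw [map_mul, h1, hu, map_one]
    exact mul_inv_cancel₀ (MonomialOrder.leadingCoeff_ne_zero_iff.2 (hG i).2)
  refine ⟨minor d.ρ d.γ * sep * b, hh, fun M _ P hP hI hhP => ?_⟩
  have := Fintype.ofFinite M
  have hren : ∀ f ∈ d.p, ren Sum.inl f ∈ P := by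
    intro f hf
    have hIS : F.I d.S ≤ pull Sum.inl P := (F.func Sum.inl Sum.inl_injective).trans (pull_mono _ hI)
    have hpr := pull_prime (Sum.inl : d.S → d.S ⊕ M) hP
    obtain ⟨q, hq, hqP⟩ := Ideal.exists_minimalPrimes_le hIS
    by_cases hqp : q = d.p
    · exact hqP (hqp ▸ hf)
    · exfalso
      apply hhP
      rw [map_mul]
      refine Ideal.mul_mem_right _ _ ?_
      rw [map_mul]
      exact Ideal.mul_mem_left _ _ (hqP (hsep2 q hq hqp))
  have hmP : minor (Sum.inl ∘ d.ρ) (Sum.inl ∘ d.γ) ∉ P := by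
    rw [← ren_minor]
    intro h
    apply hhP
    rw [map_mul, map_mul]
    exact Ideal.mul_mem_right _ _ (Ideal.mul_mem_right _ _ h)
  obtain ⟨κ', _, _, w, hw1, hw2, -⟩ := exists_gen _ _ P hP (fun ρ' γ' => hI (hr _ ρ' γ')) hmP
  obtain ⟨ψ, hψ⟩ := hj2 κ' (ev (w ∘ Sum.inl))
    (fun f hf => by rw [← ev_ren, hw2]; exact hren f hf) (by rw [← ev_ren, Ne, hw2]; exact hhP)
  have hψy : (fun s a => ψ (yt s a)) = w ∘ Sum.inl := by
    have hn : ∀ a b, yt (d.γ a) (Fin.natAdd r b) = if a = b then 1 else 0 := fun a b => hj (by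
      rw [hyt, d.norm]; split_ifs <;> simp)
    have h1 := Gz_map (ψ : A →+* κ') (Gz_mat d.ρ d.γ yt hn)
    have h2 : (fun i j => (ψ : A →+* κ') (mat yt i j)) = mat (w ∘ Sum.inl) := by
      funext s t
      have := hψ (X (s, t)) (mat yt s t) (by
        rw [ev_X]
        refine (map_mat (j : A →+* d.κ) yt s t).trans ?_
        congr 1
        funext s a; exact hyt s a)
      rw [ev_X] at this
      exact this
    rw [h2] at h1
    refine Gz_unique d.ρ d.γ (mat (w ∘ Sum.inl)) ?_ h1 (Gz_mat d.ρ d.γ (w ∘ Sum.inl) hw1)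
    rw [ev_minor (K := K), ← ev_ren, Ne, hw2, ren_minor]
    exact hmP
  have := Fintype.ofFinite (M → d.Cx)
  suffices H : (Finset.univ : Finset (M → d.Cx)).inf (d.PP M) ≤ P by
    obtain ⟨c, -, hc⟩ := hP.inf_le'.1 H
    exact ⟨c, hc⟩
  intro f hf
  have hfc : ∀ c, f ∈ d.PP M c := fun c => (Finset.inf_le (f := d.PP M) (Finset.mem_univ c)) hf
  obtain ⟨m, hm⟩ := mem_radical_of_qq d.IF (gp d.yb f) (fun c hc => hfc (fun i => ⟨c i, hc i⟩))
  rw [← map_pow] at hm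
  let φ : A →ₐ[K] d.Fb := (IsScalarTower.toAlgHom K d.κ d.Fb).comp j
  have hφy : (fun s a => φ (yt s a)) = d.yb := by
    funext s a
    change algebraMap d.κ d.Fb (j (yt s a)) = _
    rw [hyt]; rfl
  have hfl := flat (M := M) (φ : A →+* d.Fb) ((algebraMap d.κ d.Fb).injective.comp hj)
    ((F.I (d.S ⊕ Unit)).map (gp1 (K := K) yt)) d.IF (by
      intro g hg
      refine Ideal.mem_comap.1 ((Ideal.map_le_iff_le_comap.2 ?_ :
        (F.I (d.S ⊕ Unit)).map (gp1 (K := K) yt) ≤ d.IF.comap (map (φ : A →+* d.Fb))) hg)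
      intro g hg
      change map (φ : A →+* d.Fb) (gp1 yt g) ∈ d.IF
      rw [map_gp1, hφy]
      exact Ideal.mem_map_of_mem _ hg) Gt hGu hGt (by
      intro g hg hg0
      obtain ⟨g', hg', hg0', hd⟩ := lm_ext d.Iy g (d.IF_le hg) hg0
      obtain ⟨i, hi⟩ := hlm g' hg' hg0'
      exact ⟨i, by rw [hdeg, ← hd]; exact hi⟩) (gp yt (f ^ m)) (by
      rw [map_gp, hφy]; exact hm)
  have hz : ∀ q ∈ ⨆ i : M, ((F.I (d.S ⊕ Unit)).map (gp1 (K := K) yt)).map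
      (rename (R := A) (fun a => (i, a))), evs ψ (fun z => w (Sum.inr z.1) z.2) q = 0 := by
    suffices h : (⨆ i : M, ((F.I (d.S ⊕ Unit)).map (gp1 (K := K) yt)).map
      (rename (R := A) (fun a => (i, a)))) ≤ RingHom.ker (evs ψ (fun z => w (Sum.inr z.1) z.2)) from
      fun q hq => h hq
    refine iSup_le fun i => ?_
    rw [Ideal.map_le_iff_le_comap, Ideal.map_le_iff_le_comap]
    intro g hg
    change evs ψ (fun z => w (Sum.inr z.1) z.2) (rename (fun a => (i, a)) (gp1 yt g)) = 0
    rw [← rename_gp1, evs_gp, hψy, ev_ren]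
    have h1 : (Sum.elim (w ∘ Sum.inl) (fun i a => w (Sum.inr i) a)) = w := by
      funext x; rcases x with x | x <;> rfl
    rw [h1, ← ev_ren, hw2]
    exact hI (F.func _ (Function.Injective.sumMap Function.injective_id (fun _ _ _ => rfl)) hg)
  have h2 := hz _ hfl
  rw [evs_gp, hψy] at h2
  have h1 : (Sum.elim (w ∘ Sum.inl) (fun i a => w (Sum.inr i) a)) = w := by
    funext x; rcases x with x | x <;> rfl
  rw [h1, hw2] at h2
  exact hP.mem_of_pow_mem m h2
end Fam
end Loc2

lemma qq_gal {F M : Type} {t : ℕ} [Field F] (s : F ≃+* F) (c : M → Ideal (MvPolynomial (Fin t) F))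
    (f : MvPolynomial (M × Fin t) F) :
    f ∈ qq (fun i => (c i).comap (map (s : F →+* F))) ↔ map (s : F →+* F) f ∈ qq c := by
  have key : ∀ {σ : Type} (g : MvPolynomial σ F) (x : σ → F),
      aeval (fun a => s (x a)) (map (s : F →+* F) g) = s (aeval x g) := by
    intro σ g x
    induction g using MvPolynomial.induction_on with
    | C a => simp
    | add p q hp hq => simp only [map_add, hp, hq]
    | mul_X p n hp => simp only [map_mul, hp, map_X, aeval_X]
  simp only [qq, mem_vanishingIdeal_iff, Zp, Set.mem_ofPred_eq, mem_zeroLocus_iff, Ideal.mem_comap]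
  constructor
  · intro h x hx
    have := h (fun a => s.symm (x a)) (fun i p hp => by
      have := hx i _ hp
      have h2 := key p (fun a => s.symm (x (i, a)))
      simp only [RingEquiv.apply_symm_apply] at h2
      rw [h2] at this
      simpa using this)
    have h2 := key f (fun a => s.symm (x a))
    simp only [RingEquiv.apply_symm_apply] at h2
    rw [h2, this, map_zero]
  · intro h x hx
    have := h (fun a => s (x a)) (fun i p hp => by
      have h1 := hx i (map (s.symm : F →+* F) p) (by
        rw [map_map]
        have : (s : F →+* F).comp (s.symm : F →+* F) = RingHom.id _ := by
          ext x; simp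
        rw [this, map_id]; exact hp)
      have h2 := key (map (s.symm : F →+* F) p) (fun a => x (i, a))
      rw [map_map, h1, map_zero] at h2
      have : (s : F →+* F).comp (s.symm : F →+* F) = RingHom.id _ := by
        ext x; simp
      rwa [this, map_id] at h2)
    rw [key] at this
    simpa using this

section Loc3
variable {K : Type} [Field K] {k r : ℕ}

namespace Fam
variable {F : FI K k} (d : Fam F r)

lemma map_s_yb (s : d.Fb ≃ₐ[d.κ] d.Fb) : (fun i a => (s.toAlgHom.restrictScalars K) (d.yb i a)) = d.yb := by
  funext i a
  exact s.commutes _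

lemma IF_gal (s : d.Fb ≃ₐ[d.κ] d.Fb) : d.IF ≤ d.IF.comap (map (s : d.Fb →+* d.Fb)) := by
  refine Ideal.map_le_iff_le_comap.2 fun f hf => ?_
  change map (s : d.Fb →+* d.Fb) (gp1 d.yb f) ∈ d.IF
  have := map_gp1 (K := K) (s.toAlgHom.restrictScalars K) d.yb f
  rw [map_s_yb] at this
  exact this.symm ▸ Ideal.mem_map_of_mem _ hf

noncomputable def gal (s : d.Fb ≃ₐ[d.κ] d.Fb) (c : d.Cx) : d.Cx :=
  ⟨c.1.comap (map (s : d.Fb →+* d.Fb)), by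
    have hc := c.2.1.1
    refine ⟨⟨Ideal.comap_isPrime _ _, (d.IF_gal s).trans (Ideal.comap_mono c.2.1.2)⟩, ?_⟩
    rintro q ⟨hq, hIq⟩ hqc f hf
    have h1 : q.comap (map (s.symm : d.Fb →+* d.Fb)) ≤ c.1 := by
      intro g hg
      have := hqc hg
      rw [Ideal.mem_comap, map_map] at this
      have h2 : ((s : d.Fb →+* d.Fb)).comp (s.symm : d.Fb →+* d.Fb) = RingHom.id _ := by
        ext x; exact s.apply_symm_apply x
      rwa [h2, map_id] at this
    have h3 := c.2.2 ⟨Ideal.comap_isPrime _ _, (d.IF_gal s.symm).trans (Ideal.comap_mono hIq)⟩ h1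
    have h4 := h3 hf
    rw [Ideal.mem_comap, map_map] at h4
    have h2 : ((s.symm : d.Fb →+* d.Fb)).comp (s : d.Fb →+* d.Fb) = RingHom.id _ := by
      ext x; exact s.symm_apply_apply x
    rwa [h2, map_id] at h4⟩

lemma PP_gal (s : d.Fb ≃ₐ[d.κ] d.Fb) (M : Type) (c : M → d.Cx) :
    d.PP M (d.gal s ∘ c) = d.PP M c := by
  ext f
  rw [mem_PP, mem_PP]
  refine (qq_gal (s : d.Fb ≃+* d.Fb) (fun i => (c i).1) (gp d.yb f)).trans ?_
  have := map_gp (K := K) (s.toAlgHom.restrictScalars K) d.yb f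
  rw [map_s_yb] at this
  exact iff_of_eq (congrArg (· ∈ qq fun i => (c i).1) this)

lemma PP_le {M : Type} [Finite M] (c' c : M → d.Cx) (h : d.PP M c' ≤ d.PP M c) :
    ∃ g : d.Cx → d.Cx, c' = g ∘ c ∧ ∀ (M'' : Type) (c'' : M'' → d.Cx),
      d.PP M'' (g ∘ c'') = d.PP M'' c'' := by
  have h1 := qq_prime (fun i => (c i).1) (d.cprime c)
  have h1' := qq_prime (fun i => (c' i).1) (d.cprime c')
  obtain ⟨s, hs⟩ := galois (κ := d.κ) (qq (fun i => (c' i).1)) (qq (fun i => (c i).1)) (by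
    intro f hf
    obtain ⟨b, hb, q, hq⟩ := d.Lc_all f
    have h2 : gp d.yb q = C (algebraMap d.κ d.Fb (ev d.y b)) * map (algebraMap d.κ d.Fb) f := by
      rw [← d.map_gp_yb, hq, map_mul, map_C]
    have h3 : q ∈ d.PP M c := h (by
      rw [mem_PP, h2]; exact Ideal.mul_mem_left _ _ hf)
    rw [mem_PP, h2] at h3
    refine (h1.mem_or_mem h3).resolve_left fun h4 => h1.ne_top (Ideal.eq_top_of_isUnit_mem _ h4 ?_)
    refine (isUnit_iff_ne_zero.2 ?_).map C
    rw [Ne, map_eq_zero, d.k1]; exact hb)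
  refine ⟨d.gal s, funext fun i => Subtype.ext ?_, fun M'' c'' => d.PP_gal s M'' c''⟩
  have hle : (c' i).1 ≤ (d.gal s (c i)).1 := by
    intro g hg
    have h3 := hs _ ((qq_single (fun i => (c' i).1) (d.cprime c') i g).2 hg)
    rw [map_rename] at h3
    exact (qq_single (fun i => (c i).1) (d.cprime c) i _).1 h3
  exact le_antisymm hle ((d.gal s (c i)).2.2 (c' i).2.1 hle)

lemma PP_minP {h : RR K d.S} (hh : h ∉ d.p)
    (hd : ∀ (M : Type) [Finite M] (P : Ideal (RR K (d.S ⊕ M))), P.IsPrime →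
      F.I (d.S ⊕ M) ≤ P → ren Sum.inl h ∉ P → ∃ c, d.PP M c ≤ P) {M : Type} [Finite M]
    (c : M → d.Cx) (hI : F.I (d.S ⊕ M) ≤ d.PP M c) : d.PP M c ∈ F.minP (d.S ⊕ M) := by
  refine ⟨⟨d.PP_prime M c, hI⟩, ?_⟩
  rintro q ⟨hq, hIq⟩ hle
  obtain ⟨c', hc'⟩ := hd M q hq hIq (fun h0 => hh ((d.PP_inl M c h).1 (hle h0)))
  obtain ⟨g, rfl, hg⟩ := d.PP_le c' c (hc'.trans hle)
  rwa [hg] at hc'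

set_option maxHeartbeats 800000 in
lemma SUP (hr : ∀ (α : Type) [Finite α] (ρ γ : Fin (r + 1) → α), minor ρ γ ∈ F.I α)
    (hmax : ∀ d' : Fam F r, LM d.Iy ⊆ LM d'.Iy → LM d'.Iy ⊆ LM d.Iy) {h : RR K d.S} (hh : h ∉ d.p)
    (hd : ∀ (M : Type) [Finite M] (P : Ideal (RR K (d.S ⊕ M))), P.IsPrime →
      F.I (d.S ⊕ M) ≤ P → ren Sum.inl h ∉ P → ∃ c, d.PP M c ≤ P) (M : Type) [hfin : Finite M] :
    ∀ (c : M → d.Cx), F.I (d.S ⊕ M) ≤ d.PP M c := by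
  suffices H : ∀ (_ : Finite M) (c : M → d.Cx), F.I (d.S ⊕ M) ≤ d.PP M c from H hfin
  induction M using Finite.induction_empty_option with
  | of_equiv e ih =>
    intro hfin c
    have := Finite.of_equiv _ e.symm
    have h1 := (F.func (Sum.map id e.symm) (Function.Injective.sumMap Function.injective_id
      e.symm.injective)).trans (pull_mono (Sum.map id e.symm) (ih this (c ∘ e)))
    rw [d.PP_pull e.symm e.symm.injective] at h1
    simpa [Function.comp_assoc] using h1
  | h_empty =>
    intro _ c f hf
    have hinj : Function.Injective (Sum.elim id PEmpty.elim : d.S ⊕ PEmpty → d.S) := by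
      rintro (x | x) (y | y) hxy
      · exact congrArg Sum.inl hxy
      · exact y.elim
      · exact x.elim
      · exact x.elim
    have h1 := F.func _ hinj hf
    have h2 : f = ren Sum.inl (ren (Sum.elim id PEmpty.elim : d.S ⊕ PEmpty → d.S) f) := by
      rw [ren_ren]
      have : (Sum.inl ∘ (Sum.elim id PEmpty.elim : d.S ⊕ PEmpty → d.S)) = id := by
        funext x; rcases x with x | x
        · rfl
        · exact x.elim
      rw [this, ren_id]
    rw [h2, d.PP_inl]
    exact d.hp.1.2 h1
  | h_option ih =>
    rename_i M _
    intro _ c f hf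
    have := Fintype.ofFinite M
    have hP' := d.PP_minP hh hd (c ∘ some) (ih inferInstance _)
    have hm' : minor (Sum.inl ∘ d.ρ) (Sum.inl ∘ d.γ) ∉ d.PP M (c ∘ some) := by
      rw [← ren_minor, d.PP_inl]; exact d.hm
    obtain ⟨κ', fld, alg, y', h1, h2, h3, h4, h5⟩ := exists_gen _ _ _ hP'.1.1
      (fun ρ' γ' => hP'.1.2 (hr _ ρ' γ')) hm'
    let d' : Fam F r := ⟨d.S ⊕ M, inferInstance, _, _, _, hP', hm', κ', fld, alg, y', h1, h2, h3, h4, h5⟩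
    obtain ⟨φ, hφ⟩ := d.hom_y (y' ∘ Sum.inl) h1 (fun f => by rw [← ev_ren, h2, d.PP_inl])
    have hφ' : (fun s a => φ (d.y s a)) = y' ∘ Sum.inl := by funext s a; exact hφ s a
    have hsub : d.Iy ≤ d'.Iy.comap (map (φ : d.κ →+* κ')) := by
      refine Ideal.map_le_iff_le_comap.2 fun g hg => ?_
      change map (φ : d.κ →+* κ') (gp1 d.y g) ∈ d'.Iy
      rw [map_gp1, hφ']
      have h6 : gp1 (y' ∘ Sum.inl) g = gp1 y' (ren (Sum.map Sum.inl id) g) := by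
        rw [gp1, gp1, ev_ren, Sum.elim_comp_map]; rfl
      rw [h6]
      exact Ideal.mem_map_of_mem _ (F.func _ (Function.Injective.sumMap Sum.inl_injective
        Function.injective_id) hg)
    have hLM := hmax d' (by
      rintro _ ⟨g, hg, hg0, rfl⟩
      exact ⟨_, hsub hg, (map_ne_zero_iff _ (map_injective _ φ.injective)).2 hg0, degree_map _ _⟩)
    have hle : d'.Iy ≤ d.Iy.map (map (φ : d.κ →+* κ')) := by
      refine ideal_le_of_LM MonomialOrder.lex fun g hg hg0 => ?_
      obtain ⟨g', hg', hg0', hd'⟩ := hLM ⟨g, hg, hg0, rfl⟩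
      exact ⟨map (φ : d.κ →+* κ') g', hsub hg', Ideal.mem_map_of_mem _ hg',
        (map_ne_zero_iff _ (map_injective _ φ.injective)).2 hg0', by rw [degree_map, hd']⟩
    have hq := qq_prime (fun i => (c i).1) (d.cprime c)
    let L := FractionRing (MvPolynomial (Option M × Fin (r + r)) d.Fb ⧸ qq (fun i => (c i).1))
    let η : MvPolynomial (Option M × Fin (r + r)) d.Fb →ₐ[K] L :=
      (IsScalarTower.toAlgHom K (MvPolynomial (Option M × Fin (r + r)) d.Fb ⧸ qq (fun i => (c i).1)) L).comp
        (Ideal.Quotient.mkₐ K _)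
    have hη : ∀ q, η q = 0 ↔ q ∈ qq (fun i => (c i).1) := fun q => by
      rw [← Ideal.Quotient.eq_zero_iff_mem]
      exact map_eq_zero_iff (algebraMap
        (MvPolynomial (Option M × Fin (r + r)) d.Fb ⧸ qq (fun i => (c i).1)) L)
        (IsFractionRing.injective _ L)
    let w0 : d.S ⊕ Option M → Fin (r + r) → MvPolynomial (Option M × Fin (r + r)) d.Fb :=
      Sum.elim (fun s a => C (d.yb s a)) (fun i a => X (i, a))
    let w : d.S ⊕ Option M → Fin (r + r) → L := fun z a => η (w0 z a)
    have hw : ∀ f, ev (K := K) w f = η (gp d.yb f) := fun f => (map_ev η _ f).symm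
    obtain ⟨φ', hφ'2⟩ := d'.hom_y (w ∘ Sum.map id some) (by
      intro a b
      change η (C (algebraMap _ _ (d.y (d.γ a) (Fin.natAdd r b)))) = _
      rw [d.norm]; split_ifs <;> simp) (by
      intro f
      rw [← ev_ren, hw, hη, ← mem_PP, ← mem_pull, d.PP_pull some (Option.some_injective _)])
    have hφ'3 : (fun s a => φ' (y' s a)) = w ∘ Sum.map id some := by
      funext s a; exact hφ'2 s a
    rw [mem_PP, ← hη, ← hw]
    let e : d.S ⊕ Option M → (d.S ⊕ M) ⊕ Unit := Sum.elim (fun s => Sum.inl (Sum.inl s))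
      (fun o => o.elim (Sum.inr ()) (fun m => Sum.inl (Sum.inr m)))
    have he : Function.Injective e := by
      rintro (x | _ | x) (y | _ | y) hxy <;> simp_all [e]
    have h7 : ev (K := K) w f = evs φ' (w (Sum.inr none)) (gp1 y' (ren e f)) := by
      rw [evs_gp1, hφ'3, ev_ren]
      congr 2
      funext x
      rcases x with x | _ | x <;> rfl
    rw [h7]
    have h8 : d.Iy.map (map (φ : d.κ →+* κ')) ≤ RingHom.ker (evs φ' (w (Sum.inr none))) := by
      rw [Ideal.map_le_iff_le_comap, Iy, Ideal.map_le_iff_le_comap]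
      intro g hg
      change evs φ' (w (Sum.inr none)) (map (φ : d.κ →+* κ') (gp1 d.y g)) = 0
      rw [map_gp1, hφ', evs_gp1]
      have h9 : ev (K := K) w (ren (Sum.map id (fun _ : Unit => none)) g) = 0 := by
        rw [hw, hη, rename_gp1, qq_single (fun i => (c i).1) (d.cprime c)]
        exact (c none).2.1.2 (Ideal.mem_map_of_mem _ hg)
      rw [← h9, ev_ren]
      congr 2
      funext x
      rcases x with x | x
      · exact congrFun hφ'3 (Sum.inl x)
      · rfl
    exact h8 (hle (Ideal.mem_map_of_mem _ (F.func e he hf)))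

end Fam

/-- the localization theorem -/
lemma LOC (F : FI K k) (hne : F.I Empty ≠ ⊤) :
    ∃ (S : Type) (_ : Finite S) (h : RR K S) (C : Type) (_ : Finite C)
      (PP : ∀ M : Type, (M → C) → Ideal (RR K (S ⊕ M))), h ∉ F.I S ∧
      (∀ (M : Type) [Finite M] c, (PP M c).IsPrime) ∧
      (∀ (M M' : Type) [Finite M] [Finite M'] (e : M → M'), Function.Injective e → ∀ c,
        pull (Sum.map id e) (PP M' c) = PP M (c ∘ e)) ∧
      (∀ (M : Type) [Finite M] (P : Ideal (RR K (S ⊕ M))),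
        (P ∈ F.minP (S ⊕ M) ∧ ren Sum.inl h ∉ P) ↔ ∃ c, P = PP M c) ∧
      (∀ (M : Type) [Finite M] (c c' : M → C), PP M c = PP M c' → ∃ g : C → C, c' = g ∘ c ∧
        ∀ (M'' : Type) (c'' : M'' → C), PP M'' (g ∘ c'') = PP M'' c'') := by
  obtain ⟨r, hr0, hr⟩ : ∃ r, (∃ (S : Type) (_ : Finite S) (ρ γ : Fin r → S), minor ρ γ ∉ F.I S) ∧
      ∀ (α : Type) [Finite α] (ρ γ : Fin (r + 1) → α), minor ρ γ ∈ F.I α := by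
    by_contra! hcon
    have hall : ∀ r, ∃ (S : Type) (_ : Finite S) (ρ γ : Fin r → S), minor ρ γ ∉ F.I S := by
      intro r
      induction r with
      | zero =>
        refine ⟨Empty, inferInstance, Fin.elim0, Fin.elim0, fun h => hne ?_⟩
        rw [Ideal.eq_top_iff_one]
        simpa [minor] using h
      | succ r ih =>
        obtain ⟨α, hα, ρ, γ, h⟩ := hcon r ih
        exact ⟨α, hα, ρ, γ, h⟩
    obtain ⟨S, _, ρ, γ, h⟩ := hall (k + 1)
    exact h (F.minors S ρ γ)
  have hFam : Nonempty (Fam F r) := by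
    obtain ⟨S, _, ρ, γ, h⟩ := hr0
    rw [← (F.rad S).radical, ← Ideal.sInf_minimalPrimes, Ideal.mem_sInf] at h
    push Not at h
    obtain ⟨p, hp, hm⟩ := h
    obtain ⟨κ, fld, alg, y, h1, h2, h3, h4, h5⟩ := exists_gen ρ γ p hp.1.1
      (fun ρ' γ' => hp.1.2 (hr S ρ' γ')) hm
    exact ⟨⟨S, ‹_›, ρ, γ, p, hp, hm, κ, fld, alg, y, h1, h2, h3, h4, h5⟩⟩
  obtain ⟨d, hmax⟩ := exists_max_upper (fun d : Fam F r => LM d.Iy) (fun d => LM_upper _)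
  obtain ⟨h, hh, hd⟩ := d.density hr
  have hsup := fun M [Finite M] c => d.SUP hr hmax hh hd M c
  refine ⟨d.S, d.fin, h, d.Cx, inferInstance, d.PP, fun h0 => hh (d.hp.1.2 h0),
    fun M _ c => d.PP_prime M c, fun M M' _ _ e he c => d.PP_pull e he c, fun M _ P => ⟨?_, ?_⟩, ?_⟩
  · rintro ⟨hP, hhP⟩
    obtain ⟨c, hc⟩ := hd M P hP.1.1 hP.1.2 hhP
    exact ⟨c, le_antisymm (hP.2 ⟨d.PP_prime M c, hsup M c⟩ hc) hc⟩
  · rintro ⟨c, rfl⟩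
    exact ⟨d.PP_minP hh hd c (hsup M c), fun h0 => hh ((d.PP_inl M c h).1 h0)⟩
  · intro M _ c c' hcc
    exact d.PP_le c' c hcc.symm.le

end Loc3

section Sim
variable {K : Type} [Field K] {k : ℕ} {α β : Type}

open Classical in
noncomputable def sw (i j : α) : Equiv.Perm α := Equiv.swap i j

def sim (P : Ideal (RR K α)) (i j : α) : Prop := pull (sw i j) P = P

lemma sw_comp {e : α → β} (he : Function.Injective e) (i j : α) :
    ⇑(sw (e i) (e j)) ∘ e = e ∘ ⇑(sw i j) := by
  classical
  funext x
  simp only [sw, Function.comp_apply]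
  exact (he.map_swap _ _ _).symm

lemma sw_left (i j : α) : sw i j i = j := by simp [sw]
lemma sw_right (i j : α) : sw i j j = i := by simp [sw]
lemma sw_ne {i j x : α} (h1 : x ≠ i) (h2 : x ≠ j) : sw i j x = x := by
  classical
  exact Equiv.swap_apply_of_ne_of_ne h1 h2
lemma sw_sw (i j x : α) : sw i j (sw i j x) = x := by simp [sw]
lemma sw_sw' (i j : α) : ⇑(sw i j) ∘ ⇑(sw i j) = id := funext fun x => sw_sw i j x

lemma sim_refl (P : Ideal (RR K α)) (i : α) : sim P i i := by
  simp [sim, sw]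

lemma sim_symm {P : Ideal (RR K α)} {i j : α} (h : sim P i j) : sim P j i := by
  classical
  unfold sim sw at *; rwa [Equiv.swap_comm]

lemma sim_trans {P : Ideal (RR K α)} {i j l : α} (h : sim P i j) (h' : sim P j l) : sim P i l := by
  classical
  by_cases h1 : i = j
  · rw [h1]; exact h'
  by_cases h2 : i = l
  · rw [h2]; exact sim_refl _ _
  by_cases h3 : j = l
  · rw [← h3]; exact h
  have : ⇑(sw i l) = ⇑(sw i j) ∘ ⇑(sw j l) ∘ ⇑(sw i j) := by
    funext x
    simp only [Function.comp_apply]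
    by_cases hx : x = i
    · subst hx; rw [sw_left, sw_left, sw_left, sw_ne (Ne.symm h2) (Ne.symm h3)]
    by_cases hx2 : x = j
    · subst hx2; rw [sw_right, sw_ne h1 h2, sw_left, sw_ne hx h3]
    by_cases hx3 : x = l
    · subst hx3; rw [sw_right, sw_ne hx hx2, sw_right, sw_right]
    rw [sw_ne hx hx3, sw_ne hx hx2, sw_ne hx2 hx3, sw_ne hx hx2]
  unfold sim at *
  rw [this, ← pull_pull, h, ← pull_pull, h', h]

lemma sim_pull {e : α → β} (he : Function.Injective e) {Q : Ideal (RR K β)} {i j : α}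
    (h : sim Q (e i) (e j)) : sim (pull e Q) i j := by
  unfold sim at *
  rw [pull_pull, ← sw_comp he, ← pull_pull, h]

lemma minP_equiv {F : FI K k} (e : α ≃ β) {P : Ideal (RR K β)} (hP : P ∈ F.minP β) :
    pull e P ∈ F.minP α := by
  refine ⟨⟨pull_prime _ hP.1.1, (F.func e e.injective).trans (pull_mono _ hP.1.2)⟩, ?_⟩
  rintro q ⟨hq, hIq⟩ hle
  have h1 := hP.2 (y := pull e.symm q) ⟨pull_prime _ hq, (F.func e.symm e.symm.injective).trans
    (pull_mono _ hIq)⟩ (by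
      have := pull_mono e.symm hle
      rw [pull_pull] at this
      simpa using this)
  have := pull_mono e h1
  rw [pull_pull] at this
  simpa using this

end Sim

section Loc4
variable {K : Type} [Field K] {k : ℕ}

structure LD (F : FI K k) (S C : Type) (h : RR K S) where
  PI : ∀ α : Type, (S → α) → (α → C) → Ideal (RR K α)
  prime : ∀ {α : Type} [Finite α] (ι : S → α) w, Function.Injective ι → (PI α ι w).IsPrime
  minp : ∀ {α : Type} [Finite α] (ι : S → α) w, Function.Injective ι → PI α ι w ∈ F.minP α
  hmem : ∀ {α : Type} [Finite α] (ι : S → α) w, Function.Injective ι → ren ι h ∉ PI α ι w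
  pullf : ∀ {α β : Type} [Finite α] [Finite β] (f : α → β) (ι : S → α) (w : β → C),
    Function.Injective f → Function.Injective ι → pull f (PI β (f ∘ ι) w) = PI α ι (w ∘ f)
  ex : ∀ {α : Type} [Finite α] (ι : S → α) (P : Ideal (RR K α)), Function.Injective ι →
    P ∈ F.minP α → ren ι h ∉ P → (∃ x, x ∉ Set.range ι) → ∃ w, P = PI α ι w
  congr : ∀ {α : Type} (ι : S → α) (w w' : α → C), Function.Injective ι →
    (∀ x ∉ Set.range ι, w x = w' x) → PI α ι w = PI α ι w'
  gal : ∀ {α : Type} [Finite α] (ι : S → α) (w w' : α → C), Function.Injective ι →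
    PI α ι w = PI α ι w' → ∃ g : C → C, (∀ x ∉ Set.range ι, w' x = g (w x)) ∧
      ∀ {β : Type} (ι' : S → β) (w'' : β → C), Function.Injective ι' →
        PI β ι' (g ∘ w'') = PI β ι' w''

noncomputable def eqv {S α : Type} (ι : S → α) (hι : Function.Injective ι) :
    S ⊕ {x // x ∉ Set.range ι} ≃ α :=
  Equiv.ofBijective (Sum.elim ι (fun x => x.1)) (by
    constructor
    · rintro (x | x) (y | y) hxy
      · exact congrArg Sum.inl (hι hxy)
      · exact (y.2 ⟨x, hxy⟩).elim
      · exact (x.2 ⟨y, hxy.symm⟩).elim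
      · exact congrArg Sum.inr (Subtype.ext hxy)
    · intro x
      by_cases hx : x ∈ Set.range ι
      · obtain ⟨s, rfl⟩ := hx; exact ⟨Sum.inl s, rfl⟩
      · exact ⟨Sum.inr ⟨x, hx⟩, rfl⟩)

lemma pull_symm {α β : Type} (e : α ≃ β) {P : Ideal (RR K α)} {Q : Ideal (RR K β)} :
    pull e.symm P = Q ↔ P = pull e Q := by
  constructor
  · rintro rfl; rw [pull_pull]; simp
  · rintro rfl; rw [pull_pull]; simp

open Classical in
lemma LOC2 (F : FI K k) (hne : F.I Empty ≠ ⊤) :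
    ∃ (S : Type) (_ : Finite S) (C : Type) (_ : Finite C) (h : RR K S) (_ : LD F S C h), h ∉ F.I S := by
  obtain ⟨S, hS, h, C, hC, PP, hh, hprime, hpull, hiff, hgal⟩ := LOC F hne
  let PI : ∀ α : Type, (S → α) → (α → C) → Ideal (RR K α) := fun α ι w =>
    if hι : Function.Injective ι then pull (eqv ι hι).symm (PP _ (fun x => w x.1)) else ⊤
  have hPI : ∀ {α : Type} (ι : S → α) (w : α → C) (hι : Function.Injective ι),
      PI α ι w = pull (eqv ι hι).symm (PP _ (fun x => w x.1)) := fun ι w hι => dif_pos hι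
  have hinl : ∀ {α : Type} (ι : S → α) (hι : Function.Injective ι), ⇑(eqv ι hι).symm ∘ ι = Sum.inl := by
    intro α ι hι
    funext s
    rw [Function.comp_apply, Equiv.symm_apply_eq]; rfl
  have hren : ∀ {α : Type} (ι : S → α) (hι : Function.Injective ι) (P : Ideal (RR K α)),
      ren Sum.inl h ∈ pull (eqv ι hι) P ↔ ren ι h ∈ P := by
    intro α ι hι P
    rw [mem_pull, ren_ren]; rfl
  refine ⟨S, hS, C, hC, h, ⟨PI, ?_, ?_, ?_, ?_, ?_, ?_, ?_⟩, hh⟩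
  · intro α _ ι w hι
    rw [hPI ι w hι]; exact pull_prime _ (hprime _ _)
  · intro α _ ι w hι
    rw [hPI ι w hι]
    exact minP_equiv _ ((hiff _ _).2 ⟨_, rfl⟩).1
  · intro α _ ι w hι
    rw [hPI ι w hι, mem_pull, ren_ren, hinl]
    exact ((hiff _ _).2 ⟨_, rfl⟩).2
  · intro α β _ _ f ι w hf hι
    rw [hPI _ w (hf.comp hι), hPI ι _ hι, pull_pull]
    let f' : {x // x ∉ Set.range ι} → {x // x ∉ Set.range (f ∘ ι)} := fun x => ⟨f x.1, by
      rintro ⟨s, hs⟩; exact x.2 ⟨s, hf hs⟩⟩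
    have hf' : Function.Injective f' := fun x y hxy => Subtype.ext (hf (congrArg Subtype.val hxy))
    have h1 : ⇑(eqv (f ∘ ι) (hf.comp hι)).symm ∘ f = Sum.map id f' ∘ ⇑(eqv ι hι).symm := by
      funext x
      rw [Function.comp_apply, Equiv.symm_apply_eq]
      obtain ⟨z, rfl⟩ := (eqv ι hι).surjective x
      rw [Function.comp_apply, Equiv.symm_apply_apply]
      rcases z with z | z <;> rfl
    rw [h1, ← pull_pull, hpull _ _ f' hf']
    rfl
  · intro α _ ι P hι hP hhP ⟨x, hx⟩
    obtain ⟨c, hc⟩ := (hiff _ (pull (eqv ι hι) P)).1 ⟨minP_equiv _ hP, by rwa [hren]⟩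
    let w : α → C := fun y => if hy : y ∉ Set.range ι then c ⟨y, hy⟩ else c ⟨x, hx⟩
    refine ⟨w, Eq.symm ((hPI ι w hι).trans ?_)⟩
    rw [pull_symm, hc]
    congr 1
    funext y
    exact dif_pos y.2
  · intro α ι w w' hι hw
    rw [hPI _ _ hι, hPI _ _ hι]
    congr 2
    funext x; exact hw _ x.2
  · intro α _ ι w w' hι heq
    rw [hPI _ _ hι, hPI _ _ hι, pull_symm, pull_pull] at heq
    rw [Equiv.symm_comp_self, pull_id] at heq
    obtain ⟨g, hg1, hg2⟩ := hgal _ _ _ heq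
    refine ⟨g, fun x hx => congrFun hg1 ⟨x, hx⟩, ?_⟩
    intro β ι' w'' hι'
    rw [hPI _ _ hι', hPI _ _ hι']
    congr 1
    exact hg2 _ _

end Loc4

section Key
variable {K : Type} [Field K] {k : ℕ}

structure KEY (F : FI K k) (B N : ℕ) : Prop where
  A : ∀ {α : Type} [Finite α] {P : Ideal (RR K α)}, P ∈ F.minP α →
    ∃ col : α → Fin B, ∀ i j, col i = col j → sim P i j
  E : ∀ {α : Type} [Finite α] {P : Ideal (RR K α)}, P ∈ F.minP α → ∀ U : Finset α, N ≤ U.card →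
    (∀ u ∈ U, ∀ v ∈ U, sim P u v) →
    ∃ Q ∈ F.minP (Option α), pull some Q = P ∧ ∀ u ∈ U, sim Q none (some u)
  U : ∀ {α : Type} [Finite α] {Q Q' : Ideal (RR K (Option α))}, Q ∈ F.minP (Option α) →
    Q' ∈ F.minP (Option α) → pull some Q = pull some Q' → ∀ U : Finset α, N ≤ U.card →
    (∀ u ∈ U, sim Q none (some u)) → (∀ u ∈ U, sim Q' none (some u)) → Q = Q'
  R : ∀ {α : Type} [Finite α] {Q : Ideal (RR K (Option α))}, Q ∈ F.minP (Option α) →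
    ∀ U : Finset α, N ≤ U.card → (∀ u ∈ U, sim Q none (some u)) → pull some Q ∈ F.minP α

variable {F : FI K k} {S C : Type} {h : RR K S}

lemma sw_ι {α : Type} {ι : S → α} {i j : α} (hi : i ∉ Set.range ι) (hj : j ∉ Set.range ι) :
    ⇑(sw i j) ∘ ι = ι := by
  funext s
  exact sw_ne (fun h => hi ⟨s, h⟩) (fun h => hj ⟨s, h⟩)

lemma LD.pull_sw (d : LD F S C h) {α : Type} [Finite α] {ι : S → α} (hι : Function.Injective ι)
    (w : α → C) {i j : α} (hi : i ∉ Set.range ι) (hj : j ∉ Set.range ι) :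
    pull (sw i j) (d.PI α ι w) = d.PI α ι (w ∘ sw i j) := by
  have := d.pullf (sw i j) ι w (sw i j).injective hι
  rwa [sw_ι hi hj] at this

lemma LD.sim_of (d : LD F S C h) {α : Type} [Finite α] {ι : S → α} (hι : Function.Injective ι)
    (w : α → C) {i j : α} (hi : i ∉ Set.range ι) (hj : j ∉ Set.range ι) (hw : w i = w j) :
    sim (d.PI α ι w) i j := by
  unfold sim
  rw [d.pull_sw hι w hi hj]
  congr 1
  funext x
  simp only [Function.comp_apply]
  by_cases h1 : x = i
  · rw [h1, sw_left, hw]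
  by_cases h2 : x = j
  · rw [h2, sw_right, hw]
  rw [sw_ne h1 h2]

lemma LD.color_eq (d : LD F S C h) {α : Type} [Finite α] {ι : S → α} (hι : Function.Injective ι)
    (w : α → C) {x i j : α} (hx : x ∉ Set.range ι) (hi : i ∉ Set.range ι) (hj : j ∉ Set.range ι)
    (hij : i ≠ j) (hxj : x ≠ j) (hw : w i = w j) (hs : sim (d.PI α ι w) x i) : w x = w i := by
  unfold sim at hs
  rw [d.pull_sw hι w hx hi] at hs
  obtain ⟨g, hg, -⟩ := d.gal ι _ _ hι hs
  have h1 := hg x hx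
  have h2 := hg j hj
  simp only [Function.comp_apply] at h1 h2
  rw [sw_left] at h1
  rw [sw_ne hxj.symm hij.symm] at h2
  rw [h1, hw, ← h2]

lemma popular [Finite S] [Finite C] {α : Type} [Finite α] {ι : S → α} (w : α → C) (m : ℕ)
    (U : Finset α) (hU : Nat.card S + Nat.card C * m + 1 ≤ U.card) :
    ∃ γ, ∃ V ⊆ U, m ≤ V.card ∧ ∀ v ∈ V, v ∉ Set.range ι ∧ w v = γ := by
  classical
  have := Fintype.ofFinite S
  have := Fintype.ofFinite C
  rw [Nat.card_eq_fintype_card, Nat.card_eq_fintype_card] at hU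
  set T : Finset α := U \ Finset.univ.image ι
  have hT : Fintype.card C * m + 1 ≤ T.card := by
    have h1 := Finset.le_card_sdiff (Finset.univ.image ι) U
    have h2 : (Finset.univ.image ι).card ≤ Fintype.card S := Finset.card_image_le
    change _ ≤ (U \ Finset.univ.image ι).card
    omega
  have hne : (Finset.univ : Finset C).Nonempty := by
    obtain ⟨x, -⟩ := Finset.card_pos.1 (by omega : 0 < T.card)
    exact ⟨w x, Finset.mem_univ _⟩
  obtain ⟨γ, -, hγ⟩ := Finset.exists_le_card_fiber_of_mul_le_card_of_maps_to (s := T) (f := w) (n := m)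
    (fun a _ => Finset.mem_univ (w a)) hne (by rw [Finset.card_univ]; omega)
  refine ⟨γ, T.filter (fun x => w x = γ), ?_, hγ, ?_⟩
  · exact (Finset.filter_subset _ _).trans Finset.sdiff_subset
  · intro v hv
    simp only [Finset.mem_filter, T, Finset.mem_sdiff, Finset.mem_image, Finset.mem_univ, true_and] at hv
    exact ⟨fun ⟨s, hs⟩ => hv.1.2 ⟨s, hs⟩, hv.2⟩

lemma exists_off [Finite S] {β : Type} {α : Type} (ι : S → β) (U : Finset α) (f : α → β)
    (hf : Function.Injective f) (hU : Nat.card S + 1 ≤ U.card) : ∃ u ∈ U, f u ∉ Set.range ι := by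
  classical
  have := Fintype.ofFinite S
  rw [Nat.card_eq_fintype_card] at hU
  by_contra hcon
  push Not at hcon
  have h1 : U.image f ⊆ Finset.univ.image ι := by
    intro x hx
    obtain ⟨u, hu, rfl⟩ := Finset.mem_image.1 hx
    obtain ⟨s, hs⟩ := hcon u hu
    exact Finset.mem_image.2 ⟨s, Finset.mem_univ _, hs⟩
  have h2 := Finset.card_le_card h1
  have h3 : (Finset.univ.image ι).card ≤ Fintype.card S := Finset.card_image_le
  rw [Finset.card_image_of_injective _ hf] at h2
  omega

lemma factor_none {α : Type} {S : Type} {ι : S → Option α} (hι : Function.Injective ι) {u : α}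
    (hu : some u ∉ Set.range ι) :
    ∃ ι0 : S → α, Function.Injective ι0 ∧ ι = ⇑(sw none (some u)) ∘ some ∘ ι0 := by
  have h1 : ∀ s, ∃ a, some a = sw none (some u) (ι s) := by
    intro s
    rcases hs : ι s with _ | a
    · exact ⟨u, by rw [sw_left]⟩
    · refine ⟨a, (sw_ne (by simp) ?_).symm⟩
      rintro h
      exact hu ⟨s, hs.trans h⟩
  choose ι0 h0 using h1
  have h2 : ι = ⇑(sw none (some u)) ∘ some ∘ ι0 := by
    funext s
    simp only [Function.comp_apply]
    rw [h0, sw_sw]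
  refine ⟨ι0, ?_, h2⟩
  have := h2 ▸ hι
  exact (this.of_comp).of_comp

lemma avoid [Finite S] {α : Type} {Q : Ideal (RR K (Option α))} {ι : S → Option α}
    (hι : Function.Injective ι) (hQ : ren ι h ∉ Q) (U : Finset α) (hU : Nat.card S + 1 ≤ U.card)
    (hs : ∀ u ∈ U, sim Q none (some u)) :
    ∃ ι0 : S → α, Function.Injective ι0 ∧ ren (some ∘ ι0) h ∉ Q := by
  obtain ⟨u, hu, hu'⟩ := exists_off ι U some (Option.some_injective α) hU
  obtain ⟨ι0, hι0, rfl⟩ := factor_none hι hu'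
  refine ⟨ι0, hι0, fun hmem => hQ ?_⟩
  rw [← hs u hu, mem_pull, ren_ren] at hmem
  exact hmem

lemma some_range {α S : Type} {ι : S → α} {x : α} :
    some x ∉ Set.range (some ∘ ι) ↔ x ∉ Set.range ι := by
  simp

lemma LD.U1 (d : LD F S C h) [Finite S] [Finite C] {α : Type} [Finite α]
    {Q Q' : Ideal (RR K (Option α))} (hQ : Q ∈ F.minP (Option α))
    (hQ' : Q' ∈ F.minP (Option α)) (hpull : pull some Q = pull some Q') (U : Finset α)
    (hU : Nat.card S + Nat.card C * 2 + 1 ≤ U.card)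
    (hs : ∀ u ∈ U, sim Q none (some u)) (hs' : ∀ u ∈ U, sim Q' none (some u))
    {ι : S → α} (hι : Function.Injective ι) (hh : ren (some ∘ ι) h ∉ Q) : Q = Q' := by
  have hι' : Function.Injective (some ∘ ι) := (Option.some_injective α).comp hι
  have hh' : ren (some ∘ ι) h ∉ Q' := by
    rwa [← ren_ren, ← mem_pull, ← hpull, mem_pull, ren_ren]
  have hnone : (none : Option α) ∉ Set.range (some ∘ ι) := by simp
  obtain ⟨w, rfl⟩ := d.ex _ Q hι' hQ hh ⟨none, hnone⟩
  obtain ⟨w', rfl⟩ := d.ex _ Q' hι' hQ' hh' ⟨none, hnone⟩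
  rw [d.pullf some ι w (Option.some_injective α) hι, d.pullf some ι w' (Option.some_injective α) hι] at hpull
  obtain ⟨g, hg, hg2⟩ := d.gal ι _ _ hι hpull
  obtain ⟨γ, V, hVU, hV, hγ⟩ := popular (ι := ι) (w ∘ some) 2 U hU
  obtain ⟨i, hi, j, hj, hij⟩ := Finset.one_lt_card.1 (by omega : 1 < V.card)
  have hij' : some i ≠ some j := fun h => hij (Option.some_injective α h)
  have h1 : w none = w (some i) := d.color_eq hι' w hnone (some_range.2 (hγ i hi).1)
    (some_range.2 (hγ j hj).1) hij' (by simp) ((hγ i hi).2.trans (hγ j hj).2.symm) (hs i (hVU hi))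
  have h2 : w' (some i) = w' (some j) := by
    have a := hg i (hγ i hi).1
    have b := hg j (hγ j hj).1
    simp only [Function.comp_apply] at a b
    have c := (hγ i hi).2.trans (hγ j hj).2.symm
    simp only [Function.comp_apply] at c
    rw [a, b, c]
  have h3 : w' none = w' (some i) := d.color_eq hι' w' hnone (some_range.2 (hγ i hi).1)
    (some_range.2 (hγ j hj).1) hij' (by simp) h2 (hs' i (hVU hi))
  rw [← hg2 (some ∘ ι) w hι']
  refine d.congr _ _ _ hι' ?_
  rintro (_ | x) hx
  · rw [h3, Function.comp_apply, h1]
    exact (hg i (hγ i hi).1).symm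
  · exact (hg x (some_range.1 hx)).symm

lemma LD.E1 (d : LD F S C h) [Finite S] [Finite C] {α : Type} [Finite α]
    {P : Ideal (RR K α)} (hP : P ∈ F.minP α) (U : Finset α)
    (hU : Nat.card S + Nat.card C * (Nat.card S + Nat.card C * 2 + 3) + 1 ≤ U.card)
    (hs : ∀ u ∈ U, ∀ v ∈ U, sim P u v)
    {ι : S → α} (hι : Function.Injective ι) (hh : ren ι h ∉ P) :
    ∃ Q ∈ F.minP (Option α), pull some Q = P ∧ ∀ u ∈ U, sim Q none (some u) := by
  classical
  have hι' : Function.Injective (some ∘ ι) := (Option.some_injective α).comp hι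
  obtain ⟨x, -, hx⟩ := exists_off ι U id Function.injective_id (by omega)
  obtain ⟨w, hw⟩ := d.ex _ P hι hP hh ⟨_, hx⟩
  obtain ⟨γ, V, hVU, hV, hγ⟩ := popular (ι := ι) w _ U hU
  set w' : Option α → C := fun o => o.elim γ w with hw'
  have hpull : pull some (d.PI _ (some ∘ ι) w') = P := by
    rw [d.pullf some ι w' (Option.some_injective α) hι, hw]; rfl
  have hmin := d.minp (some ∘ ι) w' hι'
  have hV1 : ∀ v ∈ V, sim (d.PI _ (some ∘ ι) w') none (some v) := by
    intro v hv
    exact d.sim_of hι' w' (by simp) (some_range.2 (hγ v hv).1) (hγ v hv).2.symm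
  refine ⟨d.PI _ (some ∘ ι) w', hmin, hpull, ?_⟩
  intro u hu
  obtain ⟨i, hi, hiu⟩ : ∃ i ∈ V, i ≠ u := by
    obtain ⟨i, hi, j, hj, hij⟩ := Finset.one_lt_card.1 (by omega : 1 < V.card)
    by_cases h1 : i = u
    · exact ⟨j, hj, fun h2 => hij (h1.trans h2.symm)⟩
    · exact ⟨i, hi, h1⟩
  refine sim_trans (hV1 i hi) ?_
  have hi' : some i ≠ some u := fun h => hiu (Option.some_injective α h)
  unfold sim
  refine d.U1 (minP_equiv _ hmin) hmin ?_ (V \ {i, u}) ?_ ?_ ?_ hι ?_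
  · rw [pull_pull, sw_comp (Option.some_injective α), ← pull_pull, hpull]
    exact hs i (hVU hi) u hu
  · have h1 := Finset.le_card_sdiff {i, u} V
    have h2 : ({i, u} : Finset α).card ≤ 2 := Finset.card_le_two
    omega
  · intro v hv
    simp only [Finset.mem_sdiff, Finset.mem_insert, Finset.mem_singleton, not_or] at hv
    refine sim_pull (sw (some i) (some u)).injective ?_
    rw [sw_ne (by simp) (by simp), sw_ne (by simpa using hv.2.1) (by simpa using hv.2.2)]
    exact hV1 v hv.1
  · intro v hv
    exact hV1 v (Finset.mem_sdiff.1 hv).1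
  · have : pull some (pull (sw (some i) (some u)) (d.PI _ (some ∘ ι) w')) = P := by
      rw [pull_pull, sw_comp (Option.some_injective α), ← pull_pull, hpull]
      exact hs i (hVU hi) u hu
    rwa [← ren_ren, ← mem_pull, this]

/-- consequence of noetherianity -/
lemma LD.NP (d : LD F S C h) [Finite S] [Finite C] : ∃ n1 : ℕ, ∀ {β : Type} [Finite β] [Nonempty β]
    (ι : S → β) (w : β → C) (Q : Ideal (RR K β)), Function.Injective ι → Q.IsPrime → F.I β ≤ Q →
    (∀ n' ≤ n1, ∀ e : Fin n' → β, Function.Injective e → pull e (d.PI β ι w) ≤ pull e Q) →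
    d.PI β ι w ≤ Q := by
  classical
  by_cases hC : Nonempty C
  swap
  · refine ⟨0, fun {β} _ hβ ι w => ?_⟩
    exact (hC ⟨w (Classical.choice hβ)⟩).elim
  obtain ⟨c0⟩ := hC
  let jj : ∀ n, (Fin n → C ⊕ S) → Fin n → S ⊕ Fin n := fun n c x =>
    (c x).elim (fun _ => Sum.inr x) Sum.inl
  let W : ∀ n, (Fin n → C ⊕ S) → S ⊕ Fin n → C := fun n c y =>
    y.elim (fun _ => c0) (fun x => (c x).elim id (fun _ => c0))
  let II : ∀ n, (Fin n → C ⊕ S) → Ideal (RR K (Fin n)) := fun n c =>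
    pull (jj n c) (d.PI (S ⊕ Fin n) Sum.inl (W n c))
  have hmono : ∀ n' n (c : Fin n → C ⊕ S) (e : Fin n' → Fin n), StrictMono e →
      II n' (c ∘ e) = pull e (II n c) := by
    intro n' n c e he
    change pull _ _ = pull e (pull _ _)
    have h1 : jj n c ∘ e = Sum.map id e ∘ jj n' (c ∘ e) := by
      funext x
      simp only [jj, Function.comp_apply]
      rcases c (e x) with y | y <;> rfl
    rw [pull_pull, h1, ← pull_pull]
    have h2 := d.pullf (Sum.map id e : S ⊕ Fin n' → S ⊕ Fin n) Sum.inl (W n c)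
      (Function.injective_id.sumMap he.injective) Sum.inl_injective
    have h3 : (Sum.map id e : S ⊕ Fin n' → S ⊕ Fin n) ∘ Sum.inl = Sum.inl := rfl
    have h4 : W n' (c ∘ e) = W n c ∘ Sum.map id e := by
      funext y
      rcases y with y | y <;> rfl
    rw [h3] at h2
    rw [h2, h4]
  obtain ⟨n1, hn1⟩ := noeth (K := K) k II (fun n' n c e he => (hmono n' n c e he).le)
  refine ⟨n1, ?_⟩
  intro β _ _ ι w Q hι hQ hIQ hpc
  obtain ⟨n, ⟨E⟩⟩ := Finite.exists_equiv_fin β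
  let c : Fin n → C ⊕ S := fun x => if hx : ∃ s, ι s = E.symm x then Sum.inr hx.choose else Sum.inl (w (E.symm x))
  have hc1 : ∀ s, c (E (ι s)) = Sum.inr s := by
    intro s
    have hx : ∃ s', ι s' = E.symm (E (ι s)) := ⟨s, by simp⟩
    have : c (E (ι s)) = Sum.inr hx.choose := dif_pos hx
    rw [this]
    congr 1
    apply hι
    rw [hx.choose_spec]; simp
  have hc2 : ∀ x, x ∉ Set.range ι → c (E x) = Sum.inl (w x) := by
    intro x hx
    have hx' : ¬ ∃ s', ι s' = E.symm (E x) := by simpa using hx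
    have : c (E x) = Sum.inl (w (E.symm (E x))) := dif_neg hx'
    rw [this]; simp
  have hf1 : ∀ s, jj n c (E (ι s)) = Sum.inl s := by intro s; simp only [jj, hc1]; rfl
  have hf2 : ∀ x, x ∉ Set.range ι → jj n c (E x) = Sum.inr (E x) := by
    intro x hx; simp only [jj, hc2 x hx]; rfl
  have hf : Function.Injective (jj n c ∘ E) := by
    intro x y hxy
    simp only [Function.comp_apply] at hxy
    by_cases hx : x ∈ Set.range ι
    · obtain ⟨s, rfl⟩ := hx
      by_cases hy : y ∈ Set.range ι
      · obtain ⟨t, rfl⟩ := hy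
        rw [hf1, hf1] at hxy
        rw [Sum.inl_injective hxy]
      · rw [hf1, hf2 y hy] at hxy; cases hxy
    · by_cases hy : y ∈ Set.range ι
      · obtain ⟨t, rfl⟩ := hy
        rw [hf1, hf2 x hx] at hxy; cases hxy
      · rw [hf2 x hx, hf2 y hy] at hxy
        exact E.injective (Sum.inr_injective hxy)
  have hII : II n c = pull E.symm (d.PI β ι w) := by
    have h1 := d.pullf (jj n c ∘ E) ι (W n c) hf hι
    have h2 : (jj n c ∘ E) ∘ ι = Sum.inl := funext fun s => hf1 s
    rw [h2] at h1
    have h3 : d.PI β ι w = d.PI β ι (W n c ∘ jj n c ∘ E) := by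
      refine d.congr _ _ _ hι fun x hx => ?_
      simp only [Function.comp_apply, hf2 x hx, W, Sum.elim_inr, hc2 x hx]
      rfl
    have h4 : (jj n c ∘ E) ∘ E.symm = jj n c := by
      rw [Function.comp_assoc, Equiv.self_comp_symm, Function.comp_id]
    rw [h3, ← h1, pull_pull, h4]
  have := hn1 n c (pull E.symm Q) (pull_prime _ hQ) (fun ρ γ => by
      rw [mem_pull, ren_minor]; exact hIQ (F.minors _ _ _)) (by
    intro n' hn' e he
    rw [hmono n' n c e he, hII, pull_pull, pull_pull]
    exact hpc n' hn' _ (E.symm.injective.comp he.injective))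
  rw [hII] at this
  have := pull_mono E this
  rw [pull_pull, pull_pull] at this
  simpa using this

end Key

section Key2
variable {K : Type} [Field K] {k : ℕ} {S : Type}

/-- adding `h` to the family -/
noncomputable def FI.adj (F : FI K k) (h : RR K S) : FI K k where
  I := fun α => (F.I α ⊔ Ideal.span {f | ∃ ι : S → α, Function.Injective ι ∧ f = ren ι h}).radical
  rad := fun α => Ideal.radical_isRadical _
  minors := fun α ρ γ => Ideal.le_radical (Ideal.mem_sup_left (F.minors α ρ γ))
  func := by
    intro α β e he
    have hr : (pull e ((F.I β ⊔ Ideal.span {f | ∃ ι : S → β, Function.Injective ι ∧ f = ren ι h}).radical)).IsRadical :=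
      (Ideal.radical_isRadical _).comap _
    rw [hr.radical_le_iff]
    refine sup_le ((F.func e he).trans (pull_mono _ (le_sup_left.trans Ideal.le_radical))) ?_
    rw [Ideal.span_le]
    rintro _ ⟨ι, hι, rfl⟩
    change _ ∈ pull _ _
    rw [mem_pull, ren_ren]
    exact Ideal.le_radical (Ideal.mem_sup_right (Ideal.subset_span ⟨_, he.comp hι, rfl⟩))

variable {F : FI K k} {h : RR K S} {α : Type}

lemma FI.le_adj : F.I α ≤ (F.adj h).I α := le_sup_left.trans Ideal.le_radical

lemma FI.mem_adj {ι : S → α} (hι : Function.Injective ι) : ren ι h ∈ (F.adj h).I α :=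
  Ideal.le_radical (Ideal.mem_sup_right (Ideal.subset_span ⟨_, hι, rfl⟩))

lemma FI.adj_le {P : Ideal (RR K α)} (hP : P.IsPrime) (hF : F.I α ≤ P)
    (h2 : ∀ ι : S → α, Function.Injective ι → ren ι h ∈ P) : (F.adj h).I α ≤ P := by
  change Ideal.radical _ ≤ P
  rw [hP.isRadical.radical_le_iff]
  refine sup_le hF ?_
  rw [Ideal.span_le]
  rintro _ ⟨ι, hι, rfl⟩
  exact h2 ι hι

lemma FI.adj_min {P : Ideal (RR K α)} (hP : P ∈ F.minP α)
    (h2 : ∀ ι : S → α, Function.Injective ι → ren ι h ∈ P) : P ∈ (F.adj h).minP α :=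
  ⟨⟨hP.1.1, FI.adj_le hP.1.1 hP.1.2 h2⟩, fun _ hq hle => hP.2 ⟨hq.1, FI.le_adj.trans hq.2⟩ hle⟩

/-- if a minimal prime below a minimal prime of the adjoined family is of type two, it is equal -/
lemma FI.adj_eq {P P1 : Ideal (RR K α)} (hP : P ∈ (F.adj h).minP α) (hP1 : P1 ∈ F.minP α)
    (hle : P1 ≤ P) (h2 : ∀ ι : S → α, Function.Injective ι → ren ι h ∈ P1) : P ∈ F.minP α := by
  have := hP.2 ⟨hP1.1.1, FI.adj_le hP1.1.1 hP1.1.2 h2⟩ hle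
  rwa [le_antisymm this hle]

lemma FI.adj_lt [Finite S] (hh : h ∉ F.I S) : (F.adj h).lt F := by
  refine ⟨fun n => FI.le_adj, ?_⟩
  obtain ⟨n, ⟨E⟩⟩ := Finite.exists_equiv_fin S
  refine ⟨n, fun heq => hh ?_⟩
  have h1 : ren E h ∈ F.I (Fin n) := by rw [heq]; exact FI.mem_adj E.injective
  have h2 := F.func E.symm E.symm.injective h1
  rw [mem_pull, ren_ren] at h2
  simpa using h2

lemma exists_min {P : Ideal (RR K α)} (hP : P.IsPrime) (hF : F.I α ≤ P) :
    ∃ P1 ∈ F.minP α, P1 ≤ P :=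
  Ideal.exists_minimalPrimes_le hF

variable {C : Type}

lemma LD.KA (d : LD F S C h) [Finite S] [Finite C] {B' N' : ℕ} (hk : KEY (F.adj h) B' N')
    {α : Type} [Finite α] {P : Ideal (RR K α)} (hP : P ∈ F.minP α) :
    ∃ col : α → Fin (B' + (Nat.card S + Nat.card C)), ∀ i j, col i = col j → sim P i j := by
  classical
  suffices hs : ∃ col : α → Fin B' ⊕ (S ⊕ C), ∀ i j, col i = col j → sim P i j by
    obtain ⟨col, hcol⟩ := hs
    let E : Fin B' ⊕ (S ⊕ C) ≃ Fin (B' + (Nat.card S + Nat.card C)) :=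
      (Equiv.sumCongr (Equiv.refl _) ((Equiv.sumCongr (Finite.equivFin S) (Finite.equivFin C)).trans
        finSumFinEquiv)).trans finSumFinEquiv
    exact ⟨fun i => E (col i), fun i j hij => hcol i j (E.injective hij)⟩
  by_cases h2 : ∀ ι : S → α, Function.Injective ι → ren ι h ∈ P
  · obtain ⟨col, hcol⟩ := hk.A (FI.adj_min hP h2)
    exact ⟨fun i => Sum.inl (col i), fun i j hij => hcol i j (Sum.inl_injective hij)⟩
  push Not at h2
  obtain ⟨ι, hι, hh⟩ := h2
  by_cases hsur : ∃ x, x ∉ Set.range ι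
  · obtain ⟨w, rfl⟩ := d.ex ι P hι hP hh hsur
    refine ⟨fun i => if hi : ∃ s, ι s = i then Sum.inr (Sum.inl hi.choose) else Sum.inr (Sum.inr (w i)), ?_⟩
    intro i j hij
    by_cases hi : ∃ s, ι s = i
    · by_cases hj : ∃ s, ι s = j
      · simp only [dif_pos hi, dif_pos hj] at hij
        have h1 := Sum.inl_injective (Sum.inr_injective hij)
        have : i = j := by rw [← hi.choose_spec, ← hj.choose_spec, h1]
        rw [this]; exact sim_refl _ _
      · simp only [dif_pos hi, dif_neg hj] at hij
        have := Sum.inr_injective hij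
        cases this
    · by_cases hj : ∃ s, ι s = j
      · simp only [dif_neg hi, dif_pos hj] at hij
        have := Sum.inr_injective hij
        cases this
      · simp only [dif_neg hi, dif_neg hj] at hij
        exact d.sim_of hι w hi hj (Sum.inr_injective (Sum.inr_injective hij))
  · push Not at hsur
    choose g hg using hsur
    refine ⟨fun i => Sum.inr (Sum.inl (g i)), fun i j hij => ?_⟩
    have h1 := Sum.inl_injective (Sum.inr_injective hij)
    have : i = j := by rw [← hg i, ← hg j, h1]
    rw [this]; exact sim_refl _ _

lemma LD.KE2 (d : LD F S C h) [Finite S] {B' N' : ℕ} (hk : KEY (F.adj h) B' N')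
    {α : Type} [Finite α] {P : Ideal (RR K α)} (hP : P ∈ F.minP α) (U : Finset α)
    (hU : N' ≤ U.card) (hU' : Nat.card S + 1 ≤ U.card)
    (hs : ∀ u ∈ U, ∀ v ∈ U, sim P u v) (h2 : ∀ ι : S → α, Function.Injective ι → ren ι h ∈ P) :
    ∃ Q ∈ F.minP (Option α), pull some Q = P ∧ ∀ u ∈ U, sim Q none (some u) := by
  obtain ⟨Q, hQ, hQP, hQs⟩ := hk.E (FI.adj_min hP h2) U hU hs
  refine ⟨Q, ?_, hQP, hQs⟩
  obtain ⟨Q1, hQ1, hle⟩ := exists_min hQ.1.1 (FI.le_adj.trans hQ.1.2)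
  refine FI.adj_eq hQ hQ1 hle ?_
  intro ι hι
  by_contra hcon
  obtain ⟨u, hu, hu'⟩ := exists_off ι U some (Option.some_injective α) hU'
  obtain ⟨ι0, hι0, rfl⟩ := factor_none hι hu'
  have hinj : Function.Injective (⇑(sw none (some u)) ∘ some) :=
    (sw none (some u)).injective.comp (Option.some_injective α)
  have h1 : pull (⇑(sw none (some u)) ∘ some) Q1 ≤ P := by
    refine (pull_mono _ hle).trans ?_
    rw [← pull_pull, hQs u hu, hQP]
  have h3 := hP.2 (y := pull (⇑(sw none (some u)) ∘ some) Q1)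
    ⟨pull_prime _ hQ1.1.1, (F.func _ hinj).trans (pull_mono _ hQ1.1.2)⟩ h1
  have h4 := h3 (h2 ι0 hι0)
  rw [mem_pull, ren_ren] at h4
  exact hcon h4

lemma LD.KR2 (d : LD F S C h) [Finite S] [Finite C] {B' N' n1 : ℕ} (hk : KEY (F.adj h) B' N')
    (hn1 : ∀ {β : Type} [Finite β] [Nonempty β]
    (ι : S → β) (w : β → C) (Q : Ideal (RR K β)), Function.Injective ι → Q.IsPrime → F.I β ≤ Q →
    (∀ n' ≤ n1, ∀ e : Fin n' → β, Function.Injective e → pull e (d.PI β ι w) ≤ pull e Q) →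
    d.PI β ι w ≤ Q)
    {α : Type} [Finite α] {Q : Ideal (RR K (Option α))} (hQ : Q ∈ F.minP (Option α)) (U : Finset α)
    (hU : N' ≤ U.card) (hU' : Nat.card S + Nat.card C * (n1 + 1) + 1 ≤ U.card)
    (hs : ∀ u ∈ U, sim Q none (some u))
    (h2 : ∀ ι : S → Option α, Function.Injective ι → ren ι h ∈ Q) : pull some Q ∈ F.minP α := by
  have hP := hk.R (FI.adj_min hQ h2) U hU hs
  obtain ⟨P1, hP1, hle⟩ := exists_min hP.1.1 (FI.le_adj.trans hP.1.2)
  refine FI.adj_eq hP hP1 hle ?_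
  intro ι hι
  by_contra hcon
  obtain ⟨x, -, hx⟩ := exists_off ι U id Function.injective_id (by omega)
  obtain ⟨w, rfl⟩ := d.ex ι P1 hι hP1 hcon ⟨_, hx⟩
  obtain ⟨γ, V, hVU, hV, hγ⟩ := popular (ι := ι) w _ U hU'
  have hι' : Function.Injective (some ∘ ι) := (Option.some_injective α).comp hι
  set w' : Option α → C := fun o => o.elim γ w with hw'
  have hpull : pull some (d.PI _ (some ∘ ι) w') = d.PI _ ι w := by
    rw [d.pullf some ι w' (Option.some_injective α) hι]; rfl
  have hmin := d.minp (some ∘ ι) w' hι'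
  have hV1 : ∀ v ∈ V, sim (d.PI _ (some ∘ ι) w') none (some v) := by
    intro v hv
    exact d.sim_of hι' w' (by simp) (some_range.2 (hγ v hv).1) (hγ v hv).2.symm
  have hle2 : d.PI _ (some ∘ ι) w' ≤ Q := by
    refine hn1 _ _ _ hι' hQ.1.1 hQ.1.2 ?_
    intro n' hn' e he
    obtain ⟨u, hu, hu'⟩ := exists_off e V some (Option.some_injective α) (by
      rw [Nat.card_eq_fintype_card, Fintype.card_fin]; omega)
    obtain ⟨e0, he0, rfl⟩ := factor_none he hu'
    rw [← pull_pull _ (⇑(sw none (some u))), ← pull_pull _ (⇑(sw none (some u))), hV1 u hu, hs u (hVU hu), ← pull_pull, ← pull_pull, hpull]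
    exact pull_mono _ hle
  have := hQ.2 hmin.1 hle2
  exact d.hmem (some ∘ ι) w' hι' (this (h2 _ hι'))

theorem key_all (F : FI K k) : ∃ B N, KEY F B N := by
  induction F using (FI_wf K k).induction with
  | _ F ih =>
  by_cases hne : F.I Empty = ⊤
  · have hmin : ∀ {α : Type} {P : Ideal (RR K α)}, P ∉ F.minP α := by
      intro α P hP
      have h1 := F.func (fun x : Empty => (x.elim : α)) (fun x => x.elim)
      have h2 := h1.trans (pull_mono _ hP.1.2)
      rw [hne] at h2
      exact (pull_prime _ hP.1.1).ne_top (top_le_iff.1 h2)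
    refine ⟨0, 0, ⟨?_, ?_, ?_, ?_⟩⟩
    · intro α _ P hP; exact (hmin hP).elim
    · intro α _ P hP; exact (hmin hP).elim
    · intro α _ P _ hP; exact (hmin hP).elim
    · intro α _ P hP; exact (hmin hP).elim
  obtain ⟨S, hS, C, hC, h, d, hh⟩ := LOC2 F hne
  obtain ⟨B', N', hk⟩ := ih (F.adj h) (FI.adj_lt hh)
  obtain ⟨n1, hn1⟩ := d.NP
  set m := Nat.card S + Nat.card C * 2 + 3 + n1 + 1 with hm
  have hm1 : Nat.card C * (Nat.card S + Nat.card C * 2 + 3) ≤ Nat.card C * m := Nat.mul_le_mul_left _ (by omega)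
  have hm2 : Nat.card C * 2 ≤ Nat.card C * m := Nat.mul_le_mul_left _ (by omega)
  have hm3 : Nat.card C * (n1 + 1) ≤ Nat.card C * m := Nat.mul_le_mul_left _ (by omega)
  refine ⟨B' + (Nat.card S + Nat.card C), N' + Nat.card S + Nat.card C * m + 1, ⟨?_, ?_, ?_, ?_⟩⟩
  · intro α _ P hP; exact d.KA hk hP
  · intro α _ P hP U hU hs
    by_cases h2 : ∀ ι : S → α, Function.Injective ι → ren ι h ∈ P
    · exact d.KE2 hk hP U (by omega) (by omega) hs h2
    · push Not at h2
      obtain ⟨ι, hι, hh⟩ := h2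
      exact d.E1 hP U (by omega) hs hι hh
  · intro α _ Q Q' hQ hQ' hpull U hU hs hs'
    by_cases h2 : ∀ ι : S → Option α, Function.Injective ι → ren ι h ∈ Q
    · by_cases h2' : ∀ ι : S → Option α, Function.Injective ι → ren ι h ∈ Q'
      · exact hk.U (FI.adj_min hQ h2) (FI.adj_min hQ' h2') hpull U (by omega) hs hs'
      · push Not at h2'
        obtain ⟨ι, hι, hh⟩ := h2'
        obtain ⟨ι0, hι0, hh0⟩ := avoid hι hh U (by omega) hs'
        exact (d.U1 hQ' hQ hpull.symm U (by omega) hs' hs hι0 hh0).symm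
    · push Not at h2
      obtain ⟨ι, hι, hh⟩ := h2
      obtain ⟨ι0, hι0, hh0⟩ := avoid hι hh U (by omega) hs
      exact d.U1 hQ hQ' hpull U (by omega) hs hs' hι0 hh0
  · intro α _ Q hQ U hU hs
    by_cases h2 : ∀ ι : S → Option α, Function.Injective ι → ren ι h ∈ Q
    · exact d.KR2 hk hn1 hQ U (by omega) (by omega) hs h2
    · push Not at h2
      obtain ⟨ι, hι, hh⟩ := h2
      obtain ⟨ι0, hι0, hh0⟩ := avoid hι hh U (by omega) hs
      obtain ⟨w, rfl⟩ := d.ex (some ∘ ι0) Q ((Option.some_injective α).comp hι0) hQ hh0 ⟨none, by simp⟩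
      rw [d.pullf some ι0 w (Option.some_injective α) hι0]
      exact d.minp _ _ hι0

end Key2

section Count
variable {K : Type} [Field K] {k : ℕ} {F : FI K k} {B N : ℕ}

/-- `Q` has its large classes labelled by `f` -/
structure Dd (F : FI K k) (N : ℕ) {β L : Type} (f : β → Option L) (Q : Ideal (RR K β)) : Prop where
  mem : Q ∈ F.minP β
  same : ∀ x y i, f x = some i → f y = some i → sim Q x y
  clos : ∀ x y i, sim Q x y → f x = some i → f y = some i
  small : ∀ x, f x = none → Nat.card {y // sim Q x y} < N + 2

lemma sim_equiv {α β : Type} (e : α ≃ β) {Q : Ideal (RR K β)} {i j : α} :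
    sim (pull e Q) i j ↔ sim Q (e i) (e j) := by
  refine ⟨fun h => ?_, sim_pull e.injective⟩
  have h1 : sim (pull e Q) (e.symm (e i)) (e.symm (e j)) := by simpa using h
  have := sim_pull e.symm.injective h1
  rw [pull_pull] at this
  simpa using this

lemma Dd.equiv {α β L : Type} (e : α ≃ β) {f : β → Option L} {Q : Ideal (RR K β)}
    (h : Dd F N f Q) : Dd F N (f ∘ e) (pull e Q) where
  mem := minP_equiv e h.mem
  same := fun x y i hx hy => sim_equiv e |>.2 (h.same _ _ i hx hy)
  clos := fun x y i hxy hx => h.clos _ _ i (sim_equiv e |>.1 hxy) hx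
  small := fun x hx => by
    have h1 := h.small _ hx
    have : Nat.card {y // sim (pull e Q) x y} = Nat.card {y // sim Q (e x) y} :=
      Nat.card_congr (e.subtypeEquiv fun y => sim_equiv e)
    omega

lemma Dd.bij_equiv {α β L : Type} (e : α ≃ β) (f : β → Option L) :
    Set.BijOn (pull e) {Q : Ideal (RR K β) | Dd F N f Q} {P : Ideal (RR K α) | Dd F N (f ∘ e) P} := by
  refine ⟨fun Q hQ => Dd.equiv e hQ, ?_, ?_⟩
  · intro Q _ Q' _ h
    have := congrArg (pull e.symm) h
    simp only [pull_pull] at this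
    simpa using this
  · intro P hP
    refine ⟨pull e.symm P, ?_, ?_⟩
    · have := Dd.equiv e.symm hP
      rw [Function.comp_assoc] at this
      simpa using this
    · rw [pull_pull]; simp

lemma KEY.sim_iff (hk : KEY F B N) {α : Type} [Finite α] {Q : Ideal (RR K (Option α))}
    (hQ : Q ∈ F.minP (Option α)) (U : Finset α) (hU : N + 2 ≤ U.card)
    (hs : ∀ u ∈ U, sim Q none (some u)) (x y : α) :
    sim Q (some x) (some y) ↔ sim (pull some Q) x y := by
  classical
  refine ⟨sim_pull (Option.some_injective α), fun h => ?_⟩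
  unfold sim
  refine hk.U (minP_equiv _ hQ) hQ ?_ (U \ {x, y}) ?_ ?_ ?_
  · rw [pull_pull, sw_comp (Option.some_injective α), ← pull_pull]
    exact h
  · have h1 := Finset.le_card_sdiff {x, y} U
    have h2 : ({x, y} : Finset α).card ≤ 2 := Finset.card_le_two
    omega
  · intro v hv
    simp only [Finset.mem_sdiff, Finset.mem_insert, Finset.mem_singleton, not_or] at hv
    refine sim_pull (sw (some x) (some y)).injective ?_
    rw [sw_ne (by simp) (by simp), sw_ne (by simpa using hv.2.1) (by simpa using hv.2.2)]
    exact hs v hv.1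
  · intro v hv
    exact hs v (Finset.mem_sdiff.1 hv).1

lemma KEY.bij_some (hk : KEY F B N) {α L : Type} [Finite α] (f : Option α → Option L) (i : L)
    (hi : f none = some i) (hc : N + 2 ≤ Nat.card {x : α // f (some x) = some i}) :
    Set.BijOn (pull some) {Q : Ideal (RR K (Option α)) | Dd F N f Q}
      {P : Ideal (RR K α) | Dd F N (f ∘ some) P} := by
  classical
  have := Fintype.ofFinite α
  set U : Finset α := Finset.univ.filter (fun x => f (some x) = some i) with hUdef
  have hU : N + 2 ≤ U.card := by
    rw [Nat.card_eq_fintype_card, Fintype.card_subtype] at hc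
    exact hc
  have hU' : N ≤ U.card := by omega
  have memU : ∀ u, u ∈ U ↔ f (some u) = some i := by intro u; simp [hUdef]
  refine ⟨?_, ?_, ?_⟩
  · intro Q hQ
    have hs : ∀ u ∈ U, sim Q none (some u) := fun u hu => hQ.same _ _ i hi ((memU u).1 hu)
    have hiff := hk.sim_iff hQ.mem U hU hs
    refine ⟨hk.R hQ.mem U hU' hs, ?_, ?_, ?_⟩
    · intro x y j hx hy
      exact (hiff x y).1 (hQ.same _ _ j hx hy)
    · intro x y j hxy hx
      exact hQ.clos _ _ j ((hiff x y).2 hxy) hx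
    · intro x hx
      refine lt_of_le_of_lt ?_ (hQ.small _ hx)
      exact Nat.card_le_card_of_injective
        (fun y : {y // sim (pull some Q) x y} => (⟨some y.1, (hiff x y.1).2 y.2⟩ : {y // sim Q (some x) y}))
        (fun y y' h => Subtype.ext (Option.some_injective α (congrArg Subtype.val h)))
  · intro Q hQ Q' hQ' h
    exact hk.U hQ.mem hQ'.mem h U hU' (fun u hu => hQ.same _ _ i hi ((memU u).1 hu))
      (fun u hu => hQ'.same _ _ i hi ((memU u).1 hu))
  · intro P hP
    obtain ⟨Q, hQ, rfl, hs⟩ := hk.E hP.mem U hU' (fun u hu v hv =>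
      hP.same u v i ((memU u).1 hu) ((memU v).1 hv))
    have hiff := hk.sim_iff hQ U hU hs
    obtain ⟨u0, hu0⟩ := Finset.card_pos.1 (by omega : 0 < U.card)
    have hcl : ∀ x y j, sim Q x y → f x = some j → f y = some j := by
      rintro (_ | x) (_ | y) j hxy hx
      · exact hx
      · have h1 := (hiff u0 y).1 (sim_trans (sim_symm (hs u0 hu0)) hxy)
        rw [hi] at hx
        rw [← hx]
        exact hP.clos _ _ i h1 ((memU u0).1 hu0)
      · have h1 := (hiff x u0).1 (sim_trans hxy (hs u0 hu0))
        have h2 : f (some u0) = some j := hP.clos _ _ j h1 hx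
        rw [hi, ← (memU u0).1 hu0, h2]
      · exact hP.clos x y j ((hiff x y).1 hxy) hx
    refine ⟨Q, ⟨hQ, ?_, hcl, ?_⟩, rfl⟩
    · rintro (_ | x) (_ | y) j hx hy
      · exact sim_refl _ _
      · rw [hi] at hx
        exact hs y ((memU y).2 (hy.trans hx.symm))
      · rw [hi] at hy
        exact sim_symm (hs x ((memU x).2 (hx.trans hy.symm)))
      · exact (hiff x y).2 (hP.same x y j hx hy)
    · rintro (_ | x) hx
      · rw [hi] at hx; cases hx
      · refine lt_of_le_of_lt ?_ (hP.small x hx)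
        have hex : ∀ y : {y // sim Q (some x) y}, ∃ y', some y' = y.1 := by
          rintro ⟨_ | y, hy⟩
          · have := hcl _ _ i (sim_symm hy) hi
            rw [this] at hx; cases hx
          · exact ⟨y, rfl⟩
        choose g hg using hex
        exact Nat.card_le_card_of_injective
          (fun y : {y // sim Q (some x) y} => (⟨g y, (hiff x _).1 (by rw [hg]; exact y.2)⟩ : {y // sim (pull some Q) x y}))
          (fun y y' h => Subtype.ext (by rw [← hg y, ← hg y']; exact congrArg some (congrArg Subtype.val h)))

lemma KEY.bij (hk : KEY F B N) {L : Type} (n : ℕ) : ∀ {α β : Type} [Finite α] [Finite β]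
    (e : α → β) (_ : Function.Injective e) (f : β → Option L)
    (_ : ∀ x, x ∉ Set.range e → f x ≠ none)
    (_ : ∀ i, N + 2 ≤ Nat.card {x : α // f (e x) = some i})
    (_ : Nat.card β = Nat.card α + n),
    Set.BijOn (pull e) {Q : Ideal (RR K β) | Dd F N f Q} {P : Ideal (RR K α) | Dd F N (f ∘ e) P} := by
  classical
  induction n with
  | zero =>
    intro α β _ _ e he f _ _ hn
    have hb : Function.Bijective e := by
      have := Fintype.ofFinite α
      have := Fintype.ofFinite β
      rw [Fintype.bijective_iff_injective_and_card]
      rw [Nat.card_eq_fintype_card, Nat.card_eq_fintype_card] at hn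
      exact ⟨he, by omega⟩
    exact Dd.bij_equiv (Equiv.ofBijective e hb) f
  | succ n ih =>
    intro α β _ _ e he f hf hc hn
    obtain ⟨b, hb⟩ : ∃ b, b ∉ Set.range e := by
      by_contra hcon
      push Not at hcon
      have := Nat.card_le_card_of_surjective e hcon
      omega
    let e' : Option α → β := fun o => o.elim b e
    have he' : Function.Injective e' := by
      rintro (_ | x) (_ | y) hxy
      · rfl
      · exact (hb ⟨y, hxy.symm⟩).elim
      · exact (hb ⟨x, hxy⟩).elim
      · exact congrArg some (he hxy)
    have h1 := ih e' he' f (fun x hx => hf x (fun ⟨y, hy⟩ => hx ⟨some y, hy⟩)) (fun i => by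
      refine (hc i).trans ?_
      exact Nat.card_le_card_of_injective
        (fun x : {x : α // f (e x) = some i} => (⟨some x.1, x.2⟩ : {x : Option α // f (e' x) = some i}))
        (fun y y' h => Subtype.ext (Option.some_injective α (congrArg Subtype.val h))))
      (by rw [Finite.card_option]; omega)
    obtain ⟨i, hi⟩ := Option.ne_none_iff_exists'.1 (hf b hb)
    have h2 := hk.bij_some (f ∘ e') i hi (hc i)
    have h3 := h2.comp h1
    have h4 : pull (K := K) some ∘ pull e' = pull e := by
      funext Q; exact pull_pull _ _ _
    rw [h4] at h3
    exact h3

end Count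

lemma ext_equiv {α α' β A : Type} [Finite α] [Finite α'] (f : α → A) (f' : α' → A)
    (e : β → α) (e' : β → α') (he : Function.Injective e) (he' : Function.Injective e')
    (hf : ∀ y, f (e y) = f' (e' y)) (hc : ∀ a, Nat.card {x // f x = a} = Nat.card {x // f' x = a}) :
    ∃ E : α ≃ α', (∀ x, f' (E x) = f x) ∧ ∀ y, E (e y) = e' y := by
  classical
  have := Fintype.ofFinite α
  have := Fintype.ofFinite α'
  have key : ∀ a, ∃ g : {x // f x = a} → α', Function.Injective g ∧ (∀ x, f' (g x) = a) ∧
      (∀ y (hy : f (e y) = a), g ⟨e y, hy⟩ = e' y) ∧ ∀ x', f' x' = a → ∃ x, g x = x' := by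
    intro a
    obtain ⟨g0⟩ : Nonempty ({x // f x = a} ≃ {x // f' x = a}) := (Finite.card_eq).1 (hc a)
    let φ : {x // f x = a} → α' := fun x => if h : ∃ y, e y = x.1 then e' h.choose else (g0 x).1
    have hφ : ∀ y (hy : f (e y) = a), φ ⟨e y, hy⟩ = e' y := by
      intro y hy
      have h : ∃ y', e y' = e y := ⟨y, rfl⟩
      have h1 : φ ⟨e y, hy⟩ = e' h.choose := dif_pos h
      rw [h1, he h.choose_spec]
    obtain ⟨g, hg⟩ := Set.MapsTo.exists_equiv_extend_of_card_eq (α := {x // f x = a})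
      (t := Finset.univ.filter fun x => f' x = a) (s := {x | ∃ y, e y = x.1}) (f := φ) (by
        have := hc a
        rw [Nat.card_eq_fintype_card, Nat.card_eq_fintype_card] at this
        rw [this, Fintype.card_subtype]) (by
        rintro ⟨x, hx⟩ ⟨y, rfl⟩
        rw [hφ]
        simp [← hf, hx]) (by
        rintro ⟨x, hx⟩ ⟨y, rfl⟩ ⟨x', hx'⟩ ⟨y', rfl⟩ h
        rw [hφ, hφ] at h
        have := he' h
        subst this
        rfl)
    refine ⟨fun x => (g x).1, fun x y h => g.injective (Subtype.ext h), fun x => ?_, fun y hy => ?_, fun x' hx' => ?_⟩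
    · exact (Finset.mem_filter.1 (g x).2).2
    · change (g ⟨e y, hy⟩ : α') = _
      rw [hg _ ⟨y, rfl⟩, hφ]
    · obtain ⟨x, hx⟩ := g.surjective ⟨x', by simp [hx']⟩
      exact ⟨x, congrArg Subtype.val hx⟩
  choose g hg1 hg2 hg3 hg4 using key
  have hE : ∀ a x (hx : f x = a), g (f x) ⟨x, rfl⟩ = g a ⟨x, hx⟩ := by
    rintro a x rfl; rfl
  have hb : Function.Bijective (fun x => g (f x) ⟨x, rfl⟩) := by
    constructor
    · intro x y hxy
      simp only at hxy
      have h1 : f x = f y := by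
        rw [← hg2 (f x) ⟨x, rfl⟩, ← hg2 (f y) ⟨y, rfl⟩, hxy]
      rw [hE _ x h1] at hxy
      exact congrArg Subtype.val (hg1 _ hxy)
    · intro x'
      obtain ⟨⟨x, hx⟩, hx2⟩ := hg4 (f' x') x' rfl
      exact ⟨x, by simp only; rw [hE _ x hx, hx2]⟩
  refine ⟨Equiv.ofBijective _ hb, fun x => hg2 _ _, fun y => hg3 _ y rfl⟩

section Rpr
variable {K : Type} [Field K] {k : ℕ} {F : FI K k} {B N : ℕ}

lemma pull_perm {α : Type} [Finite α] {Q : Ideal (RR K α)} (π : Equiv.Perm α)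
    (h : ∀ x, sim Q x (π x)) : pull π Q = Q := by
  classical
  set S : Set (Equiv.Perm α) := {τ | ∃ i j, i ≠ j ∧ sim Q i j ∧ τ = Equiv.swap i j}
  have hS : ∀ τ ∈ S, τ.IsSwap := by
    rintro _ ⟨i, j, hij, -, rfl⟩
    exact ⟨i, j, hij, rfl⟩
  have hπ : π ∈ Subgroup.closure S := by
    rw [mem_closure_isSwap hS]
    refine ⟨Set.toFinite _, fun x => ?_⟩
    by_cases hx : x = π x
    · rw [← hx]; exact MulAction.mem_orbit_self _
    · exact ⟨⟨Equiv.swap x (π x), Subgroup.subset_closure ⟨x, π x, hx, h x, rfl⟩⟩,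
        Equiv.swap_apply_left _ _⟩
  clear h
  induction hπ using Subgroup.closure_induction with
  | mem τ hτ =>
    obtain ⟨i, j, -, hs, rfl⟩ := hτ
    unfold sim sw at hs
    convert hs
  | one => exact pull_id Q
  | mul a b _ _ ha hb =>
    rw [Equiv.Perm.coe_mul, ← pull_pull, ha, hb]
  | inv a _ ha => exact (pull_symm a).2 ha.symm

def f0 (N : ℕ) (T L : Type) : T ⊕ L × Fin (N + 2) → Option L :=
  Sum.elim (fun _ => none) (fun p => some p.1)

def gg (N : ℕ) {T L T' L' : Type} (ρ : T ≃ T') (σ : L ≃ L') :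
    T ⊕ L × Fin (N + 2) ≃ T' ⊕ L' × Fin (N + 2) :=
  Equiv.sumCongr ρ (Equiv.prodCongr σ (Equiv.refl _))

lemma f0_gg {T L T' L' : Type} (ρ : T ≃ T') (σ : L ≃ L') (y) :
    f0 N T' L' (gg N ρ σ y) = (f0 N T L y).map σ := by
  rcases y with y | y <;> rfl

lemma f0_card {T L : Type} (i : L) : Nat.card {y // f0 N T L y = some i} = N + 2 := by
  have E : {y // f0 N T L y = some i} ≃ Fin (N + 2) :=
    { toFun := fun y => match y with
        | ⟨Sum.inr p, _⟩ => p.2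
        | ⟨Sum.inl _, h⟩ => by cases h
      invFun := fun j => ⟨Sum.inr (i, j), rfl⟩
      left_inv := by
        rintro ⟨y | ⟨i', j⟩, h⟩
        · cases h
        · have : i' = i := Option.some_injective _ h
          subst this; rfl
      right_inv := fun j => rfl }
  rw [Nat.card_congr E, Nat.card_eq_fintype_card, Fintype.card_fin]

structure Rpr (F : FI K k) (N : ℕ) {T L α : Type} (z : Ideal (RR K (T ⊕ L × Fin (N + 2)))) (m : L → ℕ)
    (Q : Ideal (RR K α)) (f : α → Option L) (e : T ⊕ L × Fin (N + 2) → α) : Prop where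
  dd : Dd F N f Q
  inj : Function.Injective e
  fe : ∀ y, f (e y) = f0 N T L y
  onto : ∀ x, f x = none → x ∈ Set.range e
  card : ∀ i, Nat.card {x // f x = some i} = N + 2 + m i
  z : pull e Q = z

section
variable {T L T' L' α α' : Type} [Finite α] [Finite α']
  {z : Ideal (RR K (T ⊕ L × Fin (N + 2)))} {m : L → ℕ}
  {Q : Ideal (RR K α)} {f : α → Option L} {e : T ⊕ L × Fin (N + 2) → α}
  {z' : Ideal (RR K (T' ⊕ L' × Fin (N + 2)))} {m' : L' → ℕ}
  {Q' : Ideal (RR K α')} {f' : α' → Option L'} {e' : T' ⊕ L' × Fin (N + 2) → α'}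

lemma Rpr.exT (r : Rpr F N z m Q f e) {x : α} (hx : f x = none) : ∃ t, e (Sum.inl t) = x := by
  obtain ⟨y, rfl⟩ := r.onto x hx
  rcases y with t | p
  · exact ⟨t, rfl⟩
  · rw [r.fe] at hx; cases hx

lemma Rpr.card_none (r : Rpr F N z m Q f e) : Nat.card {x // f x = none} = Nat.card T := by
  symm
  refine Nat.card_congr (Equiv.ofBijective (fun t => ⟨e (Sum.inl t), r.fe _⟩) ⟨?_, ?_⟩)
  · intro t t' h
    exact Sum.inl_injective (r.inj (congrArg Subtype.val h))
  · rintro ⟨x, hx⟩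
    obtain ⟨t, rfl⟩ := r.exT hx
    exact ⟨t, rfl⟩

lemma bij_e (hk : KEY F B N) (he : Function.Injective e) (hfe : ∀ y, f (e y) = f0 N T L y)
    (hon : ∀ x, f x = none → x ∈ Set.range e) :
    Set.BijOn (pull e) {Q : Ideal (RR K α) | Dd F N f Q} {P | Dd F N (f0 N T L) P} := by
  have := Finite.of_injective e he
  have h1 : f ∘ e = f0 N T L := funext hfe
  rw [← h1]
  refine hk.bij (Nat.card α - Nat.card (T ⊕ L × Fin (N + 2))) e he f (fun x hx h => hx (hon x h)) (fun i => ?_) ?_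
  · simp only [hfe]; exact (f0_card i).ge
  · have := Nat.card_le_card_of_injective e he
    omega

lemma Rpr.ddz (hk : KEY F B N) (r : Rpr F N z m Q f e) : Dd F N (f0 N T L) z := by
  rw [← r.z]
  exact (bij_e hk r.inj r.fe r.onto).mapsTo r.dd

lemma map_inj {σ : L ≃ L'} {a b : Option L} (h : a.map σ = b.map σ) : a = b :=
  Option.map_injective σ.injective h

lemma Dd.relabel (σ : L ≃ L') (h : Dd F N (fun x => (f x).map σ) Q) : Dd F N f Q where
  mem := h.mem
  same := fun x y i hx hy => h.same x y (σ i) (by simp [hx]) (by simp [hy])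
  clos := fun x y i hxy hx => by
    have := h.clos x y (σ i) hxy (by simp [hx])
    exact map_inj (σ := σ) (this.trans (by simp))
  small := fun x hx => h.small x (by simp [hx])

lemma Rpr.iso (hk : KEY F B N) (r : Rpr F N z m Q f e) (r' : Rpr F N z' m' Q' f' e')
    (ρ : T ≃ T') (σ : L ≃ L') (hm : ∀ i, m i = m' (σ i)) (hz : pull (gg N ρ σ) z' = z) :
    ∃ E : α ≃ α', pull E Q' = Q := by
  obtain ⟨E, hE1, hE2⟩ := ext_equiv (fun x => (f x).map σ) f' e (e' ∘ gg N ρ σ) r.inj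
    (r'.inj.comp (gg N ρ σ).injective) (fun y => by
      rw [Function.comp_apply, r'.fe, r.fe, f0_gg]) (by
      rintro (_ | j)
      · simp only [Option.map_eq_none_iff]
        rw [r.card_none, r'.card_none]; exact Nat.card_congr ρ
      · rw [r'.card j]
        have := r.card (σ.symm j)
        rw [hm, Equiv.apply_symm_apply] at this
        rw [← this]
        congr 2
        funext x
        rcases f x with _ | i
        · simp
        · simp [Equiv.eq_symm_apply])
  refine ⟨E, (bij_e hk r.inj r.fe r.onto).injOn ?_ r.dd ?_⟩
  · have := Dd.equiv E r'.dd
    have h2 : f' ∘ E = fun x => (f x).map σ := funext hE1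
    rw [h2] at this
    exact this.relabel σ
  · rw [pull_pull, r.z, ← hz, ← r'.z, pull_pull]
    congr 1
    exact funext hE2

lemma Rpr.big (r : Rpr F N z m Q f e) {x : α} {i : L} (hx : f x = some i) :
    N + 2 ≤ Nat.card {y // sim Q x y} := by
  have h1 := r.card i
  have : Nat.card {x // f x = some i} ≤ Nat.card {y // sim Q x y} :=
    Nat.card_le_card_of_injective (fun y => ⟨y.1, r.dd.same _ _ i hx y.2⟩)
      (fun y y' h => Subtype.ext (by simpa using h))
  omega

lemma Rpr.transport (r : Rpr F N z m Q f e) (E : α' ≃ α) :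
    Rpr F N z m (pull E Q) (f ∘ E) (E.symm ∘ e) where
  dd := Dd.equiv E r.dd
  inj := E.symm.injective.comp r.inj
  fe := fun y => by simp [r.fe]
  onto := fun x hx => by
    obtain ⟨y, hy⟩ := r.onto _ hx
    exact ⟨y, by simp [hy]⟩
  card := fun i => by
    rw [← r.card i]
    exact Nat.card_congr (E.subtypeEquiv fun y => Iff.rfl)
  z := by
    rw [pull_pull, ← Function.comp_assoc, Equiv.self_comp_symm, Function.id_comp, r.z]
end

section
variable {T L T' L' α : Type} [Finite α]
  {z : Ideal (RR K (T ⊕ L × Fin (N + 2)))} {m : L → ℕ}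
  {Q : Ideal (RR K α)} {f : α → Option L} {e : T ⊕ L × Fin (N + 2) → α}
  {z' : Ideal (RR K (T' ⊕ L' × Fin (N + 2)))} {m' : L' → ℕ}
  {f' : α → Option L'} {e' : T' ⊕ L' × Fin (N + 2) → α}

lemma Rpr.none_of (r : Rpr F N z m Q f e) (r' : Rpr F N z' m' Q f' e') {x : α} (hx : f x = none) :
    f' x = none := by
  rcases h : f' x with _ | i
  · rfl
  · have h1 := r'.big h
    have h2 := r.dd.small x hx
    omega

lemma Rpr.sig (r : Rpr F N z m Q f e) (r' : Rpr F N z' m' Q f' e') :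
    ∃ σ : L → L', ∀ x, f' x = (f x).map σ := by
  have h1 : ∀ i, ∃ j, f' (e (Sum.inr (i, 0))) = some j := by
    intro i
    rcases h : f' (e (Sum.inr (i, 0))) with _ | j
    · have := r'.none_of r h
      rw [r.fe] at this; cases this
    · exact ⟨j, rfl⟩
  choose σ hσ using h1
  refine ⟨σ, fun x => ?_⟩
  rcases h : f x with _ | i
  · exact r.none_of r' h
  · have h2 : sim Q (e (Sum.inr (i, 0))) x := r.dd.same _ _ i (r.fe _) h
    exact r'.dd.clos _ _ _ h2 (hσ i)

lemma Rpr.rho (r : Rpr F N z m Q f e) (r' : Rpr F N z' m' Q f' e') :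
    ∃ ρ : T → T', ∀ t, e' (Sum.inl (ρ t)) = e (Sum.inl t) := by
  have h1 : ∀ t, ∃ t', e' (Sum.inl t') = e (Sum.inl t) := by
    intro t
    exact r'.exT (r.none_of r' (r.fe _))
  choose ρ hρ using h1
  exact ⟨ρ, hρ⟩

lemma Rpr.uniq (r : Rpr F N z m Q f e) (r' : Rpr F N z' m' Q f' e') :
    ∃ (ρ : T ≃ T') (σ : L ≃ L'), (∀ i, m i = m' (σ i)) ∧ pull (gg N ρ σ) z' = z := by
  obtain ⟨s1, hs1⟩ := r.sig r'
  obtain ⟨s2, hs2⟩ := r'.sig r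
  obtain ⟨t1, ht1⟩ := r.rho r'
  obtain ⟨t2, ht2⟩ := r'.rho r
  have hs12 : ∀ i, s2 (s1 i) = i := by
    intro i
    have h := hs2 (e (Sum.inr (i, 0)))
    rw [hs1, r.fe] at h
    exact (Option.some_injective _ h).symm
  have hs21 : ∀ i, s1 (s2 i) = i := by
    intro i
    have h := hs1 (e' (Sum.inr (i, 0)))
    rw [hs2, r'.fe] at h
    exact (Option.some_injective _ h).symm
  have ht12 : ∀ i, t2 (t1 i) = i := fun i => Sum.inl_injective (r.inj (by rw [ht2, ht1]))
  have ht21 : ∀ i, t1 (t2 i) = i := fun i => Sum.inl_injective (r'.inj (by rw [ht1, ht2]))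
  let σ : L ≃ L' := ⟨s1, s2, hs12, hs21⟩
  let ρ : T ≃ T' := ⟨t1, t2, ht12, ht21⟩
  have hs1' : ∀ x, f' x = (f x).map σ := hs1
  refine ⟨ρ, σ, ?_, ?_⟩
  · intro i
    have h1 := r.card i
    have h2 := r'.card (σ i)
    have : Nat.card {x // f x = some i} = Nat.card {x // f' x = some (σ i)} := by
      congr 2
      funext x
      rw [hs1']
      rcases f x with _ | j <;> simp
    omega
  · obtain ⟨E, hE1, hE2⟩ := ext_equiv f f e (e' ∘ gg N ρ σ) r.inj
      (r'.inj.comp (gg N ρ σ).injective) (fun y => by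
        apply map_inj (σ := σ)
        rw [← hs1' ((e' ∘ _) _), Function.comp_apply, r'.fe, r.fe, f0_gg]) (fun a => rfl)
    have h3 : pull E Q = Q := by
      refine pull_perm E fun x => ?_
      rcases h : f x with _ | i
      · obtain ⟨t, rfl⟩ := r.exT h
        rw [hE2]
        have : (e' ∘ gg N ρ σ) (Sum.inl t) = e (Sum.inl t) := ht1 t
        rw [this]
        exact sim_refl _ _
      · exact r.dd.same _ _ i h ((hE1 x).trans h)
    rw [← r'.z, ← r.z, pull_pull]
    conv_rhs => rw [← h3, pull_pull]
    congr 1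
    exact (funext hE2).symm
end

end Rpr

section Rep2
variable {K : Type} [Field K] {k : ℕ} {F : FI K k} {B N : ℕ}

lemma Rpr.total {T L α : Type} [Finite α] [Fintype L]
    {z : Ideal (RR K (T ⊕ L × Fin (N + 2)))} {m : L → ℕ}
    {Q : Ideal (RR K α)} {f : α → Option L} {e : T ⊕ L × Fin (N + 2) → α} (r : Rpr F N z m Q f e) :
    Nat.card α = Nat.card T + ∑ i, (N + 2 + m i) := by
  rw [Nat.card_congr (Equiv.sigmaFiberEquiv f).symm, Nat.card_sigma, Fintype.sum_option, r.card_none]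
  simp only [r.card]

lemma Rpr.exists (hk : KEY F B N) {T L α : Type} [Finite T] [Finite α] [Fintype L]
    {z : Ideal (RR K (T ⊕ L × Fin (N + 2)))} (hz : Dd F N (f0 N T L) z) (m : L → ℕ)
    (hc : Nat.card α = Nat.card T + ∑ i, (N + 2 + m i)) :
    ∃ Q ∈ F.minP α, ∃ f e, Rpr F N z m Q f e := by
  have hE : Nat.card α = Nat.card (T ⊕ Σ i, Fin (N + 2 + m i)) := by
    rw [Nat.card_sum, Nat.card_sigma, hc]; simp
  obtain ⟨E⟩ := Finite.card_eq.1 hE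
  let g : (T ⊕ Σ i, Fin (N + 2 + m i)) → Option L := Sum.elim (fun _ => none) (fun p => some p.1)
  let c : T ⊕ L × Fin (N + 2) → T ⊕ Σ i, Fin (N + 2 + m i) :=
    Sum.map id (fun p => ⟨p.1, Fin.castLE (by omega) p.2⟩)
  have hcinj : Function.Injective c := by
    refine Function.injective_id.sumMap ?_
    rintro ⟨i, x⟩ ⟨j, y⟩ h
    simp only [Sigma.mk.injEq] at h
    obtain ⟨rfl, h⟩ := h
    have := eq_of_heq h
    rw [Fin.castLE_inj] at this
    rw [this]
  have hfe : ∀ y, (g ∘ E) ((E.symm ∘ c) y) = f0 N T L y := by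
    intro y
    simp only [Function.comp_apply, Equiv.apply_symm_apply]
    rcases y with y | y <;> rfl
  have hon : ∀ x, (g ∘ E) x = none → x ∈ Set.range (E.symm ∘ c) := by
    intro x hx
    rcases h : E x with t | p
    · refine ⟨Sum.inl t, ?_⟩
      change E.symm (Sum.inl t) = x
      rw [← h]; simp
    · rw [Function.comp_apply, h] at hx; cases hx
  obtain ⟨Q, hQ, hQz⟩ := (bij_e hk (E.symm.injective.comp hcinj) hfe hon).surjOn hz
  refine ⟨Q, hQ.mem, g ∘ E, E.symm ∘ c, hQ, E.symm.injective.comp hcinj, hfe, hon, ?_, hQz⟩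
  intro i
  have h1 : Nat.card {x // (g ∘ E) x = some i} = Nat.card {y // g y = some i} :=
    Nat.card_congr (E.subtypeEquiv fun _ => Iff.rfl)
  have E2 : {y // g y = some i} ≃ Fin (N + 2 + m i) :=
    { toFun := fun y => match y with
        | ⟨Sum.inr p, h⟩ => Fin.cast (by rw [Option.some_injective _ h]) p.2
        | ⟨Sum.inl _, h⟩ => by cases h
      invFun := fun j => ⟨Sum.inr ⟨i, j⟩, rfl⟩
      left_inv := by
        rintro ⟨y | ⟨i', j⟩, h⟩
        · cases h
        · have : i' = i := Option.some_injective _ h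
          subst this; rfl
      right_inv := fun j => rfl }
  rw [h1, Nat.card_congr E2, Nat.card_eq_fintype_card, Fintype.card_fin]

lemma Rpr.of (hk : KEY F B N) {α : Type} [Finite α] {Q : Ideal (RR K α)} (hQ : Q ∈ F.minP α) :
    ∃ ℓ ≤ B, ∃ s ≤ (N + 2) * B, ∃ (z : Ideal (RR K (Fin s ⊕ Fin ℓ × Fin (N + 2)))) (m : Fin ℓ → ℕ)
      (f : α → Option (Fin ℓ)) (e : Fin s ⊕ Fin ℓ × Fin (N + 2) → α), Rpr F N z m Q f e := by
  classical
  have := Fintype.ofFinite α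
  let st : Setoid α := ⟨sim Q, sim_refl Q, sim_symm, sim_trans⟩
  have hst : ∀ x y : α, (Quotient.mk st x = Quotient.mk st y) ↔ sim Q x y := fun x y => Quotient.eq
  obtain ⟨col, hcol⟩ := hk.A hQ
  let big : Quotient st → Prop := fun q => N + 2 ≤ Nat.card {y // Quotient.mk st y = q}
  have hbigx : ∀ x, Nat.card {y // sim Q x y} = Nat.card {y // Quotient.mk st y = Quotient.mk st x} := by
    intro x
    congr 2
    funext y
    rw [hst]
    exact propext ⟨sim_symm, sim_symm⟩
  let Lt := {q : Quotient st // big q}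
  let Tt := {x : α // ¬ big (Quotient.mk st x)}
  have hL : Nat.card Lt ≤ B := by
    have h1 := Nat.card_le_card_of_injective (fun q : Lt => col q.1.out) (by
      intro q q' h
      have h2 := (hst _ _).2 (hcol _ _ h)
      rw [Quotient.out_eq, Quotient.out_eq] at h2
      exact Subtype.ext h2)
    simpa using h1
  have hT : Nat.card Tt ≤ (N + 2) * B := by
    have h1 := Finset.card_le_mul_card_image_of_maps_to (f := fun x : Tt => col x.1)
      (s := Finset.univ) (t := Finset.univ) (fun _ _ => Finset.mem_univ _) (N + 2) (by
      intro b _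
      by_cases hb : ∃ x : Tt, col x.1 = b
      · obtain ⟨x, hx⟩ := hb
        have h2 := x.2
        simp only [big, not_le] at h2
        rw [← hbigx] at h2
        have h3 : Nat.card {y : Tt // col y.1 = b} ≤ Nat.card {y // sim Q x.1 y} :=
          Nat.card_le_card_of_injective (fun y => ⟨y.1.1, hcol _ _ (hx.trans y.2.symm)⟩)
            (fun y y' h => Subtype.ext (Subtype.ext (by simpa using h)))
        rw [Nat.card_eq_fintype_card (α := {y : Tt // col y.1 = b}), Fintype.card_subtype] at h3
        omega
      · have : (Finset.univ.filter fun a : Tt => col a.1 = b) = ∅ := by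
          rw [Finset.filter_eq_empty_iff]
          intro x _ h
          exact hb ⟨x, h⟩
        rw [this]; simp)
    rw [Nat.card_eq_fintype_card]
    simpa using h1
  refine ⟨_, hL, _, hT, ?_⟩
  let EL : Lt ≃ Fin (Nat.card Lt) := Finite.equivFin Lt
  let ET : Tt ≃ Fin (Nat.card Tt) := Finite.equivFin Tt
  let f : α → Option (Fin (Nat.card Lt)) := fun x =>
    if h : big (Quotient.mk st x) then some (EL ⟨_, h⟩) else none
  have hf1 : ∀ x i, f x = some i ↔ Quotient.mk st x = (EL.symm i).1 := by
    intro x i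
    by_cases h : big (Quotient.mk st x)
    · have : f x = some (EL ⟨_, h⟩) := dif_pos h
      rw [this, Option.some_inj, ← Equiv.eq_symm_apply, Subtype.ext_iff]
    · have : f x = none := dif_neg h
      rw [this]
      constructor
      · intro h'; cases h'
      · intro h'; rw [h'] at h; exact (h (EL.symm i).2).elim
  have hf0 : ∀ x, f x = none ↔ ¬ big (Quotient.mk st x) := by
    intro x
    by_cases h : big (Quotient.mk st x)
    · have : f x = some (EL ⟨_, h⟩) := dif_pos h
      simp [this, h]
    · have : f x = none := dif_neg h
      simp [this, h]
  have hemb : ∀ i : Fin (Nat.card Lt), ∃ g : Fin (N + 2) → α, Function.Injective g ∧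
      ∀ j, f (g j) = some i := by
    intro i
    have h1 : N + 2 ≤ Nat.card {y // Quotient.mk st y = (EL.symm i).1} := (EL.symm i).2
    refine ⟨fun j => ((Finite.equivFin {y // Quotient.mk st y = (EL.symm i).1}).symm (Fin.castLE h1 j)).1, ?_, ?_⟩
    · intro j j' h
      have := (Equiv.injective _) (Subtype.ext h)
      rwa [Fin.castLE_inj] at this
    · intro j
      rw [hf1]
      exact ((Finite.equivFin {y // Quotient.mk st y = (EL.symm i).1}).symm (Fin.castLE h1 j)).2
  choose g hg1 hg2 using hemb
  let e : Fin (Nat.card Tt) ⊕ Fin (Nat.card Lt) × Fin (N + 2) → α :=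
    Sum.elim (fun t => (ET.symm t).1) (fun p => g p.1 p.2)
  have hcard : ∀ i, N + 2 ≤ Nat.card {x // f x = some i} := by
    intro i
    have := Nat.card_le_card_of_injective
      (fun j : Fin (N + 2) => (⟨g i j, hg2 i j⟩ : {x // f x = some i}))
      (fun j j' h => hg1 i (congrArg Subtype.val h))
    simpa using this
  have hfe : ∀ y, f (e y) = f0 N _ _ y := by
    rintro (t | p)
    · exact (hf0 _).2 (ET.symm t).2
    · exact hg2 p.1 p.2
  refine ⟨pull e Q, fun i => Nat.card {x // f x = some i} - (N + 2), f, e, ⟨hQ, ?_, ?_, ?_⟩, ?_, hfe, ?_, ?_, rfl⟩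
  · intro x y i hx hy
    rw [← hst, (hf1 x i).1 hx, (hf1 y i).1 hy]
  · intro x y i hxy hx
    rw [hf1, ← (hst x y).2 hxy]
    exact (hf1 x i).1 hx
  · intro x hx
    have := (hf0 x).1 hx
    simp only [big, not_le] at this
    rw [hbigx]; exact this
  · rintro (t | p) (t' | p') h
    · exact congrArg Sum.inl (ET.symm.injective (Subtype.ext h))
    · have h1 := hfe (Sum.inl t)
      rw [h, hfe] at h1; cases h1
    · have h1 := hfe (Sum.inr p)
      rw [h, hfe] at h1; cases h1
    · have h1 := hfe (Sum.inr p)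
      rw [h, hfe] at h1
      have h2 : p'.1 = p.1 := Option.some_injective _ h1
      obtain ⟨i, j⟩ := p
      obtain ⟨i', j'⟩ := p'
      simp only at h2
      subst h2
      have h3 : j = j' := hg1 _ h
      rw [h3]
  · intro x hx
    refine ⟨Sum.inl (ET ⟨x, (hf0 x).1 hx⟩), ?_⟩
    change (ET.symm (ET ⟨x, (hf0 x).1 hx⟩)).1 = x
    simp
  · intro i
    have := hcard i
    omega

end Rep2

section Eqp

/-- eventually quasi-polynomial sequences -/
def EQP (a : ℕ → ℚ) : Prop :=
  ∃ D : ℕ, 0 < D ∧ ∃ p : ℕ → Polynomial ℚ, ∃ q0 : ℕ,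
    ∀ r q : ℕ, q0 ≤ q → a (r + D * q) = (p r).eval (q : ℚ)

lemma EQP.const (c : ℚ) : EQP fun _ => c :=
  ⟨1, one_pos, fun _ => Polynomial.C c, 0, fun r q _ => by simp⟩

lemma EQP.add {a b : ℕ → ℚ} (ha : EQP a) (hb : EQP b) : EQP fun n => a n + b n := by
  obtain ⟨D, hD, p, q0, h⟩ := ha
  obtain ⟨D', hD', p', q0', h'⟩ := hb
  refine ⟨D * D', Nat.mul_pos hD hD', fun r => (p r).comp (Polynomial.C (D' : ℚ) * Polynomial.X) +
    (p' r).comp (Polynomial.C (D : ℚ) * Polynomial.X), q0 + q0', fun r q hq => ?_⟩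
  have h1 := h r (D' * q) (by nlinarith)
  have h2 := h' r (D * q) (by nlinarith)
  rw [← mul_assoc] at h1 h2
  rw [mul_comm D' D] at h2
  simp [h1, h2]

lemma EQP.smul {a : ℕ → ℚ} (c : ℚ) (ha : EQP a) : EQP fun n => c * a n := by
  obtain ⟨D, hD, p, q0, h⟩ := ha
  exact ⟨D, hD, fun r => Polynomial.C c * p r, q0, fun r q hq => by simp [h r q hq]⟩

lemma EQP.sum {ι : Type} (s : Finset ι) {a : ι → ℕ → ℚ} (ha : ∀ i ∈ s, EQP (a i)) :
    EQP fun n => ∑ i ∈ s, a i n := by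
  classical
  induction s using Finset.induction_on with
  | empty => simpa using EQP.const 0
  | insert i s hi ih =>
    simp only [Finset.sum_insert hi]
    exact (ha i (by simp)).add (ih fun j hj => ha j (by simp [hj]))

lemma EQP.congr {a b : ℕ → ℚ} (ha : EQP a) (n0 : ℕ) (h : ∀ n, n0 ≤ n → b n = a n) : EQP b := by
  obtain ⟨D, hD, p, q0, h'⟩ := ha
  exact ⟨D, hD, p, q0 + n0, fun r q hq => by rw [h _ (by nlinarith), h' r q (by omega)]⟩

lemma EQP.shift {a : ℕ → ℚ} (ha : EQP a) (c : ℕ) : EQP fun n => a (n - c) := by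
  obtain ⟨D, hD, p, q0, h⟩ := ha
  refine ⟨D, hD, fun r => (p (r + (D * c - c))).comp (Polynomial.X - Polynomial.C (c : ℚ)), q0 + c,
    fun r q hq => ?_⟩
  have h1 := h (r + (D * c - c)) (q - c) (by omega)
  have h2 : c ≤ D * c := Nat.le_mul_of_pos_left _ hD
  have h3 : r + D * q - c = r + (D * c - c) + D * (q - c) := by
    obtain ⟨t, rfl⟩ : ∃ t, q = t + c := ⟨q - c, by omega⟩
    rw [Nat.add_sub_cancel, mul_add]
    omega
  simp only [h3, h1]
  simp [Nat.cast_sub (show c ≤ q by omega)]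

lemma EQP.up {a : ℕ → ℚ} (ha : EQP a) (c : ℕ) : EQP fun n => a (n + c) := by
  obtain ⟨D, hD, p, q0, h⟩ := ha
  refine ⟨D, hD, fun r => p (r + c), q0, fun r q hq => ?_⟩
  have h1 : r + D * q + c = r + c + D * q := by ring
  simp only [h1, h (r + c) q hq]

lemma antidiff (p : Polynomial ℚ) :
    ∃ P : Polynomial ℚ, ∀ x : ℚ, P.eval (x + 1) - P.eval x = p.eval x := by
  induction p using Polynomial.induction_on' with
  | add p q hp hq =>
    obtain ⟨P, hP⟩ := hp
    obtain ⟨Q, hQ⟩ := hq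
    refine ⟨P + Q, fun x => ?_⟩
    simp only [Polynomial.eval_add, ← hP, ← hQ]
    ring
  | monomial n c =>
    refine ⟨Polynomial.C (c / (n + 1)) * Polynomial.bernoulli (n + 1), fun x => ?_⟩
    have := Polynomial.bernoulli_eval_one_add (n + 1) x
    rw [add_comm x 1]
    simp only [Polynomial.eval_mul, Polynomial.eval_C, this, Polynomial.eval_monomial]
    have hn : (n : ℚ) + 1 ≠ 0 := by positivity
    push_cast
    field_simp
    ring

lemma EQP.diff {a b : ℕ → ℚ} (hb : EQP b) {d : ℕ} (hd : 0 < d)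
    (h : ∀ t, a (t + d) - a t = b t) : EQP a := by
  obtain ⟨D, hD, p, q0, hp⟩ := hb
  have hsum : ∀ n t, a (t + d * n) - a t = ∑ i ∈ Finset.range n, b (t + d * i) := by
    intro n t
    induction n with
    | zero => simp
    | succ n ih =>
      rw [Finset.sum_range_succ, ← ih, ← h (t + d * n)]
      rw [mul_add, mul_one, add_assoc]
      ring
  let g : ℕ → Polynomial ℚ := fun r => ∑ i ∈ Finset.range D,
    (p (r + d * i)).comp (Polynomial.C (d : ℚ) * Polynomial.X)
  have hg : ∀ r q, q0 ≤ q → a (r + d * D * (q + 1)) - a (r + d * D * q) = (g r).eval (q : ℚ) := by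
    intro r q hq
    have := hsum D (r + d * D * q)
    rw [mul_add, mul_one, ← add_assoc, this]
    simp only [g, Polynomial.eval_finsetSum, Polynomial.eval_comp, Polynomial.eval_mul,
      Polynomial.eval_C, Polynomial.eval_X]
    refine Finset.sum_congr rfl fun i _ => ?_
    have h1 := hp (r + d * i) (d * q) (by nlinarith)
    push_cast at h1
    rw [← h1]
    congr 1
    ring
  choose G hG using fun r => antidiff (g r)
  refine ⟨d * D, Nat.mul_pos hd hD, fun r => G r + Polynomial.C (a (r + d * D * q0) - (G r).eval (q0 : ℚ)),
    q0, fun r q hq => ?_⟩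
  induction q, hq using Nat.le_induction with
  | base => simp
  | succ q hq ih =>
    have h1 := hg r q hq
    have h2 := hG r q
    simp only [Polynomial.eval_add, Polynomial.eval_C] at ih ⊢
    push_cast
    linarith

lemma EQP.count {a : ℕ → ℕ} (ha : EQP fun n => (a n : ℚ)) : QuasiPolynomialCount a := by
  obtain ⟨D, hD, p, q0, h⟩ := ha
  have : NeZero D := ⟨hD.ne'⟩
  let P : ZMod D → Polynomial ℚ := fun i => (p i.val).comp
    (Polynomial.C ((D : ℚ)⁻¹) * (Polynomial.X - Polynomial.C (i.val : ℚ)))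
  refine ⟨fun n => (P (n : ZMod D)).eval (n : ℚ), ⟨D, hD, P, fun n => rfl⟩, D * q0, fun n hn => ?_⟩
  have h1 : n % D + D * (n / D) = n := Nat.mod_add_div n D
  have h2 := h (n % D) (n / D) ((Nat.le_div_iff_mul_le hD).2 (by rw [mul_comm]; exact hn))
  rw [h1] at h2
  refine h2.trans ?_
  simp only [P, Int.cast_natCast, ZMod.val_natCast]
  simp only [Polynomial.eval_comp, Polynomial.eval_mul, Polynomial.eval_C, Polynomial.eval_sub,
    Polynomial.eval_X]
  congr 1
  have h3 : ((n % D : ℕ) : ℚ) + D * ((n / D : ℕ) : ℚ) = n := by exact_mod_cast h1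
  have hD' : (D : ℚ) ≠ 0 := by exact_mod_cast hD.ne'
  rw [← h3]
  field_simp
  ring

lemma den_finite {J : Type} [Fintype J] (d : J → ℕ) (hd : ∀ j, 0 < d j) (t : ℕ) :
    Finite {m : J → ℕ // ∑ j, d j * m j = t} := by
  have hb : ∀ (m : {m : J → ℕ // ∑ j, d j * m j = t}) j, m.1 j < t + 1 := by
    intro m j
    have h1 : d j * m.1 j ≤ ∑ j, d j * m.1 j :=
      Finset.single_le_sum (f := fun j => d j * m.1 j) (fun _ _ => Nat.zero_le _) (Finset.mem_univ j)
    rw [m.2] at h1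
    have := hd j
    nlinarith
  refine Finite.of_injective (β := J → Fin (t + 1)) (fun m j => ⟨m.1 j, hb m j⟩) fun m m' h => ?_
  ext j
  simpa using congrFun h j

lemma den_eqp (J : Type) [Finite J] : ∀ [Fintype J] (d : J → ℕ) (_ : ∀ j, 0 < d j),
    EQP fun t => (Nat.card {m : J → ℕ // ∑ j, d j * m j = t} : ℚ) := by
  induction J using Finite.induction_empty_option with
  | of_equiv e ih =>
    rename_i α β
    intro _ d hd
    have := Fintype.ofEquiv β e.symm
    convert ih (d ∘ e) (fun j => hd _) using 3 with t
    refine Nat.card_congr ((Equiv.arrowCongr e.symm (Equiv.refl ℕ)).subtypeEquiv fun m => ?_)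
    rw [← e.sum_comp]
    simp [Equiv.arrowCongr]
  | h_empty =>
    intro _ d hd
    refine (EQP.const 0).congr 1 fun n hn => ?_
    have : IsEmpty {m : PEmpty → ℕ // ∑ j, d j * m j = n} := ⟨fun m => by
      have := m.2
      simp at this
      omega⟩
    rw [Nat.card_of_isEmpty]
    simp
  | h_option ih =>
    rename_i α _
    intro inst d hd
    obtain rfl : inst = instFintypeOption := Subsingleton.elim _ _
    refine EQP.diff ((ih (fun j => d (some j)) fun j => hd _).up (d none)) (hd none) fun t => ?_
    have f1 := den_finite d hd t
    have f2 := den_finite (fun j => d (some j)) (fun j => hd _) (t + d none)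
    rw [sub_eq_iff_eq_add, ← Nat.cast_add, Nat.add_comm (Nat.card _) (Nat.card _), ← Nat.card_sum]
    congr 1
    refine (Nat.card_congr (Equiv.ofBijective (Sum.elim
      (fun m => ⟨fun o => o.elim (m.1 none + 1) (fun j => m.1 (some j)), ?_⟩)
      (fun m => ⟨fun o => o.elim 0 m.1, ?_⟩)) ⟨?_, ?_⟩)).symm
    rotate_left 2
    · have := m.2
      convert congrArg (· + d none) this using 1
      rw [Fintype.sum_option, Fintype.sum_option]
      simp only [Option.elim]
      ring
    · convert m.2 using 1
      rw [Fintype.sum_option]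
      simp
    · rintro (⟨m, hm⟩ | ⟨m, hm⟩) (⟨m', hm'⟩ | ⟨m', hm'⟩) h
      · have h := congrArg Subtype.val h
        simp only [Sum.elim_inl] at h
        congr 2
        funext o
        cases o with
        | none => simpa using congrFun h none
        | some j => simpa using congrFun h (some j)
      · have h := congrFun (congrArg Subtype.val h) none
        simp at h
      · have h := congrFun (congrArg Subtype.val h) none
        simp at h
      · have h := congrArg Subtype.val h
        simp only [Sum.elim_inr] at h
        congr 2
        funext j
        simpa using congrFun h (some j)
    · rintro ⟨m, hm⟩
      by_cases h0 : m none = 0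
      · refine ⟨Sum.inr ⟨fun j => m (some j), ?_⟩, ?_⟩
        · rw [Fintype.sum_option, h0] at hm
          simpa using hm
        · simp only [Sum.elim_inr]
          congr 1
          funext o
          cases o <;> simp [h0]
      · refine ⟨Sum.inl ⟨fun o => o.elim (m none - 1) (fun j => m (some j)), ?_⟩, ?_⟩
        · rw [Fintype.sum_option] at hm ⊢
          obtain ⟨c, hc⟩ := Nat.exists_eq_succ_of_ne_zero h0
          rw [hc] at hm
          simp only [Option.elim, hc, Nat.succ_sub_one]
          rw [Nat.succ_eq_add_one, mul_add] at hm
          omega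
        · simp only [Sum.elim_inl]
          congr 1
          funext o
          cases o
          · simp only [Option.elim]; omega
          · simp

lemma fix_eqp (L : Type) [Fintype L] (σ : Equiv.Perm L) :
    EQP fun t => (Nat.card {m : L → ℕ // (∀ i, m (σ i) = m i) ∧ ∑ i, m i = t} : ℚ) := by
  classical
  let S := Equiv.Perm.SameCycle.setoid σ
  have : Fintype (Quotient S) := Fintype.ofFinite _
  have hd : ∀ c : Quotient S, 0 < Fintype.card {i // Quotient.mk S i = c} := by
    intro c
    obtain ⟨i, rfl⟩ := Quotient.exists_rep c
    exact Fintype.card_pos_iff.2 ⟨⟨i, rfl⟩⟩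
  convert den_eqp (Quotient S) (fun c => Fintype.card {i // Quotient.mk S i = c}) hd using 3 with t
  have hs : ∀ m : Quotient S → ℕ, ∑ i, m (Quotient.mk S i) =
      ∑ c, Fintype.card {i // Quotient.mk S i = c} * m c := by
    intro m
    rw [← Fintype.sum_fiberwise (fun i => Quotient.mk S i)]
    refine Finset.sum_congr rfl fun c _ => ?_
    rw [Finset.sum_congr rfl (g := fun _ => m c) (fun i _ => by rw [i.2])]
    simp
  symm
  refine Nat.card_congr (Equiv.ofBijective (fun m => ⟨fun i => m.1 (Quotient.mk S i), fun i => ?_, ?_⟩) ⟨?_, ?_⟩)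
  · have : Quotient.mk S (σ i) = Quotient.mk S i := Quotient.sound (by
      change Equiv.Perm.SameCycle σ _ _
      simp [Equiv.Perm.SameCycle.refl])
    simp only [this]
  · rw [hs, m.2]
  · intro m m' h
    ext c
    obtain ⟨i, rfl⟩ := Quotient.exists_rep c
    exact congrFun (congrArg Subtype.val h) i
  · rintro ⟨m, hm, hm'⟩
    have hz : ∀ (z : ℤ) i, m ((σ ^ z) i) = m i := by
      intro z i
      induction z with
      | zero => simp
      | succ n ih => rw [add_comm, zpow_add, zpow_one, Equiv.Perm.mul_apply, hm, ih]
      | pred n ih =>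
        rw [← ih, ← hm ((σ ^ (-(n : ℤ) - 1)) i), ← Equiv.Perm.mul_apply, ← zpow_one_add]
        congr 3
        ring
    let m' : Quotient S → ℕ := Quotient.lift m (by
      rintro i j ⟨z, rfl⟩
      exact (hz z i).symm)
    have hm2 : ∀ i, m' (Quotient.mk S i) = m i := fun i => rfl
    refine ⟨⟨m', ?_⟩, ?_⟩
    · rw [← hs]
      simpa only [hm2] using hm'
    · rfl

end Eqp

section Cnt
variable {K : Type} [Field K] {k : ℕ} {F : FI K k} {B N : ℕ}

/-- the combinatorial data -/
def YY (F : FI K k) (N : ℕ) (T L : Type) [Fintype L] (n : ℕ) : Type :=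
  {y : Ideal (RR K (T ⊕ L × Fin (N + 2))) × (L → ℕ) //
    Dd F N (f0 N T L) y.1 ∧ n = Nat.card T + ∑ i, (N + 2 + y.2 i)}

lemma Dd.gg {T L : Type} [Finite T] [Finite L] {z : Ideal (RR K (T ⊕ L × Fin (N + 2)))}
    (h : Dd F N (f0 N T L) z) (ρ : Equiv.Perm T) (σ : Equiv.Perm L) :
    Dd F N (f0 N T L) (pull (gg N ρ σ) z) := by
  refine Dd.relabel σ ?_
  have := h.equiv (_root_.gg N ρ σ)
  convert this using 1
  funext y
  exact (f0_gg ρ σ y).symm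

noncomputable instance YYact (F : FI K k) (N : ℕ) (T L : Type) [Finite T] [Fintype L] (n : ℕ) :
    MulAction (Equiv.Perm T × Equiv.Perm L) (YY F N T L n) where
  smul g y := ⟨(pull (gg N g.1⁻¹ g.2⁻¹) y.1.1, y.1.2 ∘ ⇑(g.2⁻¹)), y.2.1.gg _ _, by
    refine y.2.2.trans ?_
    congr 1
    exact (Equiv.sum_comp g.2⁻¹ (fun i => N + 2 + y.1.2 i)).symm⟩
  one_smul y := by
    refine Subtype.ext (Prod.ext ?_ rfl)
    change pull (gg N _ _) _ = _
    convert pull_id _ using 2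
    funext x
    rcases x with x | x <;> rfl
  mul_smul g h y := by
    refine Subtype.ext (Prod.ext ?_ ?_)
    · change pull (gg N _ _) _ = pull (gg N _ _) (pull (gg N _ _) _)
      rw [pull_pull]
      congr 1
      funext x
      rcases x with x | ⟨x, i⟩ <;> simp [gg]
    · change _ ∘ _ = (_ ∘ _) ∘ _
      rfl

lemma smul_def1 {T L : Type} [Finite T] [Fintype L] {n : ℕ} (g : Equiv.Perm T × Equiv.Perm L)
    (y : YY F N T L n) : (g • y).1 = (pull (gg N g.1⁻¹ g.2⁻¹) y.1.1, y.1.2 ∘ ⇑(g.2⁻¹)) := rfl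

lemma Dd_finite (F : FI K k) (N : ℕ) (T L : Type) [Finite T] [Finite L] :
    Finite {z // Dd F N (f0 N T L) z} := by
  have h : (F.minP (T ⊕ L × Fin (N + 2))).Finite := Ideal.finite_minimalPrimes_of_isNoetherianRing _ _
  exact (h.subset (t := {z | Dd F N (f0 N T L) z}) fun z hz => hz.mem).to_subtype

lemma m_finite (L : Type) [Fintype L] (c n : ℕ) :
    Finite {m : L → ℕ // n = c + ∑ i, (N + 2 + m i)} := by
  have := fun t => den_finite (fun _ : L => 1) (fun _ => one_pos) t
  refine Finite.of_injective (β := {m : L → ℕ // ∑ i, 1 * m i = n - c - Fintype.card L * (N + 2)})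
    (fun m => ⟨m.1, ?_⟩) fun m m' h => ?_
  · have := m.2
    rw [Finset.sum_add_distrib] at this
    simp only [Finset.sum_const, Finset.card_univ, smul_eq_mul] at this
    simp only [one_mul]
    omega
  · exact Subtype.ext (congrArg (fun x => x.1) h)

instance YY_finite (F : FI K k) (N : ℕ) (T L : Type) [Finite T] [Fintype L] (n : ℕ) :
    Finite (YY F N T L n) := by
  have := Dd_finite F N T L
  have := m_finite (N := N) L (Nat.card T) n
  refine Finite.of_injective (β := {z // Dd F N (f0 N T L) z} ×
    {m : L → ℕ // n = Nat.card T + ∑ i, (N + 2 + m i)})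
    (fun y => (⟨y.1.1, y.2.1⟩, ⟨y.1.2, y.2.2⟩)) fun y y' h => ?_
  refine Subtype.ext (Prod.ext ?_ ?_)
  · exact congrArg (fun x => x.1.1) h
  · exact congrArg (fun x => x.2.1) h

lemma fixedBy_card (F : FI K k) (N : ℕ) (T L : Type) [Finite T] [Fintype L] (n : ℕ)
    (g : Equiv.Perm T × Equiv.Perm L) :
    Nat.card (MulAction.fixedBy (YY F N T L n) g) =
      Nat.card {z // Dd F N (f0 N T L) z ∧ pull (gg N g.1⁻¹ g.2⁻¹) z = z} *
      Nat.card {m : L → ℕ // (∀ i, m (g.2⁻¹ i) = m i) ∧ n = Nat.card T + ∑ i, (N + 2 + m i)} := by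
  rw [← Nat.card_prod]
  refine Nat.card_congr
    { toFun := fun y => (⟨y.1.1.1, y.1.2.1, ?_⟩, ⟨y.1.1.2, ?_, y.1.2.2⟩)
      invFun := fun x => ⟨⟨(x.1.1, x.2.1), x.1.2.1, x.2.2.2⟩, ?_⟩
      left_inv := fun y => rfl
      right_inv := fun x => rfl }
  · have := y.2
    rw [MulAction.mem_fixedBy] at this
    have := congrArg (fun x => x.1.1) this
    rw [smul_def1] at this
    exact this
  · intro i
    have := y.2
    rw [MulAction.mem_fixedBy] at this
    have := congrArg (fun x => x.1.2 i) this
    rw [smul_def1] at this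
    exact this
  · refine MulAction.mem_fixedBy.2 ?_
    refine Subtype.ext ?_
    refine Prod.ext x.1.2.2 ?_
    funext i
    exact x.2.2.1 i

lemma fixedBy_eqp (F : FI K k) (N : ℕ) (T L : Type) [Finite T] [Fintype L]
    (g : Equiv.Perm T × Equiv.Perm L) :
    EQP fun n => (Nat.card (MulAction.fixedBy (YY F N T L n) g) : ℚ) := by
  simp only [fixedBy_card, Nat.cast_mul]
  refine EQP.smul _ ?_
  refine ((fix_eqp L g.2⁻¹).shift (Nat.card T + Fintype.card L * (N + 2))).congr
    (Nat.card T + Fintype.card L * (N + 2)) fun n hn => ?_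
  congr 1
  refine Nat.card_congr (Equiv.subtypeEquivRight fun m => and_congr_right fun _ => ?_)
  rw [Finset.sum_add_distrib]
  simp only [Finset.sum_const, Finset.card_univ, smul_eq_mul]
  omega

lemma orb_eqp (F : FI K k) (N : ℕ) (T L : Type) [Finite T] [Fintype L] :
    EQP fun n => (Nat.card (MulAction.orbitRel.Quotient (Equiv.Perm T × Equiv.Perm L)
      (YY F N T L n)) : ℚ) := by
  classical
  have : Fintype (Equiv.Perm T × Equiv.Perm L) := Fintype.ofFinite _
  refine ((EQP.sum Finset.univ (fun g _ => fixedBy_eqp F N T L g)).smul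
    ((Fintype.card (Equiv.Perm T × Equiv.Perm L) : ℚ)⁻¹)).congr 0 fun n _ => ?_
  have i1 : ∀ g : Equiv.Perm T × Equiv.Perm L, Fintype (MulAction.fixedBy (YY F N T L n) g) :=
    fun g => Fintype.ofFinite _
  have i2 : Fintype (MulAction.orbitRel.Quotient (Equiv.Perm T × Equiv.Perm L) (YY F N T L n)) :=
    Fintype.ofFinite _
  have h := MulAction.sum_card_fixedBy_eq_card_orbits_mul_card_group
    (Equiv.Perm T × Equiv.Perm L) (YY F N T L n)
  simp only [Nat.card_eq_fintype_card]
  rw [← Nat.cast_sum, h]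
  have : (Fintype.card (Equiv.Perm T × Equiv.Perm L) : ℚ) ≠ 0 := by
    exact_mod_cast Fintype.card_ne_zero
  push_cast
  field_simp

lemma card_quot {A X : Type} {r : A → A → Prop} (R : A → X → Prop) (h1 : ∀ a, ∃ x, R a x)
    (h2 : ∀ x, ∃ a, R a x) (h3 : ∀ a x a' x', R a x → R a' x' → (r a a' ↔ x = x')) :
    Nat.card (Quot r) = Nat.card X := by
  choose φ hφ using h1
  refine Nat.card_congr (Equiv.ofBijective (Quot.lift φ fun a a' h => (h3 _ _ _ _ (hφ a) (hφ a')).1 h) ⟨?_, ?_⟩)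
  · rintro ⟨a⟩ ⟨a'⟩ h
    exact Quot.sound ((h3 _ _ _ _ (hφ a) (hφ a')).2 h)
  · intro x
    obtain ⟨a, ha⟩ := h2 x
    exact ⟨Quot.mk _ a, (h3 _ _ _ _ (hφ a) ha).1 ((h3 _ _ _ _ ha ha).2 rfl)⟩

abbrev XX (F : FI K k) (B N n : ℕ) : Type :=
  Σ p : Fin (B + 1) × Fin ((N + 2) * B + 1),
    MulAction.orbitRel.Quotient (Equiv.Perm (Fin p.2) × Equiv.Perm (Fin p.1))
      (YY F N (Fin p.2) (Fin p.1) n)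

def RRel (F : FI K k) (B N n : ℕ) (Q : {Q // Q ∈ F.minP (Fin n)}) (x : XX F B N n) : Prop :=
  ∃ y : YY F N (Fin x.1.2) (Fin x.1.1) n, Quotient.mk _ y = x.2 ∧
    ∃ f e, Rpr F N y.1.1 y.1.2 Q.1 f e

lemma count_eq (hk : KEY F B N) (n : ℕ) :
    Nat.card (Quot fun (P Q : {Q // Q ∈ F.minP (Fin n)}) =>
      ∃ π : Equiv.Perm (Fin n), pull π Q.1 = P.1) = Nat.card (XX F B N n) := by
  refine card_quot (RRel F B N n) ?_ ?_ ?_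
  · rintro ⟨Q, hQ⟩
    obtain ⟨ℓ, hℓ, s, hs, z, m, f, e, r⟩ := Rpr.of hk hQ
    have ht := r.total
    rw [Nat.card_fin] at ht
    exact ⟨⟨(⟨ℓ, by omega⟩, ⟨s, by omega⟩), Quotient.mk _ ⟨(z, m), r.ddz hk, ht⟩⟩,
      ⟨(z, m), r.ddz hk, ht⟩, rfl, f, e, r⟩
  · rintro ⟨p, ω⟩
    obtain ⟨y, rfl⟩ := Quotient.exists_rep ω
    obtain ⟨Q, hQ, f, e, r⟩ := Rpr.exists hk (α := Fin n) y.2.1 y.1.2 (by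
      rw [Nat.card_fin]; exact y.2.2)
    exact ⟨⟨Q, hQ⟩, y, rfl, f, e, r⟩
  · rintro ⟨Q, hQ⟩ ⟨p, ω⟩ ⟨Q', hQ'⟩ ⟨p', ω'⟩ h h'
    obtain ⟨y, rfl, f, e, r⟩ : ∃ y : YY F N (Fin p.2) (Fin p.1) n, Quotient.mk _ y = ω ∧
      ∃ f e, Rpr F N y.1.1 y.1.2 Q f e := h
    obtain ⟨y', rfl, f', e', r'⟩ : ∃ y : YY F N (Fin p'.2) (Fin p'.1) n, Quotient.mk _ y = ω' ∧
      ∃ f e, Rpr F N y.1.1 y.1.2 Q' f e := h'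
    constructor
    · rintro ⟨π, hπ⟩
      have r2 := r'.transport π
      simp only at hπ
      rw [hπ] at r2
      obtain ⟨ρ, σ, hm, hz⟩ := r.uniq r2
      have hp : p = p' := by
        refine Prod.ext (Fin.ext ?_) (Fin.ext ?_)
        · simpa using Fintype.card_congr σ
        · simpa using Fintype.card_congr ρ
      subst hp
      congr 1
      refine Quotient.sound ⟨(ρ⁻¹, σ⁻¹), Subtype.ext ?_⟩
      change ((ρ⁻¹, σ⁻¹) • y').1 = y.1
      rw [smul_def1]
      refine Prod.ext ?_ ?_
      · simpa using hz
      · funext i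
        simpa using (hm i).symm
    · intro h
      have hp : p = p' := congrArg (fun x => x.1) h
      subst hp
      have h2 := eq_of_heq (Sigma.mk.inj h).2
      obtain ⟨g, hg⟩ := Quotient.exact h2
      have hg := congrArg Subtype.val hg
      change (g • y').1 = y.1 at hg
      rw [smul_def1] at hg
      exact Rpr.iso hk r r' g.1⁻¹ g.2⁻¹ (fun i => (congrFun (congrArg Prod.snd hg) i).symm)
        (congrArg Prod.fst hg)

lemma count_eqp (F : FI K k) :
    EQP fun n => (Nat.card (Quot fun (P Q : {Q // Q ∈ F.minP (Fin n)}) =>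
      ∃ π : Equiv.Perm (Fin n), pull π Q.1 = P.1) : ℚ) := by
  obtain ⟨B, N, hk⟩ := key_all F
  simp only [count_eq hk, Nat.card_sigma, Nat.cast_sum]
  exact EQP.sum _ fun p _ => orb_eqp F N (Fin p.2) (Fin p.1)

end Cnt

section Fin6
variable {K : Type} [Field K] {k : ℕ}

lemma J_castLE (J : ∀ n : ℕ, Ideal (RR K (Fin n)))
    (hincl : ∀ n : ℕ, Ideal.map (ren (Fin.castSucc : Fin n → Fin (n + 1))) (J n) ≤ J (n + 1))
    {m n : ℕ} (h : m ≤ n) : J m ≤ pull (Fin.castLE h) (J n) := by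
  induction n, h using Nat.le_induction with
  | base =>
    have : Fin.castLE (le_refl m) = id := by funext i; rfl
    rw [this, pull_id]
  | succ n hmn ih =>
    have h1 : J n ≤ pull Fin.castSucc (J (n + 1)) := Ideal.map_le_iff_le_comap.1 (hincl n)
    have h2 := ih.trans (pull_mono _ h1)
    rw [pull_pull] at h2
    exact h2

lemma J_inj (J : ∀ n : ℕ, Ideal (RR K (Fin n)))
    (hsym : ∀ (n : ℕ) (π : Equiv.Perm (Fin n)), Ideal.map (ren π) (J n) = J n)
    (hincl : ∀ n : ℕ, Ideal.map (ren (Fin.castSucc : Fin n → Fin (n + 1))) (J n) ≤ J (n + 1))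
    {m n : ℕ} (f : Fin m → Fin n) (hf : Function.Injective f) : J m ≤ pull f (J n) := by
  have h : m ≤ n := by simpa using Fintype.card_le_of_injective f hf
  obtain ⟨E, -, hE⟩ := ext_equiv (fun _ : Fin n => ()) (fun _ : Fin n => ()) (Fin.castLE h) f
    (Fin.castLE_injective h) hf (fun _ => rfl) (fun _ => rfl)
  have h1 : J n ≤ pull E (J n) := Ideal.map_le_iff_le_comap.1 (hsym n E).le
  have h2 := (J_castLE J hincl h).trans (pull_mono _ h1)
  rw [pull_pull] at h2
  have h3 : E ∘ Fin.castLE h = f := funext hE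
  rwa [h3] at h2

noncomputable def JF (J : ∀ n : ℕ, Ideal (RR K (Fin n)))
    (hminors : ∀ (n : ℕ) (r c : Fin (k + 1) → Fin n), minor r c ∈ J n) : FI K k where
  I := fun α => (⨆ (m : ℕ) (f : Fin m ↪ α), Ideal.map (ren f) (J m)).radical
  rad := fun α => Ideal.radical_isRadical _
  minors := fun α ρ γ => by
    classical
    refine Ideal.le_radical ?_
    have : Fintype ↥(Set.range ρ ∪ Set.range γ) := Fintype.ofFinite _
    let ε := Fintype.equivFin ↥(Set.range ρ ∪ Set.range γ)
    let f : Fin (Fintype.card ↥(Set.range ρ ∪ Set.range γ)) ↪ α :=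
      ε.symm.toEmbedding.trans (Function.Embedding.subtype _)
    have h1 : (minor ρ γ : RR K α) = ren f (minor (fun a => ε ⟨ρ a, Or.inl ⟨a, rfl⟩⟩)
        (fun a => ε ⟨γ a, Or.inr ⟨a, rfl⟩⟩)) := by
      rw [ren_minor]
      congr 1
      · funext a; simp [f]
      · funext a; simp [f]
    rw [h1]
    exact (le_iSup₂_of_le (f := fun (m : ℕ) (f : Fin m ↪ α) => Ideal.map (ren f) (J m)) _ f le_rfl)
      (Ideal.mem_map_of_mem _ (hminors _ _ _))
  func := fun {α β} e he => by
    unfold pull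
    rw [Ideal.comap_radical]
    refine Ideal.radical_mono (iSup₂_le fun m f => ?_)
    refine Ideal.map_le_iff_le_comap.2 ?_
    change J m ≤ pull f (pull e _)
    rw [pull_pull]
    refine Ideal.map_le_iff_le_comap.1 ?_
    exact le_iSup₂_of_le (f := fun (m : ℕ) (f : Fin m ↪ β) => Ideal.map (ren f) (J m)) m
      (f.trans ⟨e, he⟩) le_rfl

lemma JF_minP (J : ∀ n : ℕ, Ideal (RR K (Fin n)))
    (hminors : ∀ (n : ℕ) (r c : Fin (k + 1) → Fin n), minor r c ∈ J n)
    (hsym : ∀ (n : ℕ) (π : Equiv.Perm (Fin n)), Ideal.map (ren π) (J n) = J n)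
    (hincl : ∀ n : ℕ, Ideal.map (ren (Fin.castSucc : Fin n → Fin (n + 1))) (J n) ≤ J (n + 1)) (n : ℕ) :
    (JF J hminors).minP (Fin n) = (J n).minimalPrimes := by
  have : (JF J hminors).I (Fin n) = (J n).radical := by
    change Ideal.radical _ = _
    congr 1
    refine le_antisymm (iSup₂_le fun m f => Ideal.map_le_iff_le_comap.2 (J_inj J hsym hincl f f.injective)) ?_
    refine le_iSup₂_of_le (f := fun (m : ℕ) (f : Fin m ↪ Fin n) => Ideal.map (ren f) (J m)) n
      (Equiv.refl _).toEmbedding ?_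
    exact (hsym n (Equiv.refl _)).ge
  unfold FI.minP
  rw [this, Ideal.radical_minimalPrimes]

lemma map_perm {n : ℕ} (π : Equiv.Perm (Fin n)) (P Q : Ideal (RR K (Fin n))) :
    Ideal.map (ren π) P = Q ↔ pull π Q = P := by
  have hi : Function.Injective (ren (K := K) π) := ren_injective π.injective
  have hs : Function.Surjective (ren (K := K) π) := fun f => ⟨ren π.symm f, by
    rw [ren_ren]; simp⟩
  constructor
  · rintro rfl
    exact Ideal.comap_map_of_bijective _ ⟨hi, hs⟩
  · rintro rfl
    exact Ideal.map_comap_of_surjective _ hs _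

end Fin6

theorem orbit_count_components_subvarieties_of_bounded_rank
    (K : Type) [Field K] (k : ℕ)
    (J : ∀ n : ℕ, Ideal (MvPolynomial (Fin n × Fin n) K))
    (hminors : ∀ (n : ℕ) (r c : Fin (k + 1) → Fin n),
      (Matrix.det (Matrix.of fun a b : Fin (k + 1) =>
        (X (r a, c b) : MvPolynomial (Fin n × Fin n) K))) ∈ J n)
    (hsym : ∀ (n : ℕ) (π : Equiv.Perm (Fin n)),
      Ideal.map (rename (Prod.map (⇑π) (⇑π))) (J n) = J n)
    (hincl : ∀ n : ℕ,
      Ideal.map (rename (Prod.map (Fin.castSucc : Fin n → Fin (n + 1))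
        (Fin.castSucc : Fin n → Fin (n + 1)))) (J n) ≤ J (n + 1)) :
    QuasiPolynomialCount (fun n =>
      Nat.card (Quot (fun (P Q : {P : Ideal (MvPolynomial (Fin n × Fin n) K) //
          P ∈ (J n).minimalPrimes}) =>
        ∃ π : Equiv.Perm (Fin n),
          Ideal.map (rename (Prod.map (⇑π) (⇑π))) P.1 = Q.1))) := by
  refine EQP.count ?_
  have h := count_eqp (JF (k := k) J hminors)
  refine h.congr 0 fun n _ => ?_
  rw [JF_minP J hminors hsym hincl n]
  congr 2
  refine congrArg Quot ?_
  funext P Q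
  exact propext (exists_congr fun π => map_perm π P.1 Q.1)
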